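/- arXiv:2010.08994 — 10 statements merged into one kernel-verified Lean document; each statement's English description precedes it below -/
import Mathlib

section
/- There is an absolute constant C > 0 such that the following holds. Let S ⊂ ℝ be a finite set with |S| = s and let f : {0,1}^n → S be a function with sparsity spar(f) = r ≥ 2. Then for every z ∈ {0,1}^n, the family W(f,z) = {w ⊆ [n]∖z : f(z ∨ w) ≠ f(z)} has a hitting set of size at most C·s⁴·(log₂ r)^5; that is, HSC(f) = O(s⁴·(log r)^5). -/
/-- The coefficient of the monomial `s` in the unique multilinear polynomial computing
`f : {0,1}^n → ℝ` (subsets of `Fin n` identified with points of the cube),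
given by Möbius inversion. -/
noncomputable def coeff {n : ℕ} (f : Finset (Fin n) → ℝ) (s : Finset (Fin n)) : ℝ :=
  ∑ t ∈ s.powerset, (-1 : ℝ) ^ (s.card - t.card) * f t

/-- The sparsity of `f`: the number of nonzero coefficients. -/
noncomputable def sparsity {n : ℕ} (f : Finset (Fin n) → ℝ) : ℕ :=
  {s : Finset (Fin n) | coeff f s ≠ 0}.ncard

/-- The set system of non-constant monomials of `f`. -/
def mon {n : ℕ} (f : Finset (Fin n) → ℝ) : Set (Finset (Fin n)) :=
  {s | coeff f s ≠ 0 ∧ s ≠ ∅}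

/-- `W f z`: the family of sets `w ⊆ [n] ∖ z` such that `f (z ∨ w) ≠ f z`. -/
def W {n : ℕ} (f : Finset (Fin n) → ℝ) (z : Finset (Fin n)) : Set (Finset (Fin n)) :=
  {w | w ⊆ zᶜ ∧ f (z ∪ w) ≠ f z}

namespace HS
open Finset

lemma key {α : Type*} [DecidableEq α] (t y : Finset α) (h : t ⊆ y) :
    ∑ T ∈ Finset.Icc t y, (-1 : ℝ) ^ (T.card - t.card) = if t = y then 1 else 0 := by
  rw [Finset.Icc_eq_image_powerset h, Finset.sum_image]
  · have : ∀ U ∈ (y \ t).powerset, (-1 : ℝ) ^ ((t ∪ U).card - t.card) = (((-1 : ℤ) ^ U.card : ℤ) : ℝ) := by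
      intro U hU
      rw [Finset.mem_powerset] at hU
      have hd : Disjoint t U := by
        rw [Finset.disjoint_left]; intro a ha hb
        exact (Finset.mem_sdiff.mp (hU hb)).2 ha
      rw [Finset.card_union_of_disjoint hd]
      simp
    rw [Finset.sum_congr rfl this, ← Int.cast_sum, Finset.sum_powerset_neg_one_pow_card]
    have : y \ t = ∅ ↔ t = y := by
      rw [Finset.sdiff_eq_empty_iff_subset]
      exact ⟨fun h' => Finset.Subset.antisymm h h', fun h' => h' ▸ Finset.Subset.refl _⟩
    by_cases hh : t = y
    · simp [hh]
    · simp [hh, this]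
  · intro U hU V hV hUV
    simp only [Finset.coe_powerset, Set.mem_preimage, Set.mem_powerset_iff, Finset.coe_subset] at hU hV
    ext a
    have := congrArg (fun s => a ∈ s) hUV
    simp only [Finset.mem_union, eq_iff_iff] at this
    constructor
    · intro ha
      have h1 := (Finset.mem_sdiff.mp (hU ha)).2
      tauto
    · intro ha
      have h1 := (Finset.mem_sdiff.mp (hV ha)).2
      tauto

lemma key2 {α : Type*} [DecidableEq α] (t y : Finset α) (h : t ⊆ y) :
    ∑ T ∈ Finset.Icc t y, (-1 : ℝ) ^ (y.card - T.card) = if t = y then 1 else 0 := by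
  have : ∀ T ∈ Finset.Icc t y, (-1 : ℝ) ^ (y.card - T.card) =
      (-1 : ℝ) ^ (y.card - t.card) * (-1 : ℝ) ^ (T.card - t.card) := by
    intro T hT
    rw [Finset.mem_Icc] at hT
    have h1 := Finset.card_le_card hT.1
    have h2 := Finset.card_le_card hT.2
    have : y.card - t.card = (y.card - T.card) + (T.card - t.card) := by omega
    rw [this, pow_add, mul_assoc, ← mul_pow]; simp
  rw [Finset.sum_congr rfl this, ← Finset.mul_sum, key t y h]
  by_cases hh : t = y <;> simp [hh]

variable {n : ℕ}

lemma inversion (f : Finset (Fin n) → ℝ) (y : Finset (Fin n)) :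
    f y = ∑ T ∈ y.powerset, coeff f T := by
  unfold coeff
  rw [Finset.sum_comm' (t' := y.powerset) (s' := fun t => Finset.Icc t y)]
  · have : ∀ t ∈ y.powerset, ∑ T ∈ Finset.Icc t y, (-1 : ℝ) ^ (T.card - t.card) * f t
        = (if t = y then 1 else 0) * f t := by
      intro t ht
      rw [← Finset.sum_mul, key t y (Finset.mem_powerset.mp ht)]
    rw [Finset.sum_congr rfl this]
    simp
  · intro a b
    simp only [Finset.mem_powerset, Finset.mem_Icc]
    constructor
    · rintro ⟨h1, h2⟩; exact ⟨⟨h2, h1⟩, h2.trans h1⟩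
    · rintro ⟨⟨h2, h1⟩, _⟩; exact ⟨h1, h2⟩

lemma coeff_rep {α : Type*} (F : Finset α) (c : α → ℝ) (φ : α → Finset (Fin n))
    (h : Finset (Fin n) → ℝ) (hh : ∀ y, h y = ∑ a ∈ F, if φ a ⊆ y then c a else 0)
    (S : Finset (Fin n)) : coeff h S = ∑ a ∈ F, if φ a = S then c a else 0 := by
  unfold coeff
  simp_rw [hh, Finset.mul_sum]
  rw [Finset.sum_comm]
  refine Finset.sum_congr rfl fun a _ => ?_
  by_cases haS : φ a ⊆ S
  · have h2 := key2 (φ a) S haS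
    have : ∑ x ∈ S.powerset, (-1 : ℝ) ^ (S.card - x.card) * (if φ a ⊆ x then c a else 0)
      = ∑ x ∈ Finset.Icc (φ a) S, (-1 : ℝ) ^ (S.card - x.card) * c a := by
      have : Finset.Icc (φ a) S = S.powerset.filter (fun x => φ a ⊆ x) := by
        ext x; simp [and_comm]
      rw [this, Finset.sum_filter]
      refine Finset.sum_congr rfl fun x _ => ?_
      split_ifs <;> simp
    rw [this, ← Finset.sum_mul, h2]
    split_ifs <;> simp
  · have hne : φ a ≠ S := fun h => haS (h ▸ Finset.Subset.refl _)
    rw [if_neg hne]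
    refine Finset.sum_eq_zero fun x hx => ?_
    rw [if_neg, mul_zero]
    intro h; exact haS (h.trans (Finset.mem_powerset.mp hx))

noncomputable def supp (f : Finset (Fin n) → ℝ) : Finset (Finset (Fin n)) := by
  classical exact Finset.univ.filter (fun s => coeff f s ≠ 0)

lemma mem_supp (f : Finset (Fin n) → ℝ) (s) : s ∈ supp f ↔ coeff f s ≠ 0 := by
  simp [supp]

lemma card_supp (f : Finset (Fin n) → ℝ) : (supp f).card = sparsity f := by
  unfold sparsity
  rw [← Set.ncard_coe_finset]
  congr 1
  ext s; simp [mem_supp]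

lemma rep (f : Finset (Fin n) → ℝ) (y : Finset (Fin n)) :
    f y = ∑ T ∈ supp f, if T ⊆ y then coeff f T else 0 := by
  rw [inversion f y]
  classical
  rw [← Finset.sum_filter]
  symm
  apply Finset.sum_subset_zero_on_sdiff
  · intro T hT; simp at hT; simpa using hT.2
  · intro T hT
    simp only [Finset.mem_sdiff, Finset.mem_powerset, Finset.mem_filter, mem_supp] at hT
    by_contra h; exact hT.2 ⟨h, hT.1⟩
  · intros; rfl

lemma supp_rep {α : Type*} (F : Finset α) (c : α → ℝ) (φ : α → Finset (Fin n))
    (h : Finset (Fin n) → ℝ) (hh : ∀ y, h y = ∑ a ∈ F, if φ a ⊆ y then c a else 0) :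
    (supp h).card ≤ F.card := by
  classical
  refine (Finset.card_le_card (t := F.image φ) ?_).trans Finset.card_image_le
  intro S hS
  rw [mem_supp, coeff_rep F c φ h hh] at hS
  obtain ⟨a, ha, h2⟩ := Finset.exists_ne_zero_of_sum_ne_zero hS
  rw [Finset.mem_image]
  refine ⟨a, ha, ?_⟩
  by_contra h; simp [h] at h2

lemma supp_subst {m : ℕ} (f : Finset (Fin n) → ℝ) (z : Finset (Fin n)) (b : Fin m → Finset (Fin n))
    (hb : ∀ j k, j ≠ k → Disjoint (b j) (b k)) :
    (supp (fun y : Finset (Fin m) => f (z ∪ y.biUnion b))).card ≤ (supp f).card := by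
  classical
  refine supp_rep (supp f) (fun T => if T ⊆ z ∪ Finset.univ.biUnion b then coeff f T else 0)
    (fun T => Finset.univ.filter (fun k => ((b k ∩ T) \ z).Nonempty)) _ ?_
  intro y
  rw [rep f]
  refine Finset.sum_congr rfl fun T _ => ?_
  by_cases h : T ⊆ z ∪ y.biUnion b
  · have h1 : T ⊆ z ∪ Finset.univ.biUnion b := by
      refine h.trans (Finset.union_subset_union_right ?_)
      exact Finset.biUnion_subset_biUnion_of_subset_left _ (Finset.subset_univ _)
    have h2 : Finset.univ.filter (fun k => ((b k ∩ T) \ z).Nonempty) ⊆ y := by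
      intro k hk
      obtain ⟨i, hi⟩ := (Finset.mem_filter.mp hk).2
      simp only [Finset.mem_sdiff, Finset.mem_inter] at hi
      have := h hi.1.2
      simp only [Finset.mem_union, Finset.mem_biUnion] at this
      rcases this with h3 | ⟨j, hj, hij⟩
      · exact absurd h3 hi.2
      · by_cases hjk : j = k
        · exact hjk ▸ hj
        · exact absurd hi.1.1 (Finset.disjoint_left.mp (hb j k hjk) hij)
    simp [h, h1, h2]
  · rw [if_neg h]
    symm
    by_cases h2 : Finset.univ.filter (fun k => ((b k ∩ T) \ z).Nonempty) ⊆ y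
    · rw [if_pos h2, if_neg]
      intro h1
      apply h
      intro i hi
      have := h1 hi
      simp only [Finset.mem_union, Finset.mem_biUnion, Finset.mem_univ, true_and] at this ⊢
      by_cases hiz : i ∈ z
      · exact Or.inl hiz
      · rcases this with h3 | ⟨j, hj⟩
        · exact Or.inl h3
        · right
          refine ⟨j, h2 ?_, hj⟩
          simp only [Finset.mem_filter, Finset.mem_univ, true_and]
          exact ⟨i, by simp [hi, hiz, hj]⟩
    · rw [if_neg h2]

lemma supp_sub_const (f : Finset (Fin n) → ℝ) (v a : ℝ) :
    (supp (fun y => (f y - v) * a)).card ≤ (supp f).card + 1 := by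
  classical
  have := supp_rep (Option.some '' (supp f : Set _)  ∪ {none}).toFinset
    (fun o : Option (Finset (Fin n)) => match o with
      | none => - v * a
      | some T => coeff f T * a)
    (fun o => match o with
      | none => ∅
      | some T => T) (fun y => (f y - v) * a) ?_
  · refine this.trans ?_
    rw [Set.toFinset_union]
    refine (Finset.card_union_le _ _).trans ?_
    simp
    rw [Finset.card_image_of_injective _ (Option.some_injective _)]
  · intro y
    rw [rep f y, Set.toFinset_union, Finset.sum_union]
    · simp
      rw [sub_mul, Finset.sum_mul, sub_eq_add_neg]
      congr 1
      refine Finset.sum_congr rfl fun T _ => ?_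
      split_ifs <;> simp
    · simp

lemma supp_mul (f g : Finset (Fin n) → ℝ) :
    (supp (fun y => f y * g y)).card ≤ (supp f).card * (supp g).card := by
  classical
  rw [← Finset.card_product]
  refine supp_rep (supp f ×ˢ supp g) (fun p => coeff f p.1 * coeff g p.2) (fun p => p.1 ∪ p.2) _ ?_
  intro y
  rw [rep f y, rep g y, Finset.sum_product, Finset.sum_mul_sum]
  refine Finset.sum_congr rfl fun T _ => Finset.sum_congr rfl fun U _ => ?_
  simp only [Finset.union_subset_iff]
  split_ifs <;> simp_all

lemma supp_one : (supp (fun _ : Finset (Fin n) => (1:ℝ))).card ≤ 1 :=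
  supp_rep (Finset.univ : Finset Unit) (fun _ => 1) (fun _ => ∅) _ (by simp)

lemma supp_prod {ι : Type*} (s : Finset ι) (h : ι → Finset (Fin n) → ℝ) (R : ℕ)
    (hR : ∀ i ∈ s, (supp (h i)).card ≤ R) :
    (supp (fun y => ∏ i ∈ s, h i y)).card ≤ R ^ s.card := by
  classical
  induction s using Finset.induction_on with
  | empty => simpa using supp_one
  | insert a s ha ih =>
    simp_rw [Finset.prod_insert ha]
    refine (supp_mul _ _).trans ?_
    rw [Finset.card_insert_of_notMem ha, pow_succ']
    exact Nat.mul_le_mul (hR a (Finset.mem_insert_self _ _))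
      (ih fun i hi => hR i (Finset.mem_insert_of_mem hi))

/-- Boolean indicator of `h ≠ h ∅` has small sparsity. -/
lemma supp_indicator (S : Finset ℝ) (h : Finset (Fin n) → ℝ) (hS : ∀ y, h y ∈ S) :
    (supp (fun y => if h y = h ∅ then (0:ℝ) else 1)).card ≤ ((supp h).card + 1) ^ S.card + 1 := by
  classical
  have e : (fun y => if h y = h ∅ then (0:ℝ) else 1) =
      fun y => ((∏ v ∈ S.erase (h ∅), (h y - v) * (h ∅ - v)⁻¹) - 1) * (-1) := by
    funext y
    split_ifs with hy
    · rw [hy, Finset.prod_eq_one]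
      · simp
      · intro v hv
        apply mul_inv_cancel₀
        rw [sub_ne_zero]; exact (Finset.ne_of_mem_erase hv).symm
    · rw [Finset.prod_eq_zero (i := h y)]
      · simp
      · exact Finset.mem_erase.mpr ⟨hy, hS y⟩
      · simp
  rw [e]
  refine (supp_sub_const _ 1 (-1)).trans ?_
  gcongr
  refine (supp_prod (S.erase (h ∅)) (fun v y => (h y - v) * (h ∅ - v)⁻¹) _
    (fun v _ => supp_sub_const h v _)).trans ?_
  exact Nat.pow_le_pow_right (by omega) (Finset.card_le_card (Finset.erase_subset _ _))

end HS

namespace HS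
open Finset

lemma Q_low (i n : ℕ) (h : n < i) :
    ∏ k ∈ range n, (if k + 1 = i then (1:ℝ) else ((k:ℝ)+1)^2 / |(i:ℝ)^2 - ((k:ℝ)+1)^2|)
      = (n.factorial:ℝ)^2 * ((i-n-1).factorial : ℝ) * i / ((i+n).factorial : ℝ) := by
  induction n with
  | zero =>
    obtain ⟨e, rfl⟩ : ∃ e, i = e + 1 := ⟨i-1, by omega⟩
    simp [Nat.factorial_succ]
    field_simp
  | succ n ih =>
    rw [prod_range_succ, ih (by omega), if_neg (by omega)]
    obtain ⟨e, rfl⟩ : ∃ e, i = n + 1 + e + 1 := ⟨i-n-2, by omega⟩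
    have e1 : n + 1 + e + 1 - n - 1 = e + 1 := by omega
    have e2 : n + 1 + e + 1 - (n + 1) - 1 = e := by omega
    have e3 : n + 1 + e + 1 + (n + 1) = (n + 1 + e + 1 + n) + 1 := by omega
    rw [e1, e2, e3, Nat.factorial_succ e, Nat.factorial_succ n, Nat.factorial_succ (n + 1 + e + 1 + n)]
    have : |((n + 1 + e + 1 : ℕ):ℝ)^2 - ((n:ℝ)+1)^2| = ((e:ℝ)+1) * (2*n + e + 3) := by
      rw [abs_of_nonneg]
      · push_cast; ring
      · push_cast; ring_nf; positivity
    rw [this]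
    push_cast
    have h1 : ((n + 1 + e + 1 + n).factorial : ℝ) ≠ 0 := by positivity
    field_simp
    ring

lemma Q_high (i D : ℕ) (h0 : 1 ≤ i) (h : i ≤ D) :
    ∏ k ∈ range D, (if k + 1 = i then (1:ℝ) else ((k:ℝ)+1)^2 / |(i:ℝ)^2 - ((k:ℝ)+1)^2|)
      = 2 * (D.factorial:ℝ)^2 / (((D-i).factorial : ℝ) * ((D+i).factorial : ℝ)) := by
  induction D, h using Nat.le_induction with
  | base =>
    obtain ⟨e, rfl⟩ : ∃ e, i = e + 1 := ⟨i-1, by omega⟩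
    rw [prod_range_succ, Q_low _ _ (by omega), if_pos rfl]
    have e3 : e + 1 + (e + 1) = (e + 1 + e) + 1 := by omega
    rw [e3, Nat.factorial_succ (e+1+e), Nat.factorial_succ e]
    simp
    have h1 : ((e + 1 + e).factorial : ℝ) ≠ 0 := by positivity
    field_simp
    ring
  | succ D hD ih =>
    rw [prod_range_succ, ih, if_neg (by omega)]
    obtain ⟨e, rfl⟩ : ∃ e, D = i + e := ⟨D-i, by omega⟩
    have e1 : i + e - i = e := by omega
    have e2 : i + e + 1 - i = e + 1 := by omega
    have e3 : i + e + 1 + i = (i + e + i) + 1 := by omega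
    rw [e1, e2, e3, Nat.factorial_succ e, Nat.factorial_succ (i+e), Nat.factorial_succ (i + e + i)]
    have : |(i:ℝ)^2 - (((i + e : ℕ):ℝ)+1)^2| = ((e:ℝ)+1) * (2*i + e + 1) := by
      rw [abs_of_nonpos]
      · push_cast; ring
      · push_cast
        have : 0 ≤ 2 * (i:ℝ) * (e+1) + (e+1)^2 := by positivity
        nlinarith
    rw [this]
    push_cast
    have h1 : ((i + e + i).factorial : ℝ) ≠ 0 := by positivity
    have h2 : (2*(i:ℝ) + e + 1) ≠ 0 := by positivity
    have h3 : ((i:ℝ) + e + i + 1) ≠ 0 := by positivity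
    field_simp
    ring

lemma fact_le (D i : ℕ) (h : i ≤ D) :
    D.factorial ^ 2 ≤ (D-i).factorial * (D+i).factorial := by
  induction i with
  | zero => simp [sq]
  | succ i ih =>
    refine (ih (by omega)).trans ?_
    obtain ⟨e, rfl⟩ : ∃ e, D = i + 1 + e := ⟨D-i-1, by omega⟩
    have e1 : i + 1 + e - i = e + 1 := by omega
    have e2 : i + 1 + e - (i + 1) = e := by omega
    rw [e1, e2, ← add_assoc, Nat.factorial_succ e, Nat.factorial_succ (i + 1 + e + i)]
    have : (e + 1) * e.factorial * (i+1+e+i).factorial ≤ (i+1+e+i+1) * e.factorial * (i+1+e+i).factorial := by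
      gcongr
      omega
    linarith

lemma Q_le (i D : ℕ) (h0 : 1 ≤ i) (h : i ≤ D) :
    ∏ k ∈ range D, (if k + 1 = i then (1:ℝ) else ((k:ℝ)+1)^2 / |(i:ℝ)^2 - ((k:ℝ)+1)^2|) ≤ 2 := by
  rw [Q_high i D h0 h, div_le_iff₀ (by positivity)]
  have := fact_le D i h
  have h2 : ((D.factorial:ℝ))^2 ≤ (((D-i).factorial : ℝ) * ((D+i).factorial : ℝ)) := by exact_mod_cast this
  linarith

lemma sum_inv (D : ℕ) : ∑ k ∈ range D, 1 / ((k:ℝ)+1)^2 ≤ 2 - 2/((D:ℝ)+1) := by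
  induction D with
  | zero => simp
  | succ D ih =>
    rw [sum_range_succ]
    have : 1 / ((D:ℝ)+1)^2 ≤ 2/((D:ℝ)+1) - 2/((D:ℝ)+1+1) := by
      rw [div_sub_div _ _ (by positivity) (by positivity), div_le_div_iff₀ (by positivity) (by positivity)]
      have : (0:ℝ) ≤ D := by positivity
      nlinarith [mul_nonneg this this]
    push_cast
    linarith

open Polynomial in
lemma lag (D : ℕ) (P : ℝ[X]) (hP : P.natDegree ≤ D) (h0 : P.eval 0 = 0) (a B : ℝ) (ha : 2 ≤ a)
    (hB0 : 0 ≤ B)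
    (hB : ∀ j : ℕ, 1 ≤ j → j ≤ D → |P.eval (a * (j:ℝ)^2)| ≤ B) : |P.eval 1| ≤ 4 * B / a := by
  classical
  set v : ℕ → ℝ := fun j => a * (j:ℝ)^2 with hv
  have hinj : Set.InjOn v (range (D+1) : Finset ℕ) := by
    intro x _ y _ hxy
    simp only [hv] at hxy
    have h1 : (x:ℝ)^2 = (y:ℝ)^2 := mul_left_cancel₀ (by linarith) hxy
    have h2 : (x:ℝ) = y := by
      rwa [sq_eq_sq₀ (by positivity) (by positivity)] at h1
    exact_mod_cast h2
  have hdeg : P.degree < ((range (D+1)).card : ℕ) := by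
    rw [card_range]
    refine lt_of_le_of_lt degree_le_natDegree ?_
    exact_mod_cast Nat.lt_succ_of_le hP
  have hI := Lagrange.eq_interpolate hinj hdeg
  have hE : P.eval 1 = ∑ i ∈ range (D+1), P.eval (v i) * ∏ k ∈ (range (D+1)).erase i, ((v i - v k)⁻¹ * (1 - v k)) := by
    conv_lhs => rw [hI]
    rw [Lagrange.interpolate_apply, eval_finsetSum]
    refine sum_congr rfl fun i _ => ?_
    rw [eval_mul, eval_C, Lagrange.basis, eval_prod]
    simp [Lagrange.basisDivisor]
  rw [hE, sum_range_succ']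
  have hz : P.eval (v 0) = 0 := by simp [hv, h0]
  rw [hz, zero_mul, add_zero]
  refine (abs_sum_le_sum_abs _ _).trans ?_
  have hterm : ∀ i ∈ range D, |P.eval (v (i+1)) * ∏ k ∈ (range (D+1)).erase (i+1), ((v (i+1) - v k)⁻¹ * (1 - v k))|
      ≤ B * (2 / a * (1 / ((i:ℝ)+1)^2)) := by
    intro i hi
    rw [mem_range] at hi
    rw [abs_mul]
    refine mul_le_mul (hB (i+1) (by omega) (by omega)) ?_ (abs_nonneg _) hB0
    rw [abs_prod]
    have e1 : ∏ k ∈ (range (D+1)).erase (i+1), |(v (i+1) - v k)⁻¹ * (1 - v k)|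
      = ∏ k ∈ range (D+1), (if k = i+1 then 1 else |(v (i+1) - v k)⁻¹ * (1 - v k)|) := by
      rw [← mul_prod_erase (range (D+1)) _ (show i+1 ∈ range (D+1) by rw [mem_range]; omega), if_pos rfl, one_mul]
      refine prod_congr rfl fun k hk => ?_
      rw [if_neg (ne_of_mem_erase hk)]
    rw [e1, prod_range_succ', if_neg (by omega)]
    have e2 : |(v (i+1) - v 0)⁻¹ * (1 - v 0)| = 1/a * (1 / ((i:ℝ)+1)^2) := by
      simp only [hv]
      push_cast
      rw [show (1 - a * (0:ℝ)^2) = 1 by ring, mul_one, show (a * ((i:ℝ)+1)^2 - a * 0^2) = a * ((i:ℝ)+1)^2 by ring,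
        abs_of_nonneg (by positivity)]
      field_simp
    rw [e2]
    have e3 : ∏ k ∈ range D, (if k + 1 = i+1 then 1 else |(v (i+1) - v (k+1))⁻¹ * (1 - v (k+1))|)
       ≤ 2 := by
      refine le_trans (prod_le_prod ?_ ?_) (Q_le (i+1) D (by omega) (by omega))
      · intro k _; split_ifs <;> positivity
      · intro k _
        split_ifs with hk
        · exact le_refl _
        · simp only [hv]
          push_cast
          rw [← mul_sub, mul_inv, abs_mul, abs_mul, abs_inv, abs_inv, abs_of_pos (show 0 < a by linarith)]
          have : |1 - a * ((k:ℝ)+1)^2| ≤ a * ((k:ℝ)+1)^2 := by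
            have : (1:ℝ) ≤ ((k:ℝ)+1)^2 := by
              have : (0:ℝ) ≤ k := by positivity
              nlinarith
            rw [abs_le]; constructor <;> nlinarith
          calc a⁻¹ * |((i:ℝ)+1)^2 - ((k:ℝ)+1)^2|⁻¹ * |1 - a * ((k:ℝ)+1)^2|
              ≤ a⁻¹ * |((i:ℝ)+1)^2 - ((k:ℝ)+1)^2|⁻¹ * (a * ((k:ℝ)+1)^2) := by gcongr
            _ = _ := by
              have : a ≠ 0 := by linarith
              field_simp
    calc _ ≤ 2 * (1/a * (1 / ((i:ℝ)+1)^2)) := by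
          gcongr
      _ = _ := by ring
  refine (sum_le_sum hterm).trans ?_
  rw [← mul_sum, ← mul_sum]
  have h2 : ∑ k ∈ range D, 1 / ((k:ℝ)+1)^2 ≤ 2 := by
    refine (sum_inv D).trans ?_
    have : 0 ≤ 2/((D:ℝ)+1) := by positivity
    linarith
  calc B * (2 / a * ∑ k ∈ range D, 1 / ((k:ℝ)+1)^2) ≤ B * (2 / a * 2) := by gcongr
    _ = _ := by ring

end HS

namespace HS
open Finset

variable {m : ℕ}

lemma biased_up (S : Finset (Fin m)) (t : ℝ) :
    ∑ y : Finset (Fin m), (if S ⊆ y then t ^ y.card * (1-t)^(m - y.card) else 0) = t ^ S.card := by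
  classical
  have h := Finset.prod_add (fun _ : Fin m => t) (fun i => if i ∈ S then 0 else 1 - t) Finset.univ
  have e : ∏ i : Fin m, (t + if i ∈ S then 0 else 1 - t) = t ^ S.card := by
    have : ∀ i : Fin m, (t + if i ∈ S then 0 else 1 - t) = if i ∈ S then t else 1 := by
      intro i; split_ifs <;> ring
    simp_rw [this]
    rw [Finset.prod_ite]
    simp
  rw [e] at h
  rw [h, Finset.powerset_univ]
  refine Finset.sum_congr rfl fun y _ => ?_
  rw [Finset.prod_const]
  split_ifs with hS
  · congr 1
    have : ∀ i ∈ Finset.univ \ y, (if i ∈ S then 0 else 1 - t) = 1 - t := by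
      intro i hi
      rw [if_neg]
      intro h; exact (Finset.mem_sdiff.mp hi).2 (hS h)
    rw [Finset.prod_congr rfl this, Finset.prod_const, Finset.card_sdiff_of_subset (Finset.subset_univ _)]
    simp
  · obtain ⟨i, hi, hiy⟩ := Finset.not_subset.mp hS
    symm
    rw [Finset.prod_eq_zero (i := i)]
    · simp
    · simp [hiy]
    · simp [hi]

noncomputable def q (g : Finset (Fin m) → ℝ) (t : ℝ) : ℝ :=
  ∑ y : Finset (Fin m), t ^ y.card * (1-t)^(m - y.card) * g y

lemma q_eq (g : Finset (Fin m) → ℝ) (t : ℝ) :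
    q g t = ∑ S ∈ supp g, coeff g S * t ^ S.card := by
  unfold q
  have : ∀ y : Finset (Fin m), t ^ y.card * (1-t)^(m - y.card) * g y =
     ∑ S ∈ supp g, coeff g S * (if S ⊆ y then t ^ y.card * (1-t)^(m - y.card) else 0) := by
    intro y
    conv_lhs => rw [rep g y, Finset.mul_sum]
    refine Finset.sum_congr rfl fun S _ => ?_
    split_ifs <;> ring
  simp_rw [this]
  rw [Finset.sum_comm]
  refine Finset.sum_congr rfl fun S _ => ?_
  rw [← Finset.mul_sum, biased_up]

lemma q_nonneg (g : Finset (Fin m) → ℝ) (h0 : ∀ y, 0 ≤ g y) (t : ℝ) (ht : 0 ≤ t) (ht1 : t ≤ 1) :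
    0 ≤ q g t := by
  have : 0 ≤ 1 - t := by linarith
  exact Finset.sum_nonneg fun y _ => mul_nonneg (by positivity) (h0 y)

lemma q_le_one (g : Finset (Fin m) → ℝ) (h0 : ∀ y, g y ≤ 1) (t : ℝ) (ht : 0 ≤ t) (ht1 : t ≤ 1) :
    q g t ≤ 1 := by
  have h1 : 0 ≤ 1 - t := by linarith
  have := biased_up (m := m) ∅ t
  simp only [Finset.empty_subset, if_true, Finset.card_empty, pow_zero] at this
  rw [← this]
  refine Finset.sum_le_sum fun y _ => ?_
  exact mul_le_of_le_one_right (by positivity) (h0 y)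

lemma q_lower (g : Finset (Fin m) → ℝ) (h0 : ∀ y, 0 ≤ g y) (h1 : ∀ i, g {i} = 1) (hm : 1 ≤ m) :
    1/4 ≤ q g (1/(2*m)) := by
  classical
  have hm' : (1:ℝ) ≤ m := by exact_mod_cast hm
  set t : ℝ := 1/(2*m) with ht
  have htm : t * m = 1/2 := by rw [ht]; field_simp
  have ht0 : 0 < t := by positivity
  have ht1 : t ≤ 1/2 := by nlinarith
  have ht2 : 0 ≤ 1 - t := by linarith
  have hB : 1/2 ≤ (1-t)^(m-1) := by
    have := one_add_mul_le_pow (show (-2:ℝ) ≤ -t by linarith) (m-1)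
    have h3 : ((m-1 : ℕ):ℝ) = m - 1 := by push_cast [hm]; ring
    rw [h3] at this
    have h4 : 1 + -t = 1 - t := by ring
    rw [h4] at this
    nlinarith
  have hsub : ∑ y ∈ Finset.univ.image (fun i : Fin m => ({i} : Finset (Fin m))), t ^ y.card * (1-t)^(m - y.card) * g y ≤ q g t := by
    refine Finset.sum_le_sum_of_subset_of_nonneg (Finset.subset_univ _) fun y _ _ => ?_
    exact mul_nonneg (by positivity) (h0 y)
  rw [Finset.sum_image (by intro a _ b _ h; simpa using h)] at hsub
  simp only [Finset.card_singleton, pow_one, h1, mul_one, Finset.sum_const, Finset.card_univ, Fintype.card_fin, nsmul_eq_mul] at hsub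
  refine le_trans ?_ hsub
  nlinarith

lemma coeff_le (g : Finset (Fin m) → ℝ) (h0 : ∀ y, 0 ≤ g y) (h1 : ∀ y, g y ≤ 1) (S : Finset (Fin m)) :
    |coeff g S| ≤ 2 ^ S.card := by
  unfold coeff
  refine (Finset.abs_sum_le_sum_abs _ _).trans ?_
  have : ∀ t ∈ S.powerset, |(-1 : ℝ) ^ (S.card - t.card) * g t| ≤ 1 := by
    intro t _
    rw [abs_mul, abs_pow]
    simp [abs_of_nonneg (h0 t), h1 t]
  refine (Finset.sum_le_sum this).trans ?_
  simp [Finset.card_powerset]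

open Polynomial in
lemma mbs (g : Finset (Fin m) → ℝ) (h0 : ∀ y, 0 ≤ g y) (h1 : ∀ y, g y ≤ 1)
    (hg0 : g ∅ = 0) (hg1 : ∀ i, g {i} = 1) (d : ℕ) (hd : 1 ≤ d)
    (hR : 64 * (supp g).card ≤ 4 ^ (d+1)) : m < 256 * d^2 := by
  classical
  by_contra hm
  push Not at hm
  have hm1 : 1 ≤ m := le_trans (by nlinarith) hm
  have hmR : (256:ℝ) * d^2 ≤ m := by exact_mod_cast hm
  have hm1R : (1:ℝ) ≤ m := by exact_mod_cast hm1
  set t : ℝ := 1/(2*m) with ht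
  have htm : t * m = 1/2 := by rw [ht]; field_simp
  have ht0 : 0 < t := by positivity
  set P : ℝ[X] := ∑ S ∈ (supp g).filter (fun S => S.card ≤ d), C (coeff g S * t ^ S.card) * X ^ S.card with hPdef
  have hPdeg : P.natDegree ≤ d := by
    refine natDegree_sum_le_of_forall_le _ _ fun S hS => ?_
    exact (natDegree_C_mul_X_pow_le _ _).trans (Finset.mem_filter.mp hS).2
  have hPe : ∀ x : ℝ, P.eval x = ∑ S ∈ (supp g).filter (fun S => S.card ≤ d), coeff g S * (t*x) ^ S.card := by
    intro x
    rw [hPdef, eval_finsetSum]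
    refine Finset.sum_congr rfl fun S _ => ?_
    simp [mul_pow, mul_assoc]
  have herr : ∀ x : ℝ, 0 ≤ x → t * x ≤ 1/8 → |q g (t*x) - P.eval x| ≤ 1/64 := by
    intro x hx hx2
    have hx0 : 0 ≤ t * x := by positivity
    rw [hPe, q_eq, ← Finset.sum_filter_add_sum_filter_not (supp g) (fun S => S.card ≤ d), add_sub_cancel_left]
    refine (Finset.abs_sum_le_sum_abs _ _).trans ?_
    have : ∀ S ∈ (supp g).filter (fun S => ¬ S.card ≤ d), |coeff g S * (t*x) ^ S.card| ≤ (1/4)^(d+1) := by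
      intro S hS
      have hS' := (Finset.mem_filter.mp hS).2
      rw [abs_mul, abs_pow, abs_of_nonneg hx0]
      calc |coeff g S| * (t*x)^S.card ≤ 2 ^ S.card * (1/8)^S.card := by
            gcongr
            exact coeff_le g h0 h1 S
        _ = (1/4)^S.card := by rw [← mul_pow]; norm_num
        _ ≤ (1/4)^(d+1) := pow_le_pow_of_le_one (by norm_num) (by norm_num) (by omega)
    refine (Finset.sum_le_sum this).trans ?_
    rw [Finset.sum_const, nsmul_eq_mul]
    have hc : (((supp g).filter (fun S => ¬ S.card ≤ d)).card : ℝ) ≤ (supp g).card := by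
      exact_mod_cast Finset.card_filter_le _ _
    have hR' : (64:ℝ) * (supp g).card ≤ 4 ^ (d+1) := by exact_mod_cast hR
    rw [one_div, inv_pow, ← div_eq_mul_inv, div_le_div_iff₀ (by positivity) (by norm_num)]
    linarith
  have hP0 : P.eval 0 = 0 := by
    have hc : coeff g ∅ = 0 := by simp [_root_.coeff, hg0]
    rw [hPe]
    refine Finset.sum_eq_zero fun S _ => ?_
    by_cases hS : S = ∅
    · simp [hS, hc]
    · have : S.card ≠ 0 := by simpa using hS
      simp [this]
  have hd1 : (1:ℝ) ≤ d := by exact_mod_cast hd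
  have hlag := lag d P hPdeg hP0 64 (65/64) (by norm_num) (by norm_num) ?_
  · have e1 := herr 1 (by norm_num) (by nlinarith)
    rw [mul_one] at e1
    have e2 := q_lower g h0 hg1 hm1
    rw [← ht] at e2
    rw [abs_le] at e1 hlag
    linarith [e1.2, hlag.2]
  · intro j hj hjd
    have hjd' : (j:ℝ) ≤ d := by exact_mod_cast hjd
    have hjj : (j:ℝ)^2 ≤ d^2 := by gcongr
    have hx : t * (64 * (j:ℝ)^2) ≤ 1/8 := by nlinarith
    have hx0 : 0 ≤ t * (64 * (j:ℝ)^2) := by positivity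
    have e1 := herr (64 * (j:ℝ)^2) (by positivity) hx
    have e2 := q_nonneg g h0 _ hx0 (by linarith)
    have e3 := q_le_one g h1 _ hx0 (by linarith)
    rw [abs_le] at e1 ⊢
    constructor <;> linarith [e1.1, e1.2]

/-- The bound on the number of disjoint blocks. -/
lemma blocks {n : ℕ} (S : Finset ℝ) (f : Finset (Fin n) → ℝ) (hS : ∀ x, f x ∈ S)
    (z : Finset (Fin n)) (b : Fin m → Finset (Fin n))
    (hb : ∀ j k, j ≠ k → Disjoint (b j) (b k))
    (hz : ∀ j, f (z ∪ b j) ≠ f z) (d : ℕ) (hd : 1 ≤ d)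
    (hR : 64 * (((supp f).card + 1) ^ S.card + 1) ≤ 4 ^ (d+1)) : m < 256 * d^2 := by
  classical
  set h : Finset (Fin m) → ℝ := fun y => f (z ∪ y.biUnion b) with hh
  refine mbs (fun y => if h y = h ∅ then (0:ℝ) else 1) ?_ ?_ ?_ ?_ d hd ?_
  · intro y; split_ifs <;> norm_num
  · intro y; split_ifs <;> norm_num
  · simp
  · intro i
    have : h {i} ≠ h ∅ := by simpa [hh] using hz i
    simp [this]
  · refine le_trans ?_ hR
    gcongr
    refine (supp_indicator S h (fun y => hS _)).trans ?_
    gcongr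
    exact supp_subst f z b hb

end HS

namespace HS
open Finset
open scoped Classical

variable {n : ℕ}

def PP (f : Finset (Fin n) → ℝ) (p : ℝ) : Prop :=
  ∀ (z : Finset (Fin n)) (μ : Finset (Fin n) → ℝ) (c : ℝ), (∀ w, 0 ≤ μ w) → 0 ≤ c →
    (∀ w, f (z ∪ w) = f z → μ w = 0) → (∀ i, ∑ w, (if i ∈ w then μ w else 0) ≤ c) →
    p * ∑ w, μ w ≤ c

lemma PP_idx (f : Finset (Fin n) → ℝ) (p : ℝ) (hP : PP f p) {Ω : Type*} [Fintype Ω]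
    (z : Finset (Fin n)) (ν : Ω → ℝ) (hν : ∀ ω, 0 ≤ ν ω) (v : Ω → Finset (Fin n)) (c : ℝ) (hc : 0 ≤ c)
    (h : ∀ i, ∑ ω, (if i ∈ v ω then ν ω else 0) ≤ c) :
    p * ∑ ω, (if f (z ∪ v ω) ≠ f z then ν ω else 0) ≤ c := by
  have := hP z (fun w => ∑ ω, if v ω = w then (if f (z ∪ v ω) ≠ f z then ν ω else 0) else 0) c ?_ hc ?_ ?_
  · rw [sum_comm] at this
    simpa using this
  · intro w
    refine sum_nonneg fun ω _ => ?_
    split_ifs <;> first | exact hν ω | exact le_refl _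
  · intro w hw
    refine sum_eq_zero fun ω _ => ?_
    by_cases h1 : v ω = w
    · subst h1; simp [hw]
    · simp [h1]
  · intro i
    refine le_trans ?_ (h i)
    have : ∀ w : Finset (Fin n), (if i ∈ w then (∑ ω, if v ω = w then (if f (z ∪ v ω) ≠ f z then ν ω else 0) else 0) else 0)
       = ∑ ω, if v ω = w then (if i ∈ v ω then (if f (z ∪ v ω) ≠ f z then ν ω else 0) else 0) else 0 := by
      intro w
      by_cases hi : i ∈ w
      · rw [if_pos hi]
        refine sum_congr rfl fun ω _ => ?_
        by_cases h1 : v ω = w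
        · subst h1; rw [if_pos hi]
        · simp [h1]
      · rw [if_neg hi]
        symm
        refine sum_eq_zero fun ω _ => ?_
        by_cases h1 : v ω = w
        · subst h1; simp [hi]
        · simp [h1]
    simp_rw [this]
    rw [sum_comm]
    refine sum_le_sum fun ω _ => ?_
    simp only [sum_ite_eq, mem_univ, if_true]
    have := hν ω
    split_ifs <;> first | exact le_refl _ | assumption

lemma PP_small (f : Finset (Fin n) → ℝ) : PP f (1/((n:ℝ)+1)) := by
  intro z μ c hμ hc hz hi
  have h1 : ∑ w, μ w ≤ ∑ i : Fin n, ∑ w, (if i ∈ w then μ w else 0) := by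
    rw [sum_comm]
    refine sum_le_sum fun w _ => ?_
    by_cases hw : w = ∅
    · subst hw
      rw [hz ∅ (by simp)]; simp
    · obtain ⟨i, hi⟩ := Finset.nonempty_iff_ne_empty.mpr hw
      have := single_le_sum (f := fun i => if i ∈ w then μ w else 0) (s := univ)
        (fun i _ => by split_ifs <;> first | exact hμ w | exact le_refl _) (mem_univ i)
      simpa [hi] using this
  have h2 : ∑ i : Fin n, ∑ w, (if i ∈ w then μ w else 0) ≤ n * c := by
    refine (sum_le_sum fun i _ => hi i).trans ?_
    simp
  rw [one_div, inv_mul_le_iff₀ (by positivity)]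
  nlinarith

lemma PP_le_one (f : Finset (Fin n) → ℝ) (p : ℝ) (hP : PP f p) (z w : Finset (Fin n))
    (h : f (z ∪ w) ≠ f z) : p ≤ 1 := by
  have := PP_idx f p hP z (fun _ : Unit => 1) (by simp) (fun _ => w) 1 (by norm_num)
    (by intro i; simp; split_ifs <;> norm_num)
  simpa [h] using this

lemma exists_p (f : Finset (Fin n) → ℝ) (z w : Finset (Fin n)) (h : f (z ∪ w) ≠ f z) :
    ∃ p : ℝ, 0 < p ∧ PP f p ∧ ¬ PP f (2 * p) := by
  by_contra hcon
  push Not at hcon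
  have : ∀ k : ℕ, PP f (2 ^ k * (1/((n:ℝ)+1))) := by
    intro k
    induction k with
    | zero => simpa using PP_small f
    | succ k ih =>
      have := hcon _ (by positivity) ih
      rwa [← mul_assoc, ← pow_succ'] at this
  obtain ⟨k, hk⟩ := pow_unbounded_of_one_lt ((n:ℝ)+1) (show (1:ℝ) < 2 by norm_num)
  have h1 := PP_le_one f _ (this k) z w h
  rw [mul_one_div, div_le_one (by positivity)] at h1
  linarith

section prob
variable {l : ℕ} (D : Finset (Fin n) → ℝ)

noncomputable def Pr (ω : Fin l → Finset (Fin n)) : ℝ := ∏ a, D (ω a)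

lemma box (A : Fin l → Finset (Fin n) → Prop) :
    ∑ ω : Fin l → Finset (Fin n), (if ∀ c, A c (ω c) then Pr D ω else 0)
      = ∏ c, ∑ w, (if A c w then D w else 0) := by
  rw [Finset.prod_univ_sum, Fintype.piFinset_univ]
  refine sum_congr rfl fun ω _ => ?_
  split_ifs with h
  · refine prod_congr rfl fun c _ => ?_
    rw [if_pos (h c)]
  · push Not at h
    obtain ⟨c, hc⟩ := h
    symm
    exact prod_eq_zero (mem_univ c) (by rw [if_neg hc])

def uK (K : Finset (Fin l)) (ω : Fin l → Finset (Fin n)) : Finset (Fin n) :=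
  univ.filter (fun i => ∃ a ∈ K, ∃ b ∈ K, a ≠ b ∧ i ∈ ω a ∧ i ∈ ω b)

variable (hD : ∀ w, 0 ≤ D w) (hD1 : ∑ w, D w = 1)

include hD in
lemma Pr_nonneg (ω : Fin l → Finset (Fin n)) : 0 ≤ Pr D ω := prod_nonneg fun a _ => hD _

include hD1 in
lemma pair (A : Fin l → Finset (Fin n) → Prop) (a b : Fin l) (hab : a ≠ b)
    (ha : ∀ w, A a w) (hb : ∀ w, A b w) (i : Fin n) :
    ∑ ω : Fin l → Finset (Fin n), (if (∀ c, A c (ω c)) ∧ i ∈ ω a ∧ i ∈ ω b then Pr D ω else 0)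
      = (∑ w, if i ∈ w then D w else 0)^2 * ∏ c, ∑ w, (if A c w then D w else 0) := by
  set θ := (∑ w, if i ∈ w then D w else 0) with hθ
  have h1 := box D (fun (c : Fin l) w => A c w ∧ (c = a → i ∈ w) ∧ (c = b → i ∈ w))
  have h2 : ∀ ω : Fin l → Finset (Fin n), (∀ c, A c (ω c) ∧ (c = a → i ∈ ω c) ∧ (c = b → i ∈ ω c)) ↔
      ((∀ c, A c (ω c)) ∧ i ∈ ω a ∧ i ∈ ω b) := by
    intro ω
    constructor
    · intro h
      exact ⟨fun c => (h c).1, (h a).2.1 rfl, (h b).2.2 rfl⟩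
    · rintro ⟨h, h3, h4⟩ c
      exact ⟨h c, fun e => e ▸ h3, fun e => e ▸ h4⟩
  refine Eq.trans (sum_congr rfl fun ω _ => ?_) (h1.trans ?_)
  · have := h2 ω
    split_ifs <;> first | rfl | (exfalso; tauto)
  have h3 : ∀ c : Fin l, ∑ w, (if A c w ∧ (c = a → i ∈ w) ∧ (c = b → i ∈ w) then D w else 0)
     = (if c = a then θ else 1) * (if c = b then θ else 1) * ∑ w, (if A c w then D w else 0) := by
    intro c
    by_cases hca : c = a
    · subst hca
      simp [hab, ha, hD1, hθ]
    · by_cases hcb : c = b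
      · subst hcb
        simp [hca, hb, hD1, hθ]
      · simp [hca, hcb]
  have h4 : ∏ c : Fin l, ((if c = a then θ else 1) * (if c = b then θ else 1) * ∑ w, (if A c w then D w else 0))
      = θ ^ 2 * ∏ c, ∑ w, (if A c w then D w else 0) := by
    rw [prod_mul_distrib, prod_mul_distrib]
    simp [sq]
  rw [← h4]
  refine prod_congr rfl fun c _ => ?_
  rw [← h3 c]
  refine sum_congr rfl fun w _ => ?_
  split_ifs <;> rfl

include hD hD1 in
lemma marg (A : Fin l → Finset (Fin n) → Prop) (K : Finset (Fin l))
    (hA : ∀ c ∈ K, ∀ w, A c w) (i : Fin n) (θ : ℝ) (hθ : ∑ w, (if i ∈ w then D w else 0) ≤ θ) :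
    ∑ ω : Fin l → Finset (Fin n), (if i ∈ uK K ω then (if (∀ c, A c (ω c)) then Pr D ω else 0) else 0)
      ≤ (l:ℝ)^2 * (θ^2 * ∏ c, ∑ w, (if A c w then D w else 0)) := by
  have hψ : 0 ≤ ∏ c, ∑ w, (if A c w then D w else 0) :=
    prod_nonneg fun c _ => sum_nonneg fun w _ => by
      split_ifs <;> first | exact hD w | exact le_refl _
  have hθ0 : 0 ≤ ∑ w, (if i ∈ w then D w else 0) := sum_nonneg fun w _ => by
      split_ifs <;> first | exact hD w | exact le_refl _
  have hterm : ∀ ω : Fin l → Finset (Fin n), ∀ a b,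
      0 ≤ (if (∀ c, A c (ω c)) ∧ i ∈ ω a ∧ i ∈ ω b then Pr D ω else 0) := by
    intro ω a b
    split_ifs <;> first | exact Pr_nonneg D hD ω | exact le_refl _
  have h1 : ∀ ω : Fin l → Finset (Fin n), (if i ∈ uK K ω then (if (∀ c, A c (ω c)) then Pr D ω else 0) else 0)
      ≤ ∑ a : Fin l, ∑ b : Fin l, if (a ∈ K ∧ b ∈ K ∧ a ≠ b) then
        (if (∀ c, A c (ω c)) ∧ i ∈ ω a ∧ i ∈ ω b then Pr D ω else 0) else 0 := by
    intro ω
    have hn : ∀ a b, 0 ≤ if (a ∈ K ∧ b ∈ K ∧ a ≠ b) then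
        (if (∀ c, A c (ω c)) ∧ i ∈ ω a ∧ i ∈ ω b then Pr D ω else 0) else 0 := by
      intro a b
      by_cases h : (a ∈ K ∧ b ∈ K ∧ a ≠ b)
      · rw [if_pos h]; exact hterm ω a b
      · rw [if_neg h]
    by_cases hi : i ∈ uK K ω
    · rw [if_pos hi]
      simp only [uK, mem_filter, mem_univ, true_and] at hi
      obtain ⟨a, ha, b, hb, hab, h3, h4⟩ := hi
      have e1 := single_le_sum (f := fun a => ∑ b : Fin l, if (a ∈ K ∧ b ∈ K ∧ a ≠ b) then
        (if (∀ c, A c (ω c)) ∧ i ∈ ω a ∧ i ∈ ω b then Pr D ω else 0) else 0) (s := univ)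
        (fun a _ => sum_nonneg fun b _ => hn a b) (mem_univ a)
      have e2 := single_le_sum (f := fun b => if (a ∈ K ∧ b ∈ K ∧ a ≠ b) then
        (if (∀ c, A c (ω c)) ∧ i ∈ ω a ∧ i ∈ ω b then Pr D ω else 0) else 0) (s := univ)
        (fun b _ => hn a b) (mem_univ b)
      refine le_trans ?_ (e2.trans e1)
      simp [ha, hb, hab, h3, h4]
    · rw [if_neg hi]
      exact sum_nonneg fun a _ => sum_nonneg fun b _ => hn a b
  refine (sum_le_sum fun ω _ => h1 ω).trans ?_
  rw [sum_comm]
  have h2 : ∀ a b : Fin l, ∑ ω : Fin l → Finset (Fin n), (if (a ∈ K ∧ b ∈ K ∧ a ≠ b) then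
        (if (∀ c, A c (ω c)) ∧ i ∈ ω a ∧ i ∈ ω b then Pr D ω else 0) else 0)
        ≤ θ^2 * ∏ c, ∑ w, (if A c w then D w else 0) := by
    intro a b
    by_cases h : (a ∈ K ∧ b ∈ K ∧ a ≠ b)
    · simp only [if_pos h]
      rw [pair D hD1 A a b h.2.2 (hA a h.1) (hA b h.2.1) i]
      gcongr
    · simp only [if_neg h, sum_const_zero]
      positivity
  calc _ ≤ ∑ a : Fin l, ∑ b : Fin l, θ^2 * ∏ c, ∑ w, (if A c w then D w else 0) := by
        refine sum_le_sum fun a _ => ?_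
        rw [sum_comm]
        exact sum_le_sum fun b _ => h2 a b
    _ = _ := by
        simp; ring

include hD hD1 in
lemma event (f : Finset (Fin n) → ℝ) (p : ℝ) (hp : 0 < p) (hP : PP f p)
    (hθ : ∀ i, ∑ w, (if i ∈ w then D w else 0) ≤ 2 * p)
    (A : Fin l → Finset (Fin n) → Prop) (K : Finset (Fin l))
    (hA : ∀ c ∈ K, ∀ w, A c w) (z : Finset (Fin n)) :
    ∑ ω : Fin l → Finset (Fin n), (if f (z ∪ uK K ω) ≠ f z then (if (∀ c, A c (ω c)) then Pr D ω else 0) else 0)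
      ≤ 4 * p * (l:ℝ)^2 * ∏ c, ∑ w, (if A c w then D w else 0) := by
  have hψ : 0 ≤ ∏ c, ∑ w, (if A c w then D w else 0) :=
    prod_nonneg fun c _ => sum_nonneg fun w _ => by
      split_ifs <;> first | exact hD w | exact le_refl _
  have := PP_idx f p hP z (fun ω : Fin l → Finset (Fin n) => (if (∀ c, A c (ω c)) then Pr D ω else 0))
    (fun ω => by split_ifs <;> first | exact Pr_nonneg D hD ω | exact le_refl _)
    (uK K) ((l:ℝ)^2 * ((2*p)^2 * ∏ c, ∑ w, (if A c w then D w else 0))) (by positivity)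
    (fun i => marg D hD hD1 A K hA i (2*p) (hθ i))
  refine le_of_mul_le_mul_left (this.trans (le_of_eq ?_)) hp
  ring

include hD hD1 in
lemma event0 (f : Finset (Fin n) → ℝ) (p : ℝ) (hp : 0 < p) (hP : PP f p)
    (hθ : ∀ i, ∑ w, (if i ∈ w then D w else 0) ≤ 2 * p) (z : Finset (Fin n)) :
    ∑ ω : Fin l → Finset (Fin n), (if f (z ∪ uK univ ω) ≠ f z then Pr D ω else 0)
      ≤ 4 * p * (l:ℝ)^2 := by
  have := event D hD hD1 f p hp hP hθ (fun (_ : Fin l) _ => True) univ (by simp) z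
  simpa [hD1] using this

include hD hD1 in
lemma eventj (f : Finset (Fin n) → ℝ) (p : ℝ) (hp : 0 < p) (hP : PP f p)
    (hθ : ∀ i, ∑ w, (if i ∈ w then D w else 0) ≤ 2 * p) (z : Finset (Fin n)) (j : Fin l) :
    ∑ ω : Fin l → Finset (Fin n), (if f (z ∪ ω j ∪ uK (univ.erase j) ω) ≠ f (z ∪ ω j) then Pr D ω else 0)
      ≤ 4 * p * (l:ℝ)^2 := by
  have h1 : ∀ x : Finset (Fin n), ∑ ω : Fin l → Finset (Fin n),
      (if f (z ∪ x ∪ uK (univ.erase j) ω) ≠ f (z ∪ x) then (if ω j = x then Pr D ω else 0) else 0)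
      ≤ 4 * p * (l:ℝ)^2 * D x := by
    intro x
    have := event D hD hD1 f p hp hP hθ (fun (c : Fin l) w => c = j → w = x) (univ.erase j)
      (by intro c hc w h; exact absurd h (ne_of_mem_erase hc)) (z ∪ x)
    have e : ∏ c : Fin l, ∑ w, (if (c = j → w = x) then D w else 0) = D x := by
      have : ∀ c : Fin l, ∑ w, (if (c = j → w = x) then D w else 0) = if c = j then D x else 1 := by
        intro c
        by_cases h : c = j <;> simp [h, hD1]
      simp_rw [this]
      simp
    refine le_trans (le_of_eq ?_) (this.trans (le_of_eq (congrArg (fun x => 4 * p * (l:ℝ)^2 * x) (by convert e))))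
    refine sum_congr rfl fun ω _ => ?_
    have hh : (∀ c, c = j → ω c = x) ↔ ω j = x := by simp
    split_ifs <;> first | rfl | (exfalso; tauto)
  have h2 := sum_le_sum fun x (_ : x ∈ (univ : Finset (Finset (Fin n)))) => h1 x
  rw [← mul_sum, hD1, mul_one, sum_comm] at h2
  refine le_trans (le_of_eq ?_) h2
  refine sum_congr rfl fun ω _ => ?_
  rw [sum_eq_single (ω j)]
  · simp
  · intro x _ hx
    simp [hx.symm]
  · simp

end prob

lemma frac (f : Finset (Fin n) → ℝ) (p : ℝ) (hp : 0 < p) (hP : PP f p) (hP2 : ¬ PP f (2*p))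
    (M : ℕ) (hM : 1 ≤ M)
    (hB : ∀ (m : ℕ) (z : Finset (Fin n)) (b : Fin m → Finset (Fin n)),
      (∀ j k, j ≠ k → Disjoint (b j) (b k)) → (∀ j, f (z ∪ b j) ≠ f z) → m < M) :
    1 < 64 * p * (M:ℝ)^2 := by
  by_contra hcon
  push Not at hcon
  simp only [PP] at hP2
  push Not at hP2
  obtain ⟨z, μ, c, hμ, hc, hz, hi, hlt⟩ := hP2
  set s := ∑ w, μ w with hs
  have hs0 : 0 < s := by
    by_contra h
    push Not at h
    have : 2 * p * s ≤ 0 := mul_nonpos_of_nonneg_of_nonpos (by positivity) h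
    linarith
  set D : Finset (Fin n) → ℝ := fun w => μ w / s with hDdef
  have hD : ∀ w, 0 ≤ D w := fun w => div_nonneg (hμ w) hs0.le
  have hD1 : ∑ w, D w = 1 := by
    rw [hDdef, ← sum_div, ← hs, div_self hs0.ne']
  have hθ : ∀ i, ∑ w, (if i ∈ w then D w else 0) ≤ 2 * p := by
    intro i
    have : ∑ w, (if i ∈ w then D w else 0) = (∑ w, (if i ∈ w then μ w else 0)) / s := by
      rw [sum_div]
      refine sum_congr rfl fun w _ => ?_
      split_ifs <;> simp [hDdef]
    rw [this, div_le_iff₀ hs0]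
    exact (hi i).trans hlt.le
  obtain ⟨l, hl⟩ : ∃ l : ℕ, l = 2 * M := ⟨_, rfl⟩
  have hlR : (l:ℝ) = 2 * M := by rw [hl]; push_cast; ring
  have hMR : (1:ℝ) ≤ M := by exact_mod_cast hM
  have hq : 4 * p * (l:ℝ)^2 ≤ 1/4 := by rw [hlR]; linarith
  set E0 : (Fin l → Finset (Fin n)) → Prop := fun ω => f (z ∪ uK univ ω) ≠ f z with hE0
  set E : Fin l → (Fin l → Finset (Fin n)) → Prop :=
    fun j ω => f (z ∪ ω j ∪ uK (univ.erase j) ω) ≠ f (z ∪ ω j) with hE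
  set Y : (Fin l → Finset (Fin n)) → ℝ := fun ω =>
    l * (if E0 ω then 1 else 0) + ∑ j, (if E j ω then 1 else 0) with hY
  have hPr1 : ∑ ω : Fin l → Finset (Fin n), Pr D ω = 1 := by
    have := box (l := l) D (fun _ _ => True)
    simpa [hD1] using this
  have hEY : ∑ ω : Fin l → Finset (Fin n), Pr D ω * Y ω ≤ l / 2 := by
    have e : ∀ ω : Fin l → Finset (Fin n), Pr D ω * Y ω =
        l * (if E0 ω then Pr D ω else 0) + ∑ j, (if E j ω then Pr D ω else 0) := by
      intro ω
      simp only [hY, mul_add, mul_sum]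
      congr 1
      · split_ifs <;> ring
      · refine sum_congr rfl fun j _ => ?_
        split_ifs <;> ring
    simp_rw [e]
    rw [sum_add_distrib, ← mul_sum, sum_comm]
    have h1 := event0 (l := l) D hD hD1 f p hp hP hθ z
    have h2 : ∀ j : Fin l, ∑ ω : Fin l → Finset (Fin n), (if E j ω then Pr D ω else 0) ≤ 1/4 :=
      fun j => (eventj (l := l) D hD hD1 f p hp hP hθ z j).trans hq
    have h3 := sum_le_sum fun j (_ : j ∈ (univ : Finset (Fin l))) => h2 j
    simp only [sum_const, card_univ, Fintype.card_fin, nsmul_eq_mul] at h3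
    have h4 : (l:ℝ) * ∑ ω : Fin l → Finset (Fin n), (if E0 ω then Pr D ω else 0) ≤ l * (1/4) := by
      gcongr
      exact h1.trans hq
    linarith
  obtain ⟨ω, hω, hYω⟩ : ∃ ω : Fin l → Finset (Fin n), 0 < Pr D ω ∧ Y ω ≤ l / 2 := by
    by_contra hno
    push Not at hno
    obtain ⟨ω0, _, hω0⟩ := exists_ne_zero_of_sum_ne_zero (s := (univ : Finset (Fin l → Finset (Fin n))))
      (f := fun ω => Pr D ω) (by rw [hPr1]; norm_num)
    have hω0' : 0 < Pr D ω0 := lt_of_le_of_ne (Pr_nonneg D hD ω0) (Ne.symm hω0)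
    have : ∑ ω : Fin l → Finset (Fin n), Pr D ω * (l/2) < ∑ ω : Fin l → Finset (Fin n), Pr D ω * Y ω := by
      refine sum_lt_sum (fun ω _ => ?_) ⟨ω0, mem_univ _, ?_⟩
      · rcases (Pr_nonneg D hD ω).eq_or_lt with h | h
        · simp [← h]
        · exact mul_le_mul_of_nonneg_left (hno ω h).le h.le
      · exact mul_lt_mul_of_pos_left (hno ω0 hω0') hω0'
    rw [← sum_mul, hPr1] at this
    linarith
  have hsum0 : (0:ℝ) ≤ ∑ j, (if E j ω then 1 else 0) :=
    sum_nonneg fun j _ => by split_ifs <;> norm_num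
  have hE0ω : ¬ E0 ω := by
    intro h
    simp only [hY, if_pos h] at hYω
    linarith
  have hbad : ((univ.filter (fun j => E j ω)).card : ℝ) ≤ M := by
    simp only [hY, if_neg hE0ω, mul_zero, zero_add] at hYω
    rw [sum_boole] at hYω
    linarith
  have hgood : M ≤ (univ.filter (fun j => ¬ E j ω)).card := by
    have h1 := card_filter_add_card_filter_not (s := (univ : Finset (Fin l))) (fun j => E j ω)
    have h2 : (univ.filter (fun j => E j ω)).card ≤ M := by exact_mod_cast hbad
    rw [card_univ, Fintype.card_fin] at h1
    omega
  set G := univ.filter (fun j => ¬ E j ω) with hG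
  have := hB G.card (z ∪ uK univ ω) (fun k => ω (G.orderEmbOfFin rfl k) \ uK univ ω) ?_ ?_
  · omega
  · intro j k hjk
    rw [disjoint_left]
    intro i h1 h2
    rw [mem_sdiff] at h1 h2
    apply h1.2
    simp only [uK, mem_filter, mem_univ, true_and]
    refine ⟨_, _, ?_, h1.1, h2.1⟩
    intro h
    exact hjk ((G.orderEmbOfFin rfl).injective h)
  · intro k
    set j := G.orderEmbOfFin rfl k with hj
    have hjG : j ∈ G := G.orderEmbOfFin_mem rfl k
    have hEj : ¬ E j ω := (mem_filter.mp hjG).2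
    have hDj : D (ω j) ≠ 0 := fun h => hω.ne' (prod_eq_zero (mem_univ j) h)
    have hfj : f (z ∪ ω j) ≠ f z := by
      intro h
      apply hDj
      simp [hDdef, hz _ h]
    simp only [hE0, not_not] at hE0ω
    simp only [hE, not_not] at hEj
    have hset : z ∪ uK univ ω ∪ (ω j \ uK univ ω) = z ∪ ω j ∪ uK (univ.erase j) ω := by
      ext i
      have : i ∈ uK univ ω ∪ ω j ↔ i ∈ ω j ∪ uK (univ.erase j) ω := by
        simp only [uK, mem_union, mem_filter, mem_univ, true_and, mem_erase, and_true]
        constructor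
        · rintro (⟨a, b, hab, ha, hb⟩ | h)
          · by_cases h1 : a = j
            · left; exact h1 ▸ ha
            · by_cases h2 : b = j
              · left; exact h2 ▸ hb
              · right; exact ⟨a, h1, b, h2, hab, ha, hb⟩
          · exact Or.inl h
        · rintro (h | ⟨a, h1, b, h2, hab, ha, hb⟩)
          · exact Or.inr h
          · left; exact ⟨a, b, hab, ha, hb⟩
      simp only [mem_union, mem_sdiff] at this ⊢
      tauto
    rw [hset, hEj, hE0ω]
    exact hfj

lemma greedy (f : Finset (Fin n) → ℝ) (p : ℝ) (hp1 : p ≤ 1) (hP : PP f p)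
    (z : Finset (Fin n)) (G : Finset (Finset (Fin n))) (hG : ∀ w ∈ G, f (z ∪ w) ≠ f z) (t : ℕ) :
    ∃ H : Finset (Fin n), H.card ≤ t ∧ ((G.filter (fun w => ¬ (H ∩ w).Nonempty)).card : ℝ) ≤ (1-p)^t * G.card := by
  induction t with
  | zero =>
    refine ⟨∅, by simp, ?_⟩
    simp
  | succ t ih =>
    obtain ⟨H, hH, hc⟩ := ih
    set G' := G.filter (fun w => ¬ (H ∩ w).Nonempty) with hG'
    rcases G'.eq_empty_or_nonempty with he | ⟨w0, hw0⟩
    · refine ⟨H, by omega, ?_⟩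
      rw [← hG', he]
      have : 0 ≤ 1 - p := by linarith
      simp; positivity
    · have hw0' := hG w0 (mem_filter.mp hw0).1
      have hne : w0.Nonempty := by
        rw [Finset.nonempty_iff_ne_empty]
        rintro rfl; simp at hw0'
      obtain ⟨i0, _⟩ := hne
      obtain ⟨i, _, hi⟩ := exists_max_image (univ : Finset (Fin n))
        (fun i => ((G'.filter (fun w => i ∈ w)).card)) ⟨i0, mem_univ _⟩
      have key := hP z (fun w => if w ∈ G' then 1 else 0) ((G'.filter (fun w => i ∈ w)).card)
        (by intro w; split_ifs <;> norm_num) (by positivity)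
        (by
          intro w hw
          rw [if_neg]
          intro h
          exact hG w (mem_filter.mp h).1 hw)
        (by
          intro k
          have e : ∑ w, (if k ∈ w then (if w ∈ G' then (1:ℝ) else 0) else 0) = ((G'.filter (fun w => k ∈ w)).card : ℝ) := by
            have : ∀ w : Finset (Fin n), (if k ∈ w then (if w ∈ G' then (1:ℝ) else 0) else 0) =
                if w ∈ G'.filter (fun w => k ∈ w) then 1 else 0 := by
              intro w
              by_cases h1 : k ∈ w <;> by_cases h2 : w ∈ G' <;> simp [h1, h2]
            simp_rw [this]
            rw [sum_boole]
            congr 2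
            ext; simp
          rw [e]
          exact_mod_cast hi k (mem_univ k))
      rw [sum_boole] at key
      simp only [filter_mem_eq_inter, univ_inter] at key
      refine ⟨insert i H, (card_insert_le _ _).trans (by omega), ?_⟩
      have hsub : G.filter (fun w => ¬ (insert i H ∩ w).Nonempty) ⊆ G'.filter (fun w => ¬ i ∈ w) := by
        intro w hw
        rw [mem_filter] at hw
        rw [mem_filter, hG', mem_filter]
        refine ⟨⟨hw.1, fun h => hw.2 (h.mono (inter_subset_inter_right (subset_insert _ _)))⟩, fun h => hw.2 ⟨i, by simp [h]⟩⟩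
      have h1 := card_filter_add_card_filter_not (s := G') (fun w => i ∈ w)
      have h2 : ((G'.filter (fun w => i ∈ w)).card : ℝ) + ((G'.filter (fun w => ¬ i ∈ w)).card : ℝ) = G'.card := by
        exact_mod_cast h1
      have h3 : ((G.filter (fun w => ¬ (insert i H ∩ w).Nonempty)).card : ℝ) ≤ (G'.filter (fun w => ¬ i ∈ w)).card := by
        exact_mod_cast card_le_card hsub
      have h4 : (1-p) * (G'.card : ℝ) ≤ (1-p) * ((1-p)^t * G.card) :=
        mul_le_mul_of_nonneg_left hc (by linarith)
      rw [pow_succ]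
      linarith

noncomputable def minimals (f : Finset (Fin n) → ℝ) (z : Finset (Fin n)) : Finset (Finset (Fin n)) :=
  univ.filter (fun w => f (z ∪ w) ≠ f z ∧ ∀ v, v ⊂ w → f (z ∪ v) = f z)

lemma exists_minimal_sub (f : Finset (Fin n) → ℝ) (z : Finset (Fin n)) (w : Finset (Fin n))
    (hw : f (z ∪ w) ≠ f z) : ∃ v ∈ minimals f z, v ⊆ w := by
  induction w using Finset.strongInduction with
  | H w ih =>
    by_cases h : ∀ v, v ⊂ w → f (z ∪ v) = f z
    · exact ⟨w, by simp only [minimals, mem_filter, mem_univ, true_and]; exact ⟨hw, h⟩, Subset.refl _⟩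
    · push Not at h
      obtain ⟨v, hv, hfv⟩ := h
      obtain ⟨v', h1, h2⟩ := ih v hv hfv
      exact ⟨v', h1, h2.trans hv.subset⟩

lemma card_minimals (f : Finset (Fin n) → ℝ) (z : Finset (Fin n)) :
    (minimals f z).card ≤ (supp f).card := by
  have h1 := supp_subst f z (fun i : Fin n => ({i} : Finset (Fin n)))
    (by intro j k hjk; simpa using hjk)
  refine le_trans (card_le_card ?_) h1
  intro w hw
  simp only [minimals, mem_filter, mem_univ, true_and] at hw
  rw [mem_supp]
  simp only [Finset.biUnion_singleton_eq_self]
  have hne : ¬ (∅ = w) := by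
    rintro rfl; simp at hw
  have hk := key2 ∅ w (empty_subset _)
  rw [if_neg hne] at hk
  have hI : Finset.Icc ∅ w = w.powerset := by ext; simp
  rw [hI] at hk
  have : coeff (fun y => f (z ∪ y)) w = f (z ∪ w) - f z := by
    unfold coeff
    have e : ∀ t ∈ w.powerset, (-1 : ℝ) ^ (w.card - t.card) * f (z ∪ t) =
        (if t = w then f (z ∪ w) - f z else 0) + (-1 : ℝ) ^ (w.card - t.card) * f z := by
      intro t ht
      by_cases h : t = w
      · subst h; simp
      · rw [hw.2 t (lt_of_le_of_ne (mem_powerset.mp ht) h)]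
        simp [h]
    rw [sum_congr rfl e, sum_add_distrib, ← sum_mul, hk]
    simp
  rw [this, sub_ne_zero]
  exact hw.1

lemma hit (f : Finset (Fin n) → ℝ) (p : ℝ) (hp : 0 < p) (hp1 : p ≤ 1) (hP : PP f p)
    (z : Finset (Fin n)) (hr : 1 ≤ (supp f).card) :
    ∃ H : Finset (Fin n), (∀ w ∈ W f z, (H ∩ w).Nonempty) ∧ (H.card : ℝ) ≤ Real.log (supp f).card / p + 1 := by
  have hrR : (1:ℝ) ≤ (supp f).card := by exact_mod_cast hr
  set r : ℝ := ((supp f).card : ℝ) with hrdef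
  have hlog : 0 ≤ Real.log r / p := div_nonneg (Real.log_nonneg hrR) hp.le
  obtain ⟨H, hH, hc⟩ := greedy f p hp1 hP z (minimals f z) (fun w hw => by
    simp only [minimals, mem_filter, mem_univ, true_and] at hw; exact hw.1) (⌊Real.log r / p⌋₊ + 1)
  refine ⟨H, ?_, ?_⟩
  · have hlt : (((minimals f z).filter (fun w => ¬ (H ∩ w).Nonempty)).card : ℝ) < 1 := by
      refine lt_of_le_of_lt hc ?_
      set t := ⌊Real.log r / p⌋₊ + 1 with ht
      have ht1 : Real.log r / p < t := by rw [ht]; push_cast; exact Nat.lt_floor_add_one _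
      rw [div_lt_iff₀ hp] at ht1
      have h1 : (1-p)^t ≤ Real.exp (-p * t) := by
        have : 1 - p ≤ Real.exp (-p) := by
          have := Real.add_one_le_exp (-p); linarith
        calc (1-p)^t ≤ (Real.exp (-p))^t := pow_le_pow_left₀ (by linarith) this t
          _ = _ := by rw [← Real.exp_nat_mul]; ring_nf
      have h2 : ((minimals f z).card : ℝ) ≤ r := by
        rw [hrdef]; exact_mod_cast card_minimals f z
      calc (1-p)^t * ((minimals f z).card : ℝ) ≤ Real.exp (-p*t) * r := by
            gcongr
        _ = Real.exp (-p*t + Real.log r) := by rw [Real.exp_add, Real.exp_log (by linarith)]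
        _ < 1 := by rw [Real.exp_lt_one_iff]; linarith
    have h0 : ((minimals f z).filter (fun w => ¬ (H ∩ w).Nonempty)).card = 0 := by
      have : ((minimals f z).filter (fun w => ¬ (H ∩ w).Nonempty)).card < 1 := by exact_mod_cast hlt
      omega
    rw [card_eq_zero] at h0
    intro w hw
    obtain ⟨v, hv, hvw⟩ := exists_minimal_sub f z w hw.2
    by_contra hcon
    have : v ∈ (minimals f z).filter (fun w => ¬ (H ∩ w).Nonempty) := by
      rw [mem_filter]
      exact ⟨hv, fun h => hcon (h.mono (inter_subset_inter_left hvw))⟩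
    rw [h0] at this
    simp at this
  · have : (H.card : ℝ) ≤ (⌊Real.log r / p⌋₊ + 1 : ℕ) := by exact_mod_cast hH
    refine this.trans ?_
    push_cast
    have := Nat.floor_le hlog
    linarith

end HS

namespace HS

lemma final (n s : ℕ) (S : Finset ℝ) (f : Finset (Fin n) → ℝ) (hs : S.card = s)
    (hS : ∀ x, f x ∈ S) (hr : 2 ≤ sparsity f) (z : Finset (Fin n)) :
    ∃ H : Finset (Fin n), (∀ w ∈ W f z, (H ∩ w).Nonempty) ∧
      (H.card : ℝ) ≤ (64 * 6400^2 + 1) * (s : ℝ) ^ 4 * (Real.logb 2 (sparsity f)) ^ 5 := by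
  have hrR : (2:ℝ) ≤ sparsity f := by exact_mod_cast hr
  have hcs := card_supp f
  obtain ⟨r, hrdef⟩ : ∃ r, r = sparsity f := ⟨_, rfl⟩
  rw [← hrdef] at hr hrR hcs ⊢
  obtain ⟨L, hL⟩ : ∃ L, L = Real.logb 2 r := ⟨_, rfl⟩
  rw [← hL]
  have hL1 : 1 ≤ L := by
    rw [hL, Real.le_logb_iff_rpow_le (by norm_num) (by linarith)]
    simpa using hrR
  have hs1 : 1 ≤ s := by
    rw [← hs]; exact Finset.card_pos.mpr ⟨_, hS ∅⟩
  have hs1R : (1:ℝ) ≤ s := by exact_mod_cast hs1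
  have hsL : 1 ≤ s * L := by nlinarith
  by_cases hW : ∃ w, w ∈ W f z
  swap
  · refine ⟨∅, fun w hw => absurd ⟨w, hw⟩ hW, ?_⟩
    simp only [Finset.card_empty, Nat.cast_zero]
    positivity
  obtain ⟨w, hw⟩ := hW
  obtain ⟨p, hp, hP, hP2⟩ := exists_p f z w hw.2
  have hp1 := PP_le_one f p hP z w hw.2
  obtain ⟨N, hN⟩ : ∃ N, N = ⌈s * L⌉₊ := ⟨_, rfl⟩
  have hN1 : s * L ≤ N := by rw [hN]; exact Nat.le_ceil _
  have hN2 : (N:ℝ) < s * L + 1 := by rw [hN]; exact Nat.ceil_lt_add_one (by linarith)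
  have hpow : r ^ (2 * s) ≤ 4 ^ N := by
    have h1 : (r:ℝ) = 2 ^ L := by
      rw [hL, Real.rpow_logb (by norm_num) (by norm_num) (by linarith)]
    have h2 : (r:ℝ) ^ (2 * s) ≤ 4 ^ N := by
      rw [h1, ← Real.rpow_natCast, ← Real.rpow_mul (by norm_num)]
      have : (4:ℝ) ^ N = 2 ^ ((2:ℝ) * N) := by
        rw [Real.rpow_mul (by norm_num), Real.rpow_natCast]; norm_num
      rw [this]
      apply Real.rpow_le_rpow_of_exponent_le (by norm_num)
      push_cast
      nlinarith
    exact_mod_cast h2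
  have hR : 64 * (((supp f).card + 1) ^ S.card + 1) ≤ 4 ^ (N + 3 + 1) := by
    rw [hcs, hs]
    have h1 : (r + 1) ^ s ≤ r ^ (2 * s) := by
      rw [pow_mul]
      apply Nat.pow_le_pow_left
      nlinarith
    have h2 : 1 ≤ 4 ^ N := Nat.one_le_pow _ _ (by norm_num)
    have h3 : 4 ^ (N + 3 + 1) = 256 * 4 ^ N := by ring
    omega
  have hM := frac f p hp hP hP2 (256 * (N+3)^2) (Nat.mul_pos (by norm_num) (pow_pos (by omega) 2)) (fun m z b hb hz =>
    blocks S f hS z b hb hz (N+3) (by omega) hR)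
  have hMle : ((256 * (N+3)^2 : ℕ) : ℝ) ≤ 6400 * (s*L)^2 := by
    push_cast
    have : (N:ℝ) + 3 ≤ 5 * (s*L) := by linarith
    have : ((N:ℝ) + 3)^2 ≤ (5 * (s*L))^2 := by gcongr
    linarith
  have hM2 : ((256 * (N+3)^2 : ℕ) : ℝ)^2 ≤ (6400 * (s*L)^2)^2 := by gcongr
  have hinv : 1 / p ≤ 64 * 6400^2 * (s*L)^4 := by
    rw [div_le_iff₀ hp]
    nlinarith
  obtain ⟨H, hH, hc⟩ := hit f p hp hp1 hP z (by omega)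
  refine ⟨H, hH, hc.trans ?_⟩
  rw [hcs]
  have hlog : Real.log r ≤ L := by
    rw [hL, Real.logb, le_div_iff₀ (Real.log_pos (by norm_num))]
    have h1 : Real.log 2 ≤ 1 := by
      have := Real.log_le_sub_one_of_pos (show (0:ℝ) < 2 by norm_num)
      linarith
    have h2 : 0 ≤ Real.log r := Real.log_nonneg (by linarith)
    nlinarith
  have h1 : Real.log r / p ≤ L * (64 * 6400^2 * (s*L)^4) := by
    rw [div_eq_mul_one_div]
    gcongr
  have h2 : (1:ℝ) ≤ s^4 * L^5 := one_le_mul_of_one_le_of_one_le (one_le_pow₀ hs1R) (one_le_pow₀ hL1)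
  calc _ ≤ L * (64 * 6400^2 * (s*L)^4) + s^4 * L^5 := by linarith
    _ = _ := by ring

end HS


/-- For `f : {0,1}^n → S` with `|S| = s` and sparsity `r ≥ 2`, every `W(f,z)` has a
hitting set of size `≤ C·s⁴·(log₂ r)^5`, i.e. `HSC(f) = O(s⁴·(log r)^5)`. -/
theorem stmt3 :
    ∃ C : ℝ, 0 < C ∧
      ∀ (n s : ℕ) (S : Finset ℝ) (f : Finset (Fin n) → ℝ),
        S.card = s →
        (∀ x, f x ∈ S) →
        2 ≤ sparsity f →
        ∀ z : Finset (Fin n),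
          ∃ H : Finset (Fin n),
            (∀ w ∈ W f z, (H ∩ w).Nonempty) ∧
            (H.card : ℝ) ≤ C * (s : ℝ) ^ 4 * (Real.logb 2 (sparsity f)) ^ 5 := by
  refine ⟨64 * 6400^2 + 1, by norm_num, ?_⟩
  intro n s S f hs hS hr z
  exact HS.final n s S f hs hS hr z
end

section
/- There is an absolute constant C > 0 such that the following holds. Let f : {0,1}^n → {0,1} be a boolean function with sparsity spar(f) = r ≥ 2. Then MBS(f) ≤ C·(log₂ r)²; that is, for every z ∈ {0,1}^n and every collection of pairwise disjoint sets w_1, …, w_k ⊆ [n]∖z with f(z ∨ w_i) ≠ f(z) for all i ∈ [k], one has k ≤ C·(log₂ r)². -/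
open Finset in
lemma inv_sq_sum (d : ℕ) : ∑ i ∈ range d, 1 / ((i:ℝ)+1)^2 ≤ 2 := by
  have : ∑ i ∈ range (d+1), 1 / ((i:ℝ)+1)^2 ≤ 2 - 1/((d:ℝ)+1) := by
    induction d with
    | zero => norm_num
    | succ d ih =>
      rw [sum_range_succ]
      have : 1 / (((d+1:ℕ):ℝ)+1)^2 ≤ 1/((d:ℝ)+1) - 1/(((d+1:ℕ):ℝ)+1) := by
        push_cast
        rw [div_sub_div _ _ (by positivity) (by positivity), div_le_div_iff₀ (by positivity) (by positivity)]
        nlinarith [(Nat.cast_nonneg d : (0:ℝ) ≤ d)]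
      linarith
  rw [sum_range_succ] at this
  have h1 : 0 ≤ 1 / ((d:ℝ)+1)^2 := by positivity
  have h2 : 0 ≤ 1 / ((d:ℝ)+1) := by positivity
  linarith

open Finset in
lemma inv_sq_sum2 (d : ℕ) : ∑ j ∈ range (2*d+1), 1 / ((j:ℝ)-d)^2 ≤ 4 := by
  have : 2*d+1 = d + (1 + d) := by ring
  rw [this, sum_range_add, sum_range_add]
  have h1 : ∑ x ∈ range d, 1 / ((x:ℝ)-d)^2 = ∑ i ∈ range d, 1 / ((i:ℝ)+1)^2 := by
    rw [← sum_range_reflect]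
    refine sum_congr rfl fun j hj => ?_
    have hj := mem_range.1 hj
    have : ((d - 1 - j : ℕ):ℝ) = d - 1 - j := by
      rw [Nat.sub_sub, Nat.cast_sub (by omega)]; push_cast; ring
    rw [this]; congr 1; ring
  have h2 : ∑ x ∈ range d, 1 / (((d + (1 + x) : ℕ):ℝ)-d)^2 = ∑ i ∈ range d, 1 / ((i:ℝ)+1)^2 := by
    refine sum_congr rfl fun j hj => ?_
    push_cast; congr 1; ring
  rw [h1, h2]
  have := inv_sq_sum d
  simp only [range_one, sum_singleton, add_zero, sub_self]
  norm_num at this ⊢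
  linarith

open Polynomial Finset in
lemma univ_bound (P : ℝ[X]) (d m : ℕ) (hd : 1 ≤ d) (hP : P.natDegree ≤ d)
    (h01 : |P.eval 0 - P.eval 1| = 1)
    (hb : ∀ t : ℕ, t ≤ m → |P.eval (t:ℝ) - P.eval 1| ≤ 1) : m < 6 * d^2 := by
  by_contra hm
  push Not at hm
  obtain ⟨h, hh⟩ : (X - C (1:ℝ)) ∣ P - C (P.eval 1) := by
    rw [dvd_iff_isRoot]; simp
  have hev : ∀ x, P.eval x - P.eval 1 = (x - 1) * h.eval x := by
    intro x
    have := congrArg (eval x) hh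
    simpa using this
  have hdeg : h.natDegree < d := by
    by_cases h0 : h = 0
    · simp [h0]; omega
    have := congrArg natDegree hh
    rw [natDegree_sub_C, natDegree_mul (X_sub_C_ne_zero 1) h0, natDegree_X_sub_C] at this
    omega
  set H : ℝ[X] := h.comp (C 6 * (X - C (d:ℝ))^2) with hH
  have hHev : ∀ x, H.eval x = h.eval (6 * (x - d)^2) := by intro x; simp [hH]
  have hHdeg : H.natDegree < 2 * d := by
    have h1 : (C 6 * (X - C (d:ℝ))^2 : ℝ[X]).natDegree ≤ 2 := by
      refine (natDegree_C_mul_le _ _).trans ?_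
      refine natDegree_pow_le.trans ?_
      rw [natDegree_X_sub_C]
    have h2 := natDegree_comp_le (p := h) (q := (C 6 * (X - C (d:ℝ))^2 : ℝ[X]))
    have h3 : h.natDegree * (C 6 * (X - C (d:ℝ))^2 : ℝ[X]).natDegree ≤ h.natDegree * 2 :=
      Nat.mul_le_mul_left _ h1
    rw [← hH] at h2
    omega
  have hz := congrFun (Polynomial.fwdDiff_iter_eq_zero_of_degree_lt hHdeg) 0
  rw [fwdDiff_iter_eq_sum_shift] at hz
  have hHd : |H.eval (d:ℝ)| = 1 := by
    rw [hHev]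
    have := hev 0
    rw [this] at h01
    simpa using h01
  have hHj : ∀ j ∈ range (2*d+1), j ≠ d → |H.eval (j:ℝ)| ≤ (1/5) * (1 / ((j:ℝ)-d)^2) := by
    intro j hj hjd
    have hj := mem_range.1 hj
    obtain ⟨e, he, he1, hed⟩ : ∃ e : ℕ, ((j:ℝ)-d)^2 = (e:ℝ)^2 ∧ 1 ≤ e ∧ e ≤ d := by
      rcases le_total j d with hle | hle
      · refine ⟨d - j, ?_, by omega, by omega⟩
        rw [Nat.cast_sub hle]; ring
      · refine ⟨j - d, ?_, by omega, by omega⟩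
        rw [Nat.cast_sub hle]
    rw [hHev, he]
    have hle : 6 * e^2 ≤ m := le_trans (Nat.mul_le_mul_left _ (Nat.pow_le_pow_left hed 2)) hm
    have h1 := hb _ hle
    rw [hev] at h1
    push_cast at h1
    have he' : (1:ℝ) ≤ (e:ℝ)^2 := by exact_mod_cast Nat.one_le_pow 2 e he1
    rw [abs_mul, abs_of_nonneg (by linarith)] at h1
    have h2 := abs_nonneg (eval (6 * (e:ℝ) ^ 2) h)
    rw [← div_eq_mul_one_div, le_div_iff₀ (by positivity)]
    nlinarith
  have hc : (0:ℝ) < (Nat.centralBinom d : ℝ) := by exact_mod_cast Nat.centralBinom_pos d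
  have hdm : d ∈ range (2*d+1) := by simp; omega
  rw [← add_sum_erase _ _ hdm] at hz
  have key : (Nat.centralBinom d : ℝ) ≤
      ∑ j ∈ (range (2*d+1)).erase d, (Nat.centralBinom d : ℝ) * ((1/5) * (1 / ((j:ℝ)-d)^2)) := by
    have e1 := eq_neg_of_add_eq_zero_left hz
    have e2 := congrArg abs e1
    rw [abs_neg] at e2
    have e3 : |((-1 : ℤ) ^ (2 * d - d) * ((2 * d).choose d : ℤ)) • eval (0 + d • (1:ℝ)) H| = Nat.centralBinom d := by
      rw [zsmul_eq_mul, abs_mul]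
      simp [hHd, abs_mul, Nat.centralBinom]
    rw [← e3]
    refine e2.le.trans ((abs_sum_le_sum_abs _ _).trans (sum_le_sum fun j hj => ?_))
    rw [zsmul_eq_mul, abs_mul]
    obtain ⟨hj1, hj2⟩ := mem_erase.1 hj
    have := hHj j hj2 hj1
    rw [e3]
    refine mul_le_mul ?_ (by simpa using this) (abs_nonneg _) hc.le
    simp [abs_mul]
    exact_mod_cast Nat.choose_le_centralBinom j d
  rw [← mul_sum, ← mul_sum] at key
  have h4 : ∑ j ∈ (range (2*d+1)).erase d, 1 / ((j:ℝ)-d)^2 ≤ 4 :=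
    (sum_le_sum_of_subset_of_nonneg (erase_subset _ _) (fun _ _ _ => by positivity)).trans
      (inv_sq_sum2 d)
  nlinarith

open Finset in
lemma card_supersets {α : Type*} [DecidableEq α] (R s : Finset α) (hs : s ⊆ R) (t : ℕ) :
    (((R.powersetCard t).filter (fun S => s ⊆ S)).card : ℝ) = R.card.choose t * (t.choose s.card / R.card.choose s.card) := by
  have hsc := card_le_card hs
  have hpos : (0:ℝ) < R.card.choose s.card := by exact_mod_cast Nat.choose_pos hsc
  rcases lt_or_ge t s.card with h | h
  · rw [Nat.choose_eq_zero_of_lt h]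
    simp only [Nat.cast_zero, zero_div, mul_zero, Nat.cast_eq_zero, card_eq_zero]
    rw [filter_eq_empty_iff]
    intro S hS hsS
    have := card_le_card hsS
    rw [(mem_powersetCard.1 hS).2] at this
    omega
  have : ((R.powersetCard t).filter (fun S => s ⊆ S)).card = ((R \ s).powersetCard (t - s.card)).card := by
    refine card_bij' (fun S _ => S \ s) (fun S _ => S ∪ s) ?_ ?_ ?_ ?_
    · intro S hS
      simp only [mem_filter, mem_powersetCard] at hS ⊢
      exact ⟨sdiff_subset_sdiff hS.1.1 le_rfl, by rw [card_sdiff_of_subset hS.2, hS.1.2]⟩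
    · intro S hS
      simp only [mem_filter, mem_powersetCard] at hS ⊢
      refine ⟨⟨union_subset (hS.1.trans sdiff_subset) hs, ?_⟩, subset_union_right⟩
      rw [card_union_of_disjoint (disjoint_of_subset_left hS.1 sdiff_disjoint), hS.2]; omega
    · intro S hS
      simp only [mem_filter, mem_powersetCard] at hS
      exact sdiff_union_of_subset hS.2
    · intro S hS
      simp only [mem_powersetCard] at hS
      exact union_sdiff_cancel_right (disjoint_of_subset_left hS.1 sdiff_disjoint)
  rw [this, card_powersetCard, card_sdiff_of_subset hs, ← mul_div_assoc, eq_div_iff hpos.ne']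
  have := Nat.choose_mul (n := R.card) h
  rw [mul_comm]
  exact_mod_cast this.symm

open Finset Polynomial in
lemma sym_bound {α ι : Type*} [DecidableEq ι] (A : Finset α) (c : α → ℝ) (τ : α → Finset ι)
    (g : Finset ι → ℝ) (hg : ∀ T, g T = ∑ a ∈ A, if τ a ⊆ T then c a else 0)
    (h01 : ∀ T, g T = 0 ∨ g T = 1) (hne : ∀ i, g {i} ≠ g ∅) (R : Finset ι) (d : ℕ) (hd : 1 ≤ d)
    (hR : ∀ a ∈ A, τ a ⊆ R → (τ a).card ≤ d) : R.card < 6 * d^2 := by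
  rcases R.eq_empty_or_nonempty with rfl | hRne
  · have : 0 < d^2 := by positivity
    simp; omega
  set m := R.card with hm
  have hm1 : 1 ≤ m := hRne.card_pos
  let P : ℝ[X] := ∑ a ∈ A with τ a ⊆ R,
    C (c a / (m.choose (τ a).card * (τ a).card.factorial)) * descPochhammer ℝ (τ a).card
  have hPdeg : P.natDegree ≤ d := by
    refine natDegree_sum_le_of_forall_le _ _ fun a ha => ?_
    obtain ⟨ha, haR⟩ := mem_filter.1 ha
    refine (natDegree_C_mul_le _ _).trans ?_
    rw [descPochhammer_natDegree]
    exact hR a ha haR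
  have hPev : ∀ t : ℕ, ∑ S ∈ R.powersetCard t, g S = m.choose t * P.eval (t:ℝ) := by
    intro t
    simp_rw [hg]
    rw [sum_comm, eval_finsetSum, mul_sum, sum_filter]
    refine sum_congr rfl fun a ha => ?_
    rw [← sum_filter, sum_const, nsmul_eq_mul]
    split_ifs with haR
    · rw [card_supersets R _ haR, ← hm]
      rw [eval_mul, eval_C, descPochhammer_eval_eq_descFactorial, Nat.descFactorial_eq_factorial_mul_choose]
      have : (0:ℝ) < (τ a).card.factorial := by exact_mod_cast Nat.factorial_pos _
      have : (0:ℝ) < m.choose (τ a).card := by exact_mod_cast Nat.choose_pos (card_le_card haR)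
      push_cast
      field_simp
    · rw [filter_eq_empty_iff.2]
      · simp
      · intro S hS h
        exact haR (h.trans (mem_powersetCard.1 hS).1)
  have hP0 : P.eval 0 = g ∅ := by simpa using (hPev 0).symm
  have hgi : ∀ i, g {i} = 1 - g ∅ := by
    intro i
    have := hne i
    rcases h01 {i} with h | h <;> rcases h01 ∅ with h' | h' <;> simp_all
  have hP1 : P.eval 1 = 1 - g ∅ := by
    have := hPev 1
    rw [powersetCard_one, sum_map] at this
    have hmp : (0:ℝ) < m := by exact_mod_cast hm1
    simp only [Function.Embedding.coeFn_mk, hgi, sum_const, nsmul_eq_mul, Nat.choose_one_right,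
      Nat.cast_one, ← hm] at this
    exact (mul_left_cancel₀ hmp.ne' this).symm
  have hPt : ∀ t : ℕ, t ≤ m → 0 ≤ P.eval (t:ℝ) ∧ P.eval (t:ℝ) ≤ 1 := by
    intro t ht
    have hpos : (0:ℝ) < m.choose t := by exact_mod_cast Nat.choose_pos ht
    have h1 : 0 ≤ ∑ S ∈ R.powersetCard t, g S := sum_nonneg fun S _ => by
      rcases h01 S with h | h <;> simp [h]
    have h2 : ∑ S ∈ R.powersetCard t, g S ≤ ∑ S ∈ R.powersetCard t, 1 := sum_le_sum fun S _ => by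
      rcases h01 S with h | h <;> simp [h]
    rw [sum_const, card_powersetCard, nsmul_eq_mul, ← hm] at h2
    rw [hPev] at h1 h2
    exact ⟨nonneg_of_mul_nonneg_right h1 hpos, le_of_mul_le_mul_left h2 hpos⟩
  refine univ_bound P d m hd hPdeg ?_ ?_
  · rw [hP0, hP1]
    rcases h01 ∅ with h | h <;> simp [h]
  · intro t ht
    obtain ⟨h1, h2⟩ := hPt t ht
    rw [hP1]
    rcases h01 ∅ with h | h <;> rw [h, abs_le] <;> constructor <;> linarith

open Finset in
lemma exists_R {α : Type*} {k : ℕ} (A : Finset α) (τ : α → Finset (Fin k)) (d : ℕ) (hA : A.card < 2^d) :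
    ∃ R : Finset (Fin k), k ≤ 2 * R.card ∧ ∀ a ∈ A, τ a ⊆ R → (τ a).card ≤ d := by
  classical
  by_contra hcon
  push Not at hcon
  let B : Finset (Finset (Fin k)) := univ.filter fun R => k ≤ 2 * R.card
  have h1 : B ⊆ (A.filter fun a => d < (τ a).card).biUnion fun a => Icc (τ a) univ := by
    intro R hR
    obtain ⟨a, ha, haR, hc⟩ := hcon R (mem_filter.1 hR).2
    exact mem_biUnion.2 ⟨a, mem_filter.2 ⟨ha, hc⟩, by simpa using haR⟩
  have h2 : B.card * 2 ^ (d+1) ≤ A.card * 2 ^ k := by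
    calc B.card * 2 ^ (d+1) ≤ (∑ a ∈ A.filter (fun a => d < (τ a).card), (Icc (τ a) univ).card) * 2^(d+1) :=
          Nat.mul_le_mul_right _ ((card_le_card h1).trans card_biUnion_le)
      _ = ∑ a ∈ A.filter (fun a => d < (τ a).card), (Icc (τ a) univ).card * 2^(d+1) := sum_mul _ _ _
      _ ≤ ∑ a ∈ A.filter (fun a => d < (τ a).card), 2^k := by
          refine sum_le_sum fun a ha => ?_
          have hc := (mem_filter.1 ha).2
          have hk : (τ a).card ≤ k := by simpa using card_le_univ (τ a)
          rw [card_Icc_finset (subset_univ _), card_univ, Fintype.card_fin, ← pow_add]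
          exact Nat.pow_le_pow_right (by norm_num) (by omega)
      _ ≤ A.card * 2^k := by
          rw [sum_const, smul_eq_mul]
          exact Nat.mul_le_mul_right _ (card_filter_le _ _)
  have h3 : 2 ^ k ≤ 2 * B.card := by
    have hu : (univ : Finset (Finset (Fin k))) ⊆ B ∪ B.image compl := by
      intro R _
      rw [mem_union]
      by_cases h : k ≤ 2 * R.card
      · left; simp [B, h]
      · right
        refine mem_image.2 ⟨Rᶜ, ?_, compl_compl R⟩
        simp only [B, mem_filter, mem_univ, true_and, card_compl, Fintype.card_fin]
        omega
    have := card_le_card hu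
    rw [card_univ, Fintype.card_finset, Fintype.card_fin] at this
    have h5 := card_union_le B (B.image compl)
    have h6 : (B.image compl).card ≤ B.card := card_image_le
    omega
  have h4 : 0 < 2^k := by positivity
  rw [pow_succ] at h2
  nlinarith [Nat.mul_lt_mul_of_pos_right hA h4]

open Finset in
lemma moebius {n : ℕ} (f : Finset (Fin n) → ℝ) (x : Finset (Fin n)) :
    f x = ∑ s, if s ⊆ x then coeff f s else 0 := by
  have hin : ∀ t ⊆ x, ∑ s ∈ x.powerset with t ⊆ s, (-1 : ℝ) ^ (s.card - t.card) = if t = x then 1 else 0 := by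
    intro t ht
    have h1 : ∑ s ∈ x.powerset with t ⊆ s, (-1 : ℝ) ^ (s.card - t.card)
        = ∑ u ∈ (x \ t).powerset, (-1 : ℝ) ^ u.card := by
      refine sum_bij' (fun S _ => S \ t) (fun S _ => S ∪ t) ?_ ?_ ?_ ?_ ?_
      · intro S hS
        simp only [mem_filter, mem_powerset] at hS ⊢
        exact sdiff_subset_sdiff hS.1 le_rfl
      · intro S hS
        simp only [mem_filter, mem_powerset] at hS ⊢
        exact ⟨union_subset (hS.trans sdiff_subset) ht, subset_union_right⟩
      · intro S hS
        simp only [mem_filter, mem_powerset] at hS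
        exact sdiff_union_of_subset hS.2
      · intro S hS
        simp only [mem_powerset] at hS
        exact union_sdiff_cancel_right (disjoint_of_subset_left hS sdiff_disjoint)
      · intro S hS
        simp only [mem_filter, mem_powerset] at hS
        rw [card_sdiff_of_subset hS.2]
    have h2 := congrArg (Int.cast : ℤ → ℝ) (sum_powerset_neg_one_pow_card (x := x \ t))
    push_cast at h2
    rw [h1, h2]
    have : x \ t = ∅ ↔ t = x := by
      rw [sdiff_eq_empty_iff_subset]
      exact ⟨fun h => Subset.antisymm ht h, fun h => h ▸ Subset.refl _⟩
    simp [this]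
  symm
  calc ∑ s, (if s ⊆ x then coeff f s else 0) = ∑ s ∈ x.powerset, coeff f s := by
        rw [← sum_filter]; congr 1; ext; simp
    _ = ∑ s ∈ x.powerset, ∑ t ∈ x.powerset, if t ⊆ s then (-1 : ℝ) ^ (s.card - t.card) * f t else 0 := by
        refine sum_congr rfl fun s hs => ?_
        rw [coeff, ← sum_filter]
        congr 1
        ext t
        simp only [mem_powerset, mem_filter] at hs ⊢
        exact ⟨fun h => ⟨h.trans hs, h⟩, fun h => h.2⟩
    _ = ∑ t ∈ x.powerset, (if t = x then 1 else 0) * f t := by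
        rw [sum_comm]
        refine sum_congr rfl fun t ht => ?_
        rw [← hin t (mem_powerset.1 ht), sum_mul, sum_filter]
    _ = f x := by simp

/-- `MBS(f) = O((log₂ spar f)²)` for boolean functions: any pairwise disjoint collection
`w_1, …, w_k ⊆ [n]∖z` with `f(z ∨ w_i) ≠ f(z)` has `k ≤ C·(log₂ r)²`. -/
theorem stmt5 :
    ∃ C : ℝ, 0 < C ∧
      ∀ (n : ℕ) (f : Finset (Fin n) → ℝ),
        (∀ x, f x = 0 ∨ f x = 1) →
        2 ≤ sparsity f →
        ∀ (z : Finset (Fin n)) (k : ℕ) (w : Fin k → Finset (Fin n)),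
          (∀ i, w i ∈ W f z) →
          (∀ i j, i ≠ j → Disjoint (w i) (w j)) →
          (k : ℝ) ≤ C * (Real.logb 2 (sparsity f)) ^ 2 := by
  refine ⟨48, by norm_num, ?_⟩
  intro n f h01 hr z k w hw hdisj
  classical
  set r := sparsity f with hrdef
  set d := Nat.log 2 r + 1 with hd
  let A0 : Finset (Finset (Fin n)) := Finset.univ.filter fun s => coeff f s ≠ 0
  have hA0 : A0.card = r := by
    rw [hrdef, sparsity, ← Set.ncard_coe_finset]
    congr 1; ext s; simp [A0]
  let A := A0.filter fun s => s ⊆ z ∪ Finset.univ.biUnion w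
  have hA : A.card < 2 ^ d :=
    ((Finset.card_filter_le _ _).trans hA0.le).trans_lt (Nat.lt_pow_succ_log_self (by norm_num) r)
  let τ : Finset (Fin n) → Finset (Fin k) := fun s => Finset.univ.filter fun i => ∃ x ∈ s, x ∈ w i
  let g : Finset (Fin k) → ℝ := fun T => f (z ∪ T.biUnion w)
  have hg : ∀ T, g T = ∑ a ∈ A, if τ a ⊆ T then coeff f a else 0 := by
    intro T
    simp only [g]
    rw [moebius f]
    simp only [A, A0]
    rw [Finset.filter_filter, Finset.sum_filter]
    refine Finset.sum_congr rfl fun s _ => ?_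
    have hiff : s ⊆ z ∪ T.biUnion w ↔ s ⊆ z ∪ Finset.univ.biUnion w ∧ τ s ⊆ T := by
      constructor
      · intro h
        refine ⟨h.trans (Finset.union_subset_union_right
          (Finset.biUnion_subset_biUnion_of_subset_left _ (Finset.subset_univ _))), ?_⟩
        intro i hi
        obtain ⟨x, hxs, hxi⟩ := (Finset.mem_filter.1 hi).2
        rcases Finset.mem_union.1 (h hxs) with hz | hT
        · exact absurd hz (Finset.mem_compl.1 ((hw i).1 hxi))
        · obtain ⟨j, hjT, hxj⟩ := Finset.mem_biUnion.1 hT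
          by_cases hij : i = j
          · exact hij ▸ hjT
          · exact absurd hxj (Finset.disjoint_left.1 (hdisj i j hij) hxi)
      · rintro ⟨h1, h2⟩ x hx
        rcases Finset.mem_union.1 (h1 hx) with hz | hT
        · exact Finset.mem_union_left _ hz
        · obtain ⟨j, -, hxj⟩ := Finset.mem_biUnion.1 hT
          refine Finset.mem_union_right _ (Finset.mem_biUnion.2 ⟨j, h2 ?_, hxj⟩)
          exact Finset.mem_filter.2 ⟨Finset.mem_univ _, x, hx, hxj⟩
    by_cases hc : coeff f s = 0
    · simp [hc]
    · by_cases h1 : s ⊆ z ∪ Finset.univ.biUnion w <;> by_cases h2 : τ s ⊆ T <;> simp [hiff, hc, h1, h2]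
  obtain ⟨R, hkR, hR⟩ := exists_R A τ d hA
  have hb := sym_bound A (coeff f) τ g hg (fun T => h01 _)
    (fun i => by simpa [g] using (hw i).2) R d (by omega) hR
  have hk : k ≤ 12 * d^2 := by omega
  have hl : (Nat.log 2 r : ℝ) ≤ Real.logb 2 r := by
    simpa using Real.natLog_le_logb r 2
  have hl1 : (1:ℝ) ≤ Real.logb 2 r := by
    rw [Real.le_logb_iff_rpow_le (by norm_num) (by positivity)]
    simpa using (by exact_mod_cast hr : (2:ℝ) ≤ r)
  have hdl : (d:ℝ) ≤ 2 * Real.logb 2 r := by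
    rw [hd]; push_cast; linarith
  have hk' : (k:ℝ) ≤ 12 * (d:ℝ)^2 := by exact_mod_cast hk
  have hd0 : (0:ℝ) ≤ d := Nat.cast_nonneg _
  nlinarith
end

section
/- There is an absolute constant c > 0 such that the following holds. Let f : {0,1}^n → ℝ, let z ∈ {0,1}^n, let p ∈ (0,1], and suppose there exists a p-smooth probability distribution D supported on W(f,z) = {w ⊆ [n]∖z : f(z ∨ w) ≠ f(z)}. Then MBS(f) ≥ c/√p. Equivalently, FMBS(f) = O(MBS(f)²). -/
def Feas {n : ℕ} (f : Finset (Fin n) → ℝ) (z : Finset (Fin n)) (p : ℝ) : Prop :=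
  ∃ D : Finset (Fin n) → ℝ,
          (∀ w, 0 ≤ D w) ∧
          (∑ w : Finset (Fin n), D w) = 1 ∧
          (∀ w, D w ≠ 0 → w ∈ W f z) ∧
          (∀ i : Fin n, (∑ w ∈ Finset.univ.filter (fun w : Finset (Fin n) => i ∈ w), D w) ≤ p)

open Classical in
lemma bad_bound {n : ℕ} (f : Finset (Fin n) → ℝ) (z : Finset (Fin n)) {Ω : Type} [Fintype Ω]
    (P : Ω → ℝ) (hP : ∀ ω, 0 ≤ P ω) (u : Ω → Finset (Fin n)) (r q : ℝ) (hr : 0 ≤ r) (hq : 0 < q)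
    (h : ∀ x, ∑ ω, (if x ∈ u ω then P ω else 0) ≤ r) (hn : ¬ Feas f z q) :
    ∑ ω, (if f (z ∪ u ω) ≠ f z then P ω else 0) ≤ r / q := by
  by_contra hlt
  push Not at hlt
  set δ := ∑ ω, (if f (z ∪ u ω) ≠ f z then P ω else 0) with hδ
  have hδ0 : 0 < δ := lt_of_le_of_lt (by positivity) hlt
  apply hn
  refine ⟨fun w => (∑ ω, (if u ω \ z = w then (if f (z ∪ u ω) ≠ f z then P ω else 0) else 0)) / δ,
    ?_, ?_, ?_, ?_⟩
  · intro w
    apply div_nonneg _ hδ0.le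
    apply Finset.sum_nonneg
    intro ω _
    split_ifs <;> simp [hP]
  · rw [← Finset.sum_div, Finset.sum_comm]
    simp only [Finset.sum_ite_eq, Finset.mem_univ, if_true]
    exact div_self hδ0.ne'
  · intro w hw
    have h1 : (∑ ω, (if u ω \ z = w then (if f (z ∪ u ω) ≠ f z then P ω else 0) else 0)) ≠ 0 := by
      intro h0
      apply hw
      simp only [h0, zero_div]
    obtain ⟨ω, _, hω⟩ := Finset.exists_ne_zero_of_sum_ne_zero h1
    split_ifs at hω with h2 h3
    · subst h2
      refine ⟨?_, ?_⟩
      · intro x hx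
        simp at hx ⊢
        exact hx.2
      · rwa [Finset.union_sdiff_self_eq_union]
    · exact absurd rfl hω
    · exact absurd rfl hω
  · intro x
    rw [← Finset.sum_div, div_le_iff₀ hδ0, Finset.sum_comm]
    have h2 : r ≤ q * δ := by
      rw [div_lt_iff₀ hq] at hlt
      linarith
    refine le_trans ?_ ((h x).trans h2)
    apply Finset.sum_le_sum
    intro ω _
    rw [Finset.sum_ite_eq]
    have := hP ω
    simp only [Finset.mem_filter, Finset.mem_univ, true_and, Finset.mem_sdiff]
    split_ifs <;> first | exact le_rfl | assumption | tauto

def UU {n k : ℕ} (ω : Fin k → Finset (Fin n)) : Finset (Fin n) :=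
  Finset.univ.filter (fun x => ∃ a b, a ≠ b ∧ x ∈ ω a ∧ x ∈ ω b)

lemma UU_insert {n k : ℕ} (i : Fin (k+1)) (w : Finset (Fin n)) (ω : Fin k → Finset (Fin n)) :
    w ∪ UU (Fin.insertNth (α := fun _ => Finset (Fin n)) i w ω) = w ∪ UU ω := by
  ext x
  by_cases hx : x ∈ w
  · simp [hx]
  · simp only [Finset.mem_union, hx, false_or, UU, Finset.mem_filter, Finset.mem_univ, true_and]
    constructor
    · rintro ⟨a, b, hab, ha, hb⟩
      rcases Fin.eq_self_or_eq_succAbove i a with rfl | ⟨a, rfl⟩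
      · simp at ha
        exact absurd ha hx
      rcases Fin.eq_self_or_eq_succAbove i b with rfl | ⟨b, rfl⟩
      · simp at hb
        exact absurd hb hx
      · simp at ha hb
        exact ⟨a, b, fun h => hab (by rw [h]), ha, hb⟩
    · rintro ⟨a, b, hab, ha, hb⟩
      refine ⟨i.succAbove a, i.succAbove b, ?_, by simpa using ha, by simpa using hb⟩
      simpa using hab

lemma sum_prod_one {α : Type} [Fintype α] (D : α → ℝ) (h1 : ∑ w, D w = 1) (k : ℕ) :
    ∑ ω : Fin k → α, ∏ j, D (ω j) = 1 := by
  classical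
  have := (Finset.prod_univ_sum (fun _ : Fin k => (Finset.univ : Finset α)) (fun _ w => D w)).symm
  simpa [h1] using this

open Classical in
lemma pair_bound {n : ℕ} (D : Finset (Fin n) → ℝ) (h0 : ∀ w, 0 ≤ D w)
    (h1 : ∑ w, D w = 1) (p : ℝ) (x : Fin n)
    (hp : ∑ w ∈ Finset.univ.filter (fun w : Finset (Fin n) => x ∈ w), D w ≤ p) (k : ℕ)
    (a b : Fin k) (hab : a ≠ b) :
    ∑ ω : Fin k → Finset (Fin n), (if x ∈ ω a ∧ x ∈ ω b then ∏ j, D (ω j) else 0) ≤ p ^ 2 := by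
  have e := (Finset.prod_univ_sum (fun _ : Fin k => (Finset.univ : Finset (Finset (Fin n))))
    (fun j w => if j = a ∨ j = b then (if x ∈ w then D w else 0) else D w))
  have e2 : ∀ ω : Fin k → Finset (Fin n), (if x ∈ ω a ∧ x ∈ ω b then ∏ j, D (ω j) else 0)
      = ∏ j, (if j = a ∨ j = b then (if x ∈ ω j then D (ω j) else 0) else D (ω j)) := by
    intro ω
    split_ifs with h
    · apply Finset.prod_congr rfl
      intro j _
      split_ifs with h2 h3
      · rfl
      · rcases h2 with rfl | rfl
        · exact absurd h.1 h3
        · exact absurd h.2 h3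
      · rfl
    · symm
      by_cases ha : x ∈ ω a
      · have hb : x ∉ ω b := fun hb => h ⟨ha, hb⟩
        exact Finset.prod_eq_zero (Finset.mem_univ b) (by simp [hb])
      · exact Finset.prod_eq_zero (Finset.mem_univ a) (by simp [ha])
  rw [Finset.sum_congr rfl (fun ω _ => e2 ω)]
  rw [Fintype.piFinset_univ] at e
  rw [← e]
  set s := ∑ w ∈ Finset.univ.filter (fun w : Finset (Fin n) => x ∈ w), D w with hs
  have hs0 : 0 ≤ s := Finset.sum_nonneg (fun w _ => h0 w)
  have e3 : ∀ j : Fin k, (∑ w : Finset (Fin n),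
      if j = a ∨ j = b then (if x ∈ w then D w else 0) else D w)
      = (if j = a then s else 1) * (if j = b then s else 1) := by
    intro j
    by_cases ha : j = a
    · have hb : j ≠ b := fun hb => hab (ha ▸ hb)
      simp [ha, hab, hs, Finset.sum_filter]
    · by_cases hb : j = b
      · simp [hb, hab.symm, hs, Finset.sum_filter]
      · simp [ha, hb, h1]
  rw [Finset.prod_congr rfl (fun j _ => e3 j), Finset.prod_mul_distrib]
  simp only [Finset.prod_ite_eq', Finset.mem_univ, if_true]
  nlinarith

open Classical in
lemma UU_bound {n : ℕ} (D : Finset (Fin n) → ℝ) (h0 : ∀ w, 0 ≤ D w)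
    (h1 : ∑ w, D w = 1) (p : ℝ) (x : Fin n)
    (hp : ∑ w ∈ Finset.univ.filter (fun w : Finset (Fin n) => x ∈ w), D w ≤ p) (k : ℕ) :
    ∑ ω : Fin k → Finset (Fin n), (if x ∈ UU ω then ∏ j, D (ω j) else 0) ≤ k ^ 2 * p ^ 2 := by
  have hP : ∀ ω : Fin k → Finset (Fin n), 0 ≤ ∏ j, D (ω j) :=
    fun ω => Finset.prod_nonneg (fun j _ => h0 _)
  calc _ ≤ ∑ ω : Fin k → Finset (Fin n), ∑ ab : Fin k × Fin k,
        (if ab.1 ≠ ab.2 then (if x ∈ ω ab.1 ∧ x ∈ ω ab.2 then ∏ j, D (ω j) else 0) else 0) := by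
        apply Finset.sum_le_sum
        intro ω _
        have hnn : ∀ ab ∈ (Finset.univ : Finset (Fin k × Fin k)), 0 ≤ (if ab.1 ≠ ab.2 then
          (if x ∈ ω ab.1 ∧ x ∈ ω ab.2 then ∏ j, D (ω j) else 0) else 0) := by
          intro ab _
          have := hP ω
          split_ifs <;> first | exact le_rfl | assumption
        split_ifs with h
        · simp only [UU, Finset.mem_filter, Finset.mem_univ, true_and] at h
          obtain ⟨a, b, hab, ha, hb⟩ := h
          have := Finset.single_le_sum hnn (Finset.mem_univ (a, b))
          simpa [hab, ha, hb] using this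
        · exact Finset.sum_nonneg hnn
    _ = ∑ ab : Fin k × Fin k, ∑ ω : Fin k → Finset (Fin n),
        (if ab.1 ≠ ab.2 then (if x ∈ ω ab.1 ∧ x ∈ ω ab.2 then ∏ j, D (ω j) else 0) else 0) :=
        Finset.sum_comm
    _ ≤ ∑ ab : Fin k × Fin k, p ^ 2 := by
        apply Finset.sum_le_sum
        rintro ⟨a, b⟩ _
        by_cases hab : a = b
        · simp [hab]
          positivity
        · simp only [ne_eq, hab, not_false_eq_true, if_true]
          exact pair_bound D h0 h1 p x hp k a b hab
    _ = k ^ 2 * p ^ 2 := by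
        simp only [Finset.sum_const, Finset.card_univ, Fintype.card_prod, Fintype.card_fin,
          nsmul_eq_mul]
        push_cast
        ring

open Classical in
lemma cond_bound {n : ℕ} (f : Finset (Fin n) → ℝ) (z : Finset (Fin n))
    (D : Finset (Fin n) → ℝ) (h0 : ∀ w, 0 ≤ D w)
    (h1 : ∑ w, D w = 1) (p q : ℝ) (hq : 0 < q)
    (hp : ∀ x, ∑ w ∈ Finset.univ.filter (fun w : Finset (Fin n) => x ∈ w), D w ≤ p)
    (hn : ∀ z, ¬ Feas f z q) (k : ℕ) (i : Fin (k + 1)) :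
    ∑ ω : Fin (k + 1) → Finset (Fin n),
      (if f ((z ∪ ω i) ∪ UU ω) ≠ f (z ∪ ω i) then ∏ j, D (ω j) else 0) ≤ k ^ 2 * p ^ 2 / q := by
  rw [← (Fin.insertNthEquiv (fun _ => Finset (Fin n)) i).sum_comp, Fintype.sum_prod_type]
  have key : ∀ w : Finset (Fin n), ∑ ω : Fin k → Finset (Fin n),
      (if f ((z ∪ w) ∪ UU ω) ≠ f (z ∪ w) then ∏ j, D (ω j) else 0) ≤ k ^ 2 * p ^ 2 / q := by
    intro w
    exact bad_bound f (z ∪ w) (fun ω : Fin k → Finset (Fin n) => ∏ j, D (ω j))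
      (fun ω => Finset.prod_nonneg (fun j _ => h0 _)) UU _ q (by positivity) hq
      (fun x => UU_bound D h0 h1 p x (hp x) k) (hn _)
  calc _ = ∑ w, D w * ∑ ω : Fin k → Finset (Fin n),
      (if f ((z ∪ w) ∪ UU ω) ≠ f (z ∪ w) then ∏ j, D (ω j) else 0) := by
        apply Finset.sum_congr rfl
        intro w _
        rw [Finset.mul_sum]
        apply Finset.sum_congr rfl
        intro ω _
        have hU : w ∪ UU ((Fin.insertNthEquiv (fun _ => Finset (Fin n)) i) (w, ω)) = w ∪ UU ω :=
          UU_insert i w ω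
        simp only [Finset.union_assoc, hU]
        simp only [Fin.insertNthEquiv_apply, Fin.insertNth_apply_same, Finset.union_assoc,
          hU, mul_ite, mul_zero, Fin.prod_univ_succAbove _ i,
          Fin.insertNth_apply_succAbove]
    _ ≤ ∑ w, D w * (k ^ 2 * p ^ 2 / q) :=
        Finset.sum_le_sum (fun w _ => mul_le_mul_of_nonneg_left (key w) (h0 w))
    _ = _ := by rw [← Finset.sum_mul, h1, one_mul]

lemma feas_lower {n : ℕ} (f : Finset (Fin n) → ℝ) (z : Finset (Fin n)) (p : ℝ)
    (h : Feas f z p) : 1 ≤ n * p := by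
  obtain ⟨D, h0, h1, h2, h3⟩ := h
  have : ∑ i : Fin n, ∑ w ∈ Finset.univ.filter (fun w : Finset (Fin n) => i ∈ w), D w
      ≤ ∑ i : Fin n, p := Finset.sum_le_sum (fun i _ => h3 i)
  simp only [Finset.sum_const, Finset.card_univ, Fintype.card_fin, nsmul_eq_mul] at this
  refine le_trans ?_ this
  simp only [Finset.sum_filter]
  rw [Finset.sum_comm, ← h1]
  apply Finset.sum_le_sum
  intro w _
  by_cases hw : D w = 0
  · simp [hw]
  · have hne : w.Nonempty := by
      rw [Finset.nonempty_iff_ne_empty]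
      rintro rfl
      exact (h2 _ hw).2 (by simp)
    obtain ⟨x, hx⟩ := hne
    have := Finset.single_le_sum (f := fun i => if i ∈ w then D w else 0)
      (fun i _ => by split_ifs <;> simp [h0]) (Finset.mem_univ x)
    simpa [hx] using this

lemma exists_opt {n : ℕ} (f : Finset (Fin n) → ℝ) (z : Finset (Fin n)) (p : ℝ) (hp : 0 < p)
    (h : Feas f z p) : ∃ (z0 : Finset (Fin n)) (p0 : ℝ), 0 < p0 ∧ p0 ≤ p ∧ Feas f z0 p0 ∧
      ∀ z', ¬ Feas f z' (p0 / 2) := by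
  by_contra hc
  push Not at hc
  have hall : ∀ m : ℕ, ∃ z', Feas f z' (p / 2 ^ m) := by
    intro m
    induction m with
    | zero => exact ⟨z, by simpa using h⟩
    | succ m ih =>
      obtain ⟨z1, hz1⟩ := ih
      obtain ⟨z2, hz2⟩ := hc z1 (p / 2 ^ m) (by positivity)
        (div_le_self hp.le (one_le_pow₀ (by norm_num))) hz1
      refine ⟨z2, ?_⟩
      rwa [pow_succ, ← div_div]
  obtain ⟨m, hm⟩ := pow_unbounded_of_one_lt (n * p) (by norm_num : (1 : ℝ) < 2)
  obtain ⟨z', hz'⟩ := hall m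
  have := feas_lower f z' _ hz'
  rw [← mul_div_assoc, le_div_iff₀ (by positivity)] at this
  linarith

open Classical in
lemma main_step {n : ℕ} (f : Finset (Fin n) → ℝ) (z : Finset (Fin n)) (p : ℝ) (hp : 0 < p)
    (h : Feas f z p) (hn : ∀ z', ¬ Feas f z' (p / 2)) (k : ℕ)
    (hk : ((k : ℝ) + 1) ^ 2 * p ≤ 1 / 9) :
    ∃ (z' : Finset (Fin n)) (m : ℕ) (w : Fin m → Finset (Fin n)),
          (∀ i, w i ∈ W f z') ∧
          (∀ i j, i ≠ j → Disjoint (w i) (w j)) ∧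
          ((k : ℝ) + 1) / 2 ≤ (m : ℝ) := by
  obtain ⟨D, h0, h1, h2, h3⟩ := h
  have hq : 0 < p / 2 := by positivity
  set P : (Fin (k + 1) → Finset (Fin n)) → ℝ := fun ω => ∏ j, D (ω j) with hPdef
  have hP : ∀ ω, 0 ≤ P ω := fun ω => Finset.prod_nonneg (fun j _ => h0 _)
  have hP1 : ∑ ω, P ω = 1 := sum_prod_one D h1 (k + 1)
  have hA : ∑ ω, (if f (z ∪ UU ω) ≠ f z then P ω else 0) ≤ 2 / 9 := by
    refine (bad_bound f z P hP UU _ (p / 2) (by positivity) hq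
      (fun x => UU_bound D h0 h1 p x (h3 x) (k + 1)) (hn _)).trans ?_
    rw [div_le_iff₀ hq]
    push_cast
    nlinarith
  have hB : ∀ i, ∑ ω, (if f ((z ∪ ω i) ∪ UU ω) ≠ f (z ∪ ω i) then P ω else 0) ≤ 2 / 9 := by
    intro i
    refine (cond_bound f z D h0 h1 p (p / 2) hq h3 hn k i).trans ?_
    rw [div_le_iff₀ hq]
    have hk2 : (k : ℝ) ^ 2 * p ≤ 1 / 9 := by
      refine le_trans ?_ hk
      have : (0 : ℝ) ≤ k := by positivity
      gcongr
      linarith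
    nlinarith
  set bad : (Fin (k + 1) → Finset (Fin n)) → Finset (Fin (k + 1)) := fun ω =>
    Finset.univ.filter (fun i => f ((z ∪ ω i) ∪ UU ω) ≠ f (z ∪ ω i)) with hbad
  set X : (Fin (k + 1) → Finset (Fin n)) → ℝ := fun ω =>
    (if f (z ∪ UU ω) ≠ f z then 1 else 0) + ((bad ω).card : ℝ) / ((k : ℝ) + 1) with hX
  have hk0 : (0 : ℝ) < (k : ℝ) + 1 := by positivity
  have hsum : ∑ ω, P ω * X ω < ∑ ω, P ω * (1 / 2) := by
    rw [← Finset.sum_mul, hP1]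
    have e : ∑ ω, P ω * X ω = ∑ ω, (if f (z ∪ UU ω) ≠ f z then P ω else 0)
      + (∑ i, ∑ ω, (if f ((z ∪ ω i) ∪ UU ω) ≠ f (z ∪ ω i) then P ω else 0)) / ((k : ℝ) + 1) := by
      rw [Finset.sum_comm, Finset.sum_div, ← Finset.sum_add_distrib]
      apply Finset.sum_congr rfl
      intro ω _
      have : (∑ i, (if f ((z ∪ ω i) ∪ UU ω) ≠ f (z ∪ ω i) then P ω else 0))
          = (bad ω).card * P ω := by
        rw [← Finset.sum_filter, Finset.sum_const, nsmul_eq_mul]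
      rw [this]
      simp only [hX, mul_add, mul_ite, mul_one, mul_zero]
      ring
    have hBs : (∑ i, ∑ ω, (if f ((z ∪ ω i) ∪ UU ω) ≠ f (z ∪ ω i) then P ω else 0))
        / ((k : ℝ) + 1) ≤ 2 / 9 := by
      rw [div_le_iff₀ hk0]
      refine (Finset.sum_le_sum (fun i _ => hB i)).trans ?_
      simp
      linarith
    rw [e]
    linarith
  obtain ⟨ω, _, hω⟩ := Finset.exists_lt_of_sum_lt hsum
  have hPne : P ω ≠ 0 := by
    intro h
    simp [h] at hω
  have hXω : X ω < 1 / 2 := lt_of_mul_lt_mul_left hω (hP ω)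
  have hDω : ∀ i, ω i ∈ W f z := fun i =>
    h2 _ (fun h => hPne (Finset.prod_eq_zero (Finset.mem_univ i) h))
  have hnn : (0 : ℝ) ≤ ((bad ω).card : ℝ) / ((k : ℝ) + 1) := by positivity
  have hz : f (z ∪ UU ω) = f z := by
    by_contra hne
    simp only [hX, ne_eq, hne, not_false_eq_true, if_true] at hXω
    linarith
  have hbc : ((bad ω).card : ℝ) < ((k : ℝ) + 1) / 2 := by
    simp only [hX, ne_eq, hz, not_true_eq_false, if_false, zero_add] at hXω
    rw [div_lt_iff₀ hk0] at hXω
    linarith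
  have hcard : (bad ω).card + ((bad ω)ᶜ).card = k + 1 := by
    rw [Finset.card_add_card_compl, Fintype.card_fin]
  have hcard' : ((bad ω).card : ℝ) + (((bad ω)ᶜ).card : ℝ) = k + 1 := by exact_mod_cast hcard
  refine ⟨z ∪ UU ω, ((bad ω)ᶜ).card,
    fun j => ω (((bad ω)ᶜ).equivFin.symm j) \ (z ∪ UU ω), ?_, ?_, by linarith⟩
  · intro j
    set i := ((bad ω)ᶜ).equivFin.symm j with hi
    have hig : f ((z ∪ ω i) ∪ UU ω) = f (z ∪ ω i) := by
      have := i.2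
      simpa [hbad] using this
    refine ⟨?_, ?_⟩
    · intro x hx
      rw [Finset.mem_compl]
      exact (Finset.mem_sdiff.mp hx).2
    · rw [Finset.union_sdiff_self_eq_union, Finset.union_right_comm, hig, hz]
      exact (hDω i).2
  · intro a b hab
    rw [Finset.disjoint_left]
    intro x hxa hxb
    rw [Finset.mem_sdiff] at hxa hxb
    apply hxa.2
    rw [Finset.mem_union]
    right
    simp only [UU, Finset.mem_filter, Finset.mem_univ, true_and]
    refine ⟨_, _, ?_, hxa.1, hxb.1⟩
    intro h
    exact hab (((bad ω)ᶜ).equivFin.symm.injective (Subtype.ext h))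

/-- `FMBS(f) = O(MBS(f)²)`: if there is a `p`-smooth distribution supported on `W(f,z)`,
then `MBS(f) ≥ c/√p`, i.e. some `z'` admits at least `c/√p` pairwise disjoint
elements of `W(f,z')`. -/
theorem stmt6 :
    ∃ c : ℝ, 0 < c ∧
      ∀ (n : ℕ) (f : Finset (Fin n) → ℝ) (z : Finset (Fin n)) (p : ℝ),
        0 < p → p ≤ 1 →
        (∃ D : Finset (Fin n) → ℝ,
          (∀ w, 0 ≤ D w) ∧
          (∑ w : Finset (Fin n), D w) = 1 ∧
          (∀ w, D w ≠ 0 → w ∈ W f z) ∧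
          (∀ i : Fin n, (∑ w ∈ Finset.univ.filter (fun w : Finset (Fin n) => i ∈ w), D w) ≤ p)) →
        ∃ (z' : Finset (Fin n)) (k : ℕ) (w : Fin k → Finset (Fin n)),
          (∀ i, w i ∈ W f z') ∧
          (∀ i j, i ≠ j → Disjoint (w i) (w j)) ∧
          c / Real.sqrt p ≤ (k : ℝ) := by
  refine ⟨1 / 12, by norm_num, ?_⟩
  intro n f z p hp _ hD
  obtain ⟨z0, p0, hp0, hpp, hF, hn⟩ := exists_opt f z p hp hD
  have hs0 : 0 < Real.sqrt p0 := Real.sqrt_pos.mpr hp0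
  have hle : 1 / 12 / Real.sqrt p ≤ 1 / 12 / Real.sqrt p0 :=
    div_le_div_of_nonneg_left (by norm_num) hs0 (Real.sqrt_le_sqrt hpp)
  set t : ℝ := 1 / (3 * Real.sqrt p0) with ht
  have ht0 : 0 < t := by positivity
  have ht4 : 1 / 12 / Real.sqrt p0 = t / 4 := by
    rw [ht]
    field_simp
    norm_num
  rw [ht4] at hle
  have htp : t ^ 2 * p0 = 1 / 9 := by
    have hsq := Real.sq_sqrt hp0.le
    rw [ht, div_pow, mul_pow, hsq]
    field_simp
    norm_num
  rcases Nat.eq_zero_or_pos ⌊t⌋₊ with h0 | hpos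
  · have ht1 : t < 1 := by
      rwa [Nat.floor_eq_zero] at h0
    obtain ⟨D, hD0, hD1, hD2, hD3⟩ := hF
    obtain ⟨w, _, hw⟩ := Finset.exists_ne_zero_of_sum_ne_zero
      (by rw [hD1]; exact one_ne_zero : ∑ w : Finset (Fin n), D w ≠ 0)
    refine ⟨z0, 1, fun _ => w, fun _ => hD2 w hw, ?_, ?_⟩
    · intro i j hij
      exact absurd (Subsingleton.elim i j) hij
    · push_cast
      linarith
  · obtain ⟨k, hk⟩ := Nat.exists_eq_succ_of_ne_zero hpos.ne'
    have h1 : ((k : ℝ) + 1) ≤ t := by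
      have := Nat.floor_le ht0.le
      rw [hk] at this
      push_cast at this
      exact this
    have h2 : t < (k : ℝ) + 1 + 1 := by
      have := Nat.lt_floor_add_one t
      rw [hk] at this
      push_cast at this
      exact this
    have hkn : (0 : ℝ) ≤ k := by positivity
    obtain ⟨z', m, w, hw1, hw2, hm⟩ := main_step f z0 p0 hp0 hF hn k (by
      rw [← htp]
      gcongr)
    refine ⟨z', m, w, hw1, hw2, ?_⟩
    linarith
end

section
/- There is an absolute constant C > 0 such that the following holds. Let f : {0,1}^n → ℝ have sparsity spar(f) = r ≥ 2, and let K ≥ 1 be such that for every z ∈ {0,1}^n there exists a probability distribution D_z on [n] with Σ_{i ∈ w} D_z(i) ≥ 1/K for every w ∈ W(f,z) (i.e., the fractional hitting set complexity FHSC(f), which by LP duality equals FMBS(f), is at most K). Then for every z ∈ {0,1}^n the family W(f,z) has a hitting set of size at most C·K·log₂ r; that is, HSC(f) ≤ O(FMBS(f)·log spar(f)). -/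
theorem coeff_insert_aux {n : ℕ} (f : Finset (Fin n) → ℝ) (a : Fin n) (s : Finset (Fin n))
    (ha : a ∉ s) : coeff f (insert a s) = coeff (fun t => f (insert a t)) s - coeff f s := by
  unfold coeff
  rw [Finset.sum_powerset_insert ha, add_comm, sub_eq_add_neg, ← Finset.sum_neg_distrib]
  congr 1
  · apply Finset.sum_congr rfl
    intro t ht
    have hts := Finset.mem_powerset.1 ht
    have hat : a ∉ t := fun h => ha (hts h)
    rw [Finset.card_insert_of_notMem ha, Finset.card_insert_of_notMem hat,
      Nat.add_sub_add_right]
  · apply Finset.sum_congr rfl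
    intro t ht
    have hts := Finset.mem_powerset.1 ht
    have hc := Finset.card_le_card hts
    rw [Finset.card_insert_of_notMem ha, Nat.sub_add_comm hc, pow_succ]
    ring

theorem sum_coeff_aux {n : ℕ} (t : Finset (Fin n)) :
    ∀ f : Finset (Fin n) → ℝ, ∑ s ∈ t.powerset, coeff f s = f t := by
  induction t using Finset.induction_on with
  | empty => intro f; simp [coeff]
  | insert a t ha ih =>
    intro f
    rw [Finset.sum_powerset_insert ha, ih f]
    have : ∑ s ∈ t.powerset, coeff f (insert a s)
        = ∑ s ∈ t.powerset, (coeff (fun t => f (insert a t)) s - coeff f s) := by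
      apply Finset.sum_congr rfl
      intro s hs
      exact coeff_insert_aux f a s (fun h => ha (Finset.mem_powerset.1 hs h))
    rw [this, Finset.sum_sub_distrib, ih, ih]
    ring

theorem minimal_aux {n : ℕ} (d G : Finset (Fin n) → ℝ) (w : Finset (Fin n)) (hw : w ≠ ∅)
    (hG : ∀ t, t ⊆ w → G t = ∑ u ∈ t.powerset, d u)
    (hmin : ∀ t, t ⊂ w → G t = G ∅) : G w = G ∅ + d w := by
  have h0 : G ∅ = d ∅ := by simpa using hG ∅ (by simp)
  have key : ∀ u, u ⊆ w → u ≠ ∅ → (∀ v, v ⊂ u → v ≠ ∅ → d v = 0) → G u = G ∅ + d u := by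
    intro u hu hne hv
    rw [hG u hu, ← Finset.sum_subset (s₁ := {∅, u}), Finset.sum_pair (Ne.symm hne), h0]
    · intro x hx
      simp only [Finset.mem_insert, Finset.mem_singleton] at hx
      rcases hx with rfl | rfl <;> simp
    · intro x hx hx'
      simp only [Finset.mem_insert, Finset.mem_singleton, not_or] at hx'
      exact hv x ((Finset.mem_powerset.1 hx).ssubset_of_ne hx'.2) hx'.1
  have hz : ∀ u, u ⊂ w → u ≠ ∅ → d u = 0 := by
    intro u
    induction u using Finset.strongInduction with
    | H u ih =>
      intro hu hne
      have := key u hu.subset hne (fun v hv hvn => ih v hv (hv.trans hu) hvn)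
      rw [hmin u hu] at this
      linarith
  exact key w subset_rfl hw hz

theorem greedy_aux {n : ℕ} (D : Fin n → ℝ) (K : ℝ) (hK : 1 ≤ K) (hD : ∀ i, 0 ≤ D i)
    (hD1 : ∑ i, D i = 1) (F : Finset (Finset (Fin n)))
    (hF : ∀ w ∈ F, 1 / K ≤ ∑ i ∈ w, D i) (t : ℕ) :
    ∃ H : Finset (Fin n), H.card ≤ t ∧
      (((F.filter (fun w => ¬ (H ∩ w).Nonempty)).card : ℕ) : ℝ) ≤ F.card * (1 - 1 / K) ^ t := by
  have hK1 : 0 ≤ 1 - 1 / K := by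
    have : 1 / K ≤ 1 := by rw [div_le_one (by linarith)]; exact hK
    linarith
  induction t with
  | zero => exact ⟨∅, by simp, by simp⟩
  | succ t ih =>
    obtain ⟨H, hH, hc⟩ := ih
    set U := F.filter (fun w => ¬ (H ∩ w).Nonempty) with hU
    have hex : ∃ i : Fin n, (U.card : ℝ) * (1 / K) ≤ ((U.filter (fun w => i ∈ w)).card : ℝ) := by
      by_contra hcon
      push Not at hcon
      have h1 : ∑ i, D i * ((U.filter (fun w => i ∈ w)).card : ℝ) = ∑ w ∈ U, ∑ i ∈ w, D i := by
        have : ∀ w ∈ U, ∑ i ∈ w, D i = ∑ i, if i ∈ w then D i else 0 := by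
          intro w _
          simp
        rw [Finset.sum_congr rfl this, Finset.sum_comm]
        apply Finset.sum_congr rfl
        intro i _
        rw [← Finset.sum_filter, Finset.sum_const, nsmul_eq_mul, mul_comm]
      have h2 : (U.card : ℝ) * (1 / K) ≤ ∑ w ∈ U, ∑ i ∈ w, D i := by
        rw [← nsmul_eq_mul]
        exact Finset.card_nsmul_le_sum _ _ _ (fun w hw => hF w (Finset.mem_filter.1 hw).1)
      have h3 : ∑ i, D i * ((U.filter (fun w => i ∈ w)).card : ℝ)
          < ∑ i, D i * ((U.card : ℝ) * (1 / K)) := by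
        apply Finset.sum_lt_sum
        · intro i _
          exact mul_le_mul_of_nonneg_left (hcon i).le (hD i)
        · have : ∃ i ∈ Finset.univ, (0:ℝ) < D i := by
            by_contra hn
            push Not at hn
            have := Finset.sum_nonpos hn
            linarith
          obtain ⟨i, hi, hpos⟩ := this
          exact ⟨i, hi, mul_lt_mul_of_pos_left (hcon i) hpos⟩
      rw [← Finset.sum_mul, hD1] at h3
      linarith
    obtain ⟨i, hi⟩ := hex
    refine ⟨insert i H, (Finset.card_insert_le _ _).trans (by omega), ?_⟩
    have hsub : F.filter (fun w => ¬ (insert i H ∩ w).Nonempty) ⊆ U.filter (fun w => ¬ i ∈ w) := by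
      intro w hw
      rw [Finset.mem_filter] at hw
      rw [Finset.mem_filter, hU, Finset.mem_filter]
      refine ⟨⟨hw.1, fun h => hw.2 ?_⟩, fun h => hw.2 ⟨i, by simp [h]⟩⟩
      obtain ⟨j, hj⟩ := h
      rw [Finset.mem_inter] at hj
      exact ⟨j, by simp [hj.1, hj.2]⟩
    have h4 := Finset.card_le_card hsub
    have h5 := Finset.card_filter_add_card_filter_not (s := U) (fun w => i ∈ w)
    have h4' : ((F.filter (fun w => ¬ (insert i H ∩ w).Nonempty)).card : ℝ)
      ≤ ((U.filter (fun w => ¬ i ∈ w)).card : ℝ) := by exact_mod_cast h4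
    have h5' : ((U.filter (fun w => i ∈ w)).card : ℝ) + ((U.filter (fun w => ¬ i ∈ w)).card : ℝ)
      = U.card := by exact_mod_cast h5
    have h6 := mul_le_mul_of_nonneg_right hc hK1
    rw [pow_succ, ← mul_assoc]
    linarith

theorem witness_aux {n : ℕ} (f : Finset (Fin n) → ℝ) (z w : Finset (Fin n)) (hw : w ∈ W f z) :
    ∃ s, coeff f s ≠ 0 ∧ s \ z ∈ W f z ∧ s \ z ⊆ w := by
  classical
  induction w using Finset.strongInduction with
  | H w ih =>
  by_cases hex : ∃ v, v ⊂ w ∧ v ∈ W f z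
  · obtain ⟨v, hv, hvW⟩ := hex
    obtain ⟨s, h1, h2, h3⟩ := ih v hv hvW
    exact ⟨s, h1, h2, h3.trans hv.subset⟩
  · push Not at hex
    have hwz : Disjoint w z := by
      rw [← Finset.subset_compl_iff_disjoint_right]; exact hw.1
    have hne : w ≠ ∅ := by
      rintro rfl
      exact hw.2 (by simp)
    have hG : ∀ t, t ⊆ w → f (z ∪ t) = ∑ u ∈ t.powerset,
        ∑ s ∈ Finset.univ.filter (fun s => s \ z = u), coeff f s := by
      intro t ht
      rw [← sum_coeff_aux (z ∪ t) f]
      rw [← Finset.sum_fiberwise_of_maps_to (s := (z ∪ t).powerset) (t := t.powerset)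
        (g := fun s => s \ z)]
      · apply Finset.sum_congr rfl
        intro u hu
        apply Finset.sum_congr _ (fun _ _ => rfl)
        ext s
        simp only [Finset.mem_filter, Finset.mem_powerset, Finset.mem_univ, true_and,
          and_iff_right_iff_imp]
        rintro rfl
        exact sdiff_le_iff.1 (Finset.mem_powerset.1 hu)
      · intro s hs
        exact Finset.mem_powerset.2 (sdiff_le_iff.2 (Finset.mem_powerset.1 hs))
    have hmin : ∀ t, t ⊂ w → f (z ∪ t) = f (z ∪ ∅) := by
      intro t ht
      by_contra hcon
      exact hex t ht ⟨ht.subset.trans hw.1, by simpa using hcon⟩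
    have := minimal_aux _ (fun t => f (z ∪ t)) w hne hG hmin
    have hd : ∑ s ∈ Finset.univ.filter (fun s => s \ z = w), coeff f s ≠ 0 := by
      intro h
      rw [h] at this
      exact hw.2 (by simpa using this)
    obtain ⟨s, hs, hc⟩ := Finset.exists_ne_zero_of_sum_ne_zero hd
    have hs' : s \ z = w := (Finset.mem_filter.1 hs).2
    exact ⟨s, hc, by rw [hs']; exact hw, by rw [hs']⟩

/-- `HSC(f) = O(FMBS(f)·log spar(f))`: if for every `z` there is a probability
distribution on `[n]` putting weight at least `1/K` on every `w ∈ W(f,z)`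
(i.e. `FHSC(f) = FMBS(f) ≤ K`), then every `W(f,z)` has a hitting set of size
`≤ C·K·log₂ r`. -/
theorem stmt7 :
    ∃ C : ℝ, 0 < C ∧
      ∀ (n : ℕ) (f : Finset (Fin n) → ℝ) (K : ℝ),
        2 ≤ sparsity f →
        1 ≤ K →
        (∀ z : Finset (Fin n), ∃ D : Fin n → ℝ,
          (∀ i, 0 ≤ D i) ∧ (∑ i, D i) = 1 ∧
          (∀ w ∈ W f z, 1 / K ≤ ∑ i ∈ w, D i)) →
        ∀ z : Finset (Fin n),
          ∃ H : Finset (Fin n),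
            (∀ w ∈ W f z, (H ∩ w).Nonempty) ∧
            (H.card : ℝ) ≤ C * K * Real.logb 2 (sparsity f) := by
  classical
  refine ⟨2, by norm_num, ?_⟩
  intro n f K hr hK hD z
  obtain ⟨D, hD0, hD1, hDW⟩ := hD z
  set r := sparsity f with hrdef
  let F : Finset (Finset (Fin n)) :=
    ((Finset.univ.filter (fun s => coeff f s ≠ 0)).image (fun s => s \ z)).filter
      (fun w => w ∈ W f z)
  have hFr : F.card ≤ r := by
    refine (Finset.card_filter_le _ _).trans (Finset.card_image_le.trans ?_)
    rw [hrdef, sparsity, ← Set.ncard_coe_finset]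
    simp
  have hK0 : 0 < K := by linarith
  have hr0 : (0:ℝ) < r := by exact_mod_cast (by omega : 0 < r)
  have hr2 : (2:ℝ) ≤ r := by exact_mod_cast hr
  have hlog0 : 0 ≤ Real.log r := Real.log_nonneg (by linarith)
  set t := ⌊K * Real.log r⌋₊ + 1 with ht
  obtain ⟨H, hHc, hH⟩ := greedy_aux D K hK hD0 hD1 F
    (fun w hw => hDW w (Finset.mem_filter.1 hw).2) t
  have htgt : K * Real.log r < t := by
    rw [ht]; push_cast; exact Nat.lt_floor_add_one _
  have htle : (t : ℝ) ≤ K * Real.log r + 1 := by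
    rw [ht]; push_cast
    have := Nat.floor_le (mul_nonneg hK0.le hlog0)
    linarith
  have hK1 : 0 ≤ 1 - 1 / K := by
    have : 1 / K ≤ 1 := by rw [div_le_one (by linarith)]; exact hK
    linarith
  have hlt : (F.card : ℝ) * (1 - 1 / K) ^ t < 1 := by
    have h1 : (1 - 1 / K) ^ t ≤ Real.exp (-(t / K)) := by
      have h := Real.add_one_le_exp (-(1 / K))
      have h' : 1 - 1 / K ≤ Real.exp (-(1 / K)) := by linarith
      refine (pow_le_pow_left₀ hK1 h' t).trans ?_
      rw [← Real.exp_nat_mul]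
      apply le_of_eq
      congr 1
      ring
    have h2 : Real.exp (-(t / K)) < Real.exp (-Real.log r) := by
      apply Real.exp_lt_exp.2
      have : Real.log r < t / K := by rw [lt_div_iff₀ hK0]; linarith
      linarith
    rw [Real.exp_neg (Real.log r), Real.exp_log hr0] at h2
    have h3 : (F.card : ℝ) ≤ r := by exact_mod_cast hFr
    calc (F.card : ℝ) * (1 - 1 / K) ^ t ≤ r * (1 - 1 / K) ^ t :=
          mul_le_mul_of_nonneg_right h3 (pow_nonneg hK1 _)
      _ < r * (r : ℝ)⁻¹ := mul_lt_mul_of_pos_left (h1.trans_lt h2) hr0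
      _ = 1 := mul_inv_cancel₀ hr0.ne'
  have hempty : F.filter (fun w => ¬ (H ∩ w).Nonempty) = ∅ := by
    rw [← Finset.card_eq_zero]
    have := hH.trans_lt hlt
    have : (F.filter (fun w => ¬ (H ∩ w).Nonempty)).card < 1 := by exact_mod_cast this
    omega
  refine ⟨H, ?_, ?_⟩
  · intro w hw
    obtain ⟨s, h1, h2, h3⟩ := witness_aux f z w hw
    have hsF : s \ z ∈ F := by
      refine Finset.mem_filter.2 ⟨Finset.mem_image.2 ⟨s, ?_, rfl⟩, h2⟩
      simp [h1]
    have : (H ∩ (s \ z)).Nonempty := by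
      by_contra hcon
      exact Finset.filter_eq_empty_iff.1 hempty hsF hcon
    exact this.mono (Finset.inter_subset_inter_left h3)
  · have hc : (H.card : ℝ) ≤ t := by exact_mod_cast hHc
    have hl2 : 0 < Real.log 2 := Real.log_pos (by norm_num)
    have hl2' : Real.log 2 ≤ 1 := by linarith [Real.log_two_lt_d9]
    have ha : Real.log r ≤ Real.logb 2 r := by
      rw [Real.logb, le_div_iff₀ hl2]
      nlinarith
    have hb : 1 ≤ Real.logb 2 r := by
      rw [Real.logb, le_div_iff₀ hl2, one_mul]
      exact Real.log_le_log (by norm_num) hr2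
    have h1 := mul_le_mul_of_nonneg_left ha hK0.le
    have h2 : 1 ≤ K * Real.logb 2 r := by nlinarith
    linarith
end

section
/- Let f : {0,1}^n → ℝ and z ∈ {0,1}^n, and define the restriction f_z : {0,1}^{[n]∖z} → ℝ by f_z(w) = f(z ∨ w). Then for any w ⊆ [n]∖z, w is a minimal element (with respect to set inclusion) of W(f,z) = {w' ⊆ [n]∖z : f(z ∨ w') ≠ f(z)} if and only if w is a minimal element of mon(f_z), the set system of non-constant monomials of f_z. -/
/-- The coefficient of the monomial `s ⊆ [n]∖z` in the multilinear polynomial computing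
the restriction `f_z : {0,1}^{[n]∖z} → ℝ`, `f_z(w) = f(z ∪ w)`. -/
noncomputable def coeffRes {n : ℕ} (f : Finset (Fin n) → ℝ) (z s : Finset (Fin n)) : ℝ :=
  ∑ t ∈ s.powerset, (-1 : ℝ) ^ (s.card - t.card) * f (z ∪ t)

/-- The set system of non-constant monomials of the restriction `f_z`. -/
def monRes {n : ℕ} (f : Finset (Fin n) → ℝ) (z : Finset (Fin n)) : Set (Finset (Fin n)) :=
  {s | s ⊆ zᶜ ∧ coeffRes f z s ≠ 0 ∧ s ≠ ∅}

theorem coeffRes_aux {n : ℕ} (f : Finset (Fin n) → ℝ) (z s : Finset (Fin n)) (hs : s ≠ ∅)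
    (h : ∀ t ⊂ s, f (z ∪ t) = f z) : coeffRes f z s = f (z ∪ s) - f z := by
  have h0 : ∑ t ∈ s.powerset, (-1 : ℝ) ^ (s.card - t.card) = 0 := by
    have h1 := Finset.sum_pow_mul_eq_add_pow (1 : ℝ) (-1) s
    have h2 : s.card ≠ 0 := by simpa using hs
    simpa [h2] using h1
  have h3 : coeffRes f z s
      = ∑ t ∈ s.powerset, (-1 : ℝ) ^ (s.card - t.card) * (f (z ∪ t) - f z) := by
    simp only [mul_sub, Finset.sum_sub_distrib, ← Finset.sum_mul, h0, coeffRes]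
    ring
  rw [h3, Finset.sum_eq_single s]
  · simp
  · intro t ht hne
    rw [h t (Finset.ssubset_iff_subset_ne.2 ⟨Finset.mem_powerset.1 ht, hne⟩)]
    simp
  · simp

/-- A set `w ⊆ [n]∖z` is a minimal element of `W(f,z)` iff it is a minimal element
of `mon(f_z)`. -/
theorem stmt8 (n : ℕ) (f : Finset (Fin n) → ℝ) (z w : Finset (Fin n)) (hw : w ⊆ zᶜ) :
    (w ∈ W f z ∧ ∀ w' ⊂ w, w' ∉ W f z) ↔
    (w ∈ monRes f z ∧ ∀ w' ⊂ w, w' ∉ monRes f z) := by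
  constructor
  · rintro ⟨⟨_, h1⟩, h2⟩
    have h3 : ∀ t ⊂ w, f (z ∪ t) = f z := by
      intro t ht
      by_contra hc
      exact h2 t ht ⟨ht.subset.trans hw, hc⟩
    have hne : w ≠ ∅ := by
      rintro rfl
      simp at h1
    refine ⟨⟨hw, ?_, hne⟩, ?_⟩
    · rw [coeffRes_aux f z w hne h3]
      exact sub_ne_zero.2 h1
    · rintro t ht ⟨_, h4, h5⟩
      rw [coeffRes_aux f z t h5 (fun u hu => h3 u (hu.trans ht)), h3 t ht] at h4
      simp at h4
  · rintro ⟨⟨_, h1, hne⟩, h2⟩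
    have h3 : ∀ t, t ⊂ w → f (z ∪ t) = f z := by
      intro t
      induction t using Finset.strongInduction with
      | H t ih =>
        intro ht
        by_cases h0 : t = ∅
        · simp [h0]
        have h4 := coeffRes_aux f z t h0 (fun u hu => ih u hu (hu.trans ht))
        by_contra hc
        exact h2 t ht ⟨ht.subset.trans hw, by rw [h4]; exact sub_ne_zero.2 hc, h0⟩
    refine ⟨⟨hw, ?_⟩, fun t ht hc => hc.2 (h3 t ht)⟩
    rw [coeffRes_aux f z w hne h3] at h1
    exact sub_ne_zero.1 h1
end

section
/- Let f : {0,1}^n → {0,1} be a boolean function, and let M be the 2^n × 2^n real matrix indexed by pairs x, y ∈ {0,1}^n with entries M_{x,y} = f(x ∧ y), where x ∧ y denotes bitwise AND. Then the rank of M over ℝ equals the sparsity of f: rank(M) = spar(f). -/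
theorem aux_key {n : ℕ} (t x : Finset (Fin n)) :
    ∑ s : Finset (Fin n), (if s ⊆ x then (1:ℝ) else 0) *
      (if t ⊆ s then (-1 : ℝ) ^ (s.card - t.card) else 0) = if x = t then 1 else 0 := by
  classical
  have h1 : ∑ s : Finset (Fin n), (if s ⊆ x then (1:ℝ) else 0) *
      (if t ⊆ s then (-1 : ℝ) ^ (s.card - t.card) else 0)
      = ∑ s ∈ Finset.Icc t x, (-1 : ℝ) ^ (s.card - t.card) := by
    rw [← Finset.sum_subset (Finset.subset_univ (Finset.Icc t x))]
    · refine Finset.sum_congr rfl fun s hs => ?_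
      rw [Finset.mem_Icc] at hs
      have a : t ⊆ s := hs.1
      have b : s ⊆ x := hs.2
      simp [a, b]
    · intro s _ hs
      rw [Finset.mem_Icc] at hs
      by_cases b : s ⊆ x
      · have a : ¬ t ⊆ s := fun a => hs ⟨a, b⟩
        simp [a]
      · simp [b]
  rw [h1]
  by_cases htx : t ⊆ x
  · rw [Finset.Icc_eq_image_powerset htx, Finset.sum_image]
    · have h2 : ∀ u ∈ (x \ t).powerset,
          (-1 : ℝ) ^ ((t ∪ u).card - t.card) = (((-1 : ℤ) ^ u.card : ℤ) : ℝ) := by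
        intro u hu
        rw [Finset.mem_powerset] at hu
        have hd : Disjoint t u :=
          (Finset.disjoint_of_subset_left hu Finset.sdiff_disjoint).symm
        rw [Finset.card_union_of_disjoint hd]
        simp
      rw [Finset.sum_congr rfl h2, ← Int.cast_sum, Finset.sum_powerset_neg_one_pow_card]
      have h3 : x \ t = ∅ ↔ x = t := by
        rw [Finset.sdiff_eq_empty_iff_subset]
        exact ⟨fun h => h.antisymm htx, fun h => h.le⟩
      simp only [h3]
      split_ifs <;> simp
    · intro u hu v hv huv
      simp only [Finset.coe_powerset, Set.mem_preimage, Set.mem_powerset_iff,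
        Finset.coe_subset] at hu hv
      ext i
      have := Finset.ext_iff.1 huv i
      have a := @hu i
      have b := @hv i
      simp only [Finset.mem_sdiff, Finset.mem_union] at *
      tauto
  · have : Finset.Icc t x = ∅ := Finset.Icc_eq_empty htx
    rw [this]
    have : x ≠ t := fun h => htx h.ge
    simp [this]

theorem aux_inv {n : ℕ} (f : Finset (Fin n) → ℝ) (x : Finset (Fin n)) :
    f x = ∑ s : Finset (Fin n), (if s ⊆ x then (1:ℝ) else 0) * coeff f s := by
  have h : ∀ s, coeff f s = ∑ t : Finset (Fin n),
      (if t ⊆ s then (-1 : ℝ) ^ (s.card - t.card) else 0) * f t := by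
    intro s
    unfold coeff
    rw [← Finset.sum_subset (Finset.subset_univ s.powerset)]
    · refine Finset.sum_congr rfl fun t ht => ?_
      simp [Finset.mem_powerset.1 ht]
    · intro t _ ht
      rw [Finset.mem_powerset] at ht
      simp [ht]
  simp only [h, Finset.mul_sum]
  rw [Finset.sum_comm]
  simp only [← mul_assoc, ← Finset.sum_mul, aux_key]
  simp

/-- The real rank of the communication matrix of the AND-function
`f∧(x,y) = f(x ∧ y)` equals the sparsity of `f`. -/
theorem stmt10 (n : ℕ) (f : Finset (Fin n) → ℝ) (hf : ∀ x, f x = 0 ∨ f x = 1) :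
    (Matrix.of fun x y : Finset (Fin n) => f (x ∩ y)).rank = sparsity f := by
  classical
  let Z : Matrix (Finset (Fin n)) (Finset (Fin n)) ℝ :=
    Matrix.of fun x s => if s ⊆ x then 1 else 0
  let U : Matrix (Finset (Fin n)) (Finset (Fin n)) ℝ :=
    Matrix.of fun s t => if t ⊆ s then (-1 : ℝ) ^ (s.card - t.card) else 0
  have hZU : Z * U = 1 := by
    ext x t
    rw [Matrix.mul_apply, Matrix.one_apply]
    exact aux_key t x
  have hdet : IsUnit Z.det := by
    rw [← Matrix.isUnit_iff_isUnit_det]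
    exact IsUnit.of_mul_eq_one U hZU
  have hM : (Matrix.of fun x y : Finset (Fin n) => f (x ∩ y))
      = Z * (Matrix.diagonal (coeff f) * Z.transpose) := by
    ext x y
    rw [Matrix.mul_apply]
    simp only [Matrix.diagonal_mul, Matrix.transpose_apply, Matrix.of_apply, Z]
    rw [aux_inv f (x ∩ y)]
    refine Finset.sum_congr rfl fun s _ => ?_
    by_cases a : s ⊆ x <;> by_cases b : s ⊆ y <;> simp [Finset.subset_inter_iff, a, b]
  rw [hM, Matrix.rank_mul_eq_right_of_isUnit_det _ _ hdet,
    Matrix.rank_mul_eq_left_of_isUnit_det _ _ (by rwa [Matrix.det_transpose]),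
    Matrix.rank_diagonal]
  unfold sparsity
  rw [← Nat.card_coe_set_eq, ← Nat.card_eq_fintype_card]
  rfl
end

section
/- Let f : {0,1}^n → ℝ, let k ≥ 1, and let D be a probability distribution on [n] such that Σ_{i ∈ w} D(i) ≥ 1/k for every w ∈ W(f, 0^n) = {w ⊆ [n] : f(w) ≠ f(0^n)}. Then: (1) Σ_{i ∈ w} D(i) ≥ 1/k for every w ∈ mon(f); and (2) if mon(f) is nonempty, there exists an index i ∈ [n] that belongs to at least |mon(f)|/k of the sets in mon(f). -/
/-- If a distribution `D` on `[n]` fractionally hits every `w ∈ W(f, 0^n)` with weight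
`≥ 1/k`, then (1) it fractionally hits every monomial of `f` with weight `≥ 1/k`, and
(2) if `mon f` is nonempty, some index belongs to at least a `1/k`-fraction of `mon f`. -/
theorem stmt11 (n : ℕ) (f : Finset (Fin n) → ℝ) (k : ℝ) (hk : 1 ≤ k)
    (D : Fin n → ℝ) (hD0 : ∀ i, 0 ≤ D i) (hD1 : (∑ i, D i) = 1)
    (hhit : ∀ w ∈ W f (∅ : Finset (Fin n)), 1 / k ≤ ∑ i ∈ w, D i) :
    (∀ s ∈ mon f, 1 / k ≤ ∑ i ∈ s, D i) ∧
    ((mon f).Nonempty →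
      ∃ i : Fin n, ((mon f).ncard : ℝ) / k ≤ ({s ∈ mon f | i ∈ s}.ncard : ℝ)) := by
  classical
  have h1 : ∀ s ∈ mon f, 1 / k ≤ ∑ i ∈ s, D i := by
    rintro s ⟨hs, hne⟩
    have : ∃ t ⊆ s, f t ≠ f ∅ := by
      by_contra hcon
      push Not at hcon
      apply hs
      have hz : (∑ t ∈ s.powerset, (-1 : ℝ) ^ t.card) = 0 := by
        have := Finset.sum_powerset_neg_one_pow_card_of_nonempty
          (Finset.nonempty_iff_ne_empty.mpr hne)
        exact_mod_cast this
      have he : coeff f s = ∑ t ∈ s.powerset, ((-1 : ℝ) ^ s.card * f ∅) * (-1 : ℝ) ^ t.card := by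
        unfold coeff
        refine Finset.sum_congr rfl fun t ht => ?_
        have hts := Finset.mem_powerset.mp ht
        have hc := Finset.card_le_card hts
        rw [hcon t hts]
        have e : (-1 : ℝ) ^ s.card = (-1) ^ (s.card - t.card) * (-1) ^ t.card := by
          rw [← pow_add, Nat.sub_add_cancel hc]
        have e2 : (-1 : ℝ) ^ t.card * (-1) ^ t.card = 1 := by
          rw [← mul_pow]; simp
        rw [e]
        linear_combination (-(-1 : ℝ) ^ (s.card - t.card) * f ∅) * e2
      rw [he, ← Finset.mul_sum, hz, mul_zero]
    obtain ⟨t, hts, ht⟩ := this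
    refine (hhit t ⟨by simp, by simpa using ht⟩).trans ?_
    exact Finset.sum_le_sum_of_subset_of_nonneg hts fun i _ _ => hD0 i
  refine ⟨h1, fun _ => ?_⟩
  by_contra hcon
  push Not at hcon
  let M : Finset (Finset (Fin n)) := Finset.univ.filter (· ∈ mon f)
  have hM : (mon f).ncard = M.card := by
    rw [← Set.ncard_coe_finset]; congr 1; ext s; simp [M]
  have hMi : ∀ i, {s ∈ mon f | i ∈ s}.ncard = (M.filter (i ∈ ·)).card := by
    intro i
    rw [← Set.ncard_coe_finset]; congr 1; ext s; simp [M]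
  have hpos : ∃ i ∈ Finset.univ, 0 < D i := by
    apply Finset.exists_lt_of_sum_lt
    simp [hD1]
  obtain ⟨j, _, hj⟩ := hpos
  have hlt : ∑ i, D i * ((M.filter (i ∈ ·)).card : ℝ) < ∑ i, D i * ((M.card : ℝ) / k) := by
    refine Finset.sum_lt_sum (fun i _ => ?_) ⟨j, Finset.mem_univ _, ?_⟩
    · have := hcon i
      rw [hM, hMi] at this
      exact mul_le_mul_of_nonneg_left this.le (hD0 i)
    · have := hcon j
      rw [hM, hMi] at this
      exact mul_lt_mul_of_pos_left this hj
  rw [← Finset.sum_mul, hD1, one_mul] at hlt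
  have heq : ∑ i, D i * ((M.filter (i ∈ ·)).card : ℝ) = ∑ s ∈ M, ∑ i ∈ s, D i := by
    have : ∀ s ∈ M, ∑ i ∈ s, D i = ∑ i, if i ∈ s then D i else 0 := by
      intro s _; simp
    rw [Finset.sum_congr rfl this, Finset.sum_comm]
    refine Finset.sum_congr rfl fun i _ => ?_
    rw [← Finset.sum_filter, Finset.sum_const, nsmul_eq_mul, mul_comm]
  have hge : (M.card : ℝ) / k ≤ ∑ s ∈ M, ∑ i ∈ s, D i := by
    have := Finset.card_nsmul_le_sum M (fun s => ∑ i ∈ s, D i) (1 / k)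
      (fun s hs => h1 s (by simpa [M] using hs))
    rw [nsmul_eq_mul, mul_one_div] at this
    exact this
  linarith
end

section
/- Let f : {0,1}^n → ℝ, let z ∈ {0,1}^n, and let K ≥ 1 be such that every probability distribution supported on W(f,z) = {w ⊆ [n]∖z : f(z ∨ w) ≠ f(z)} has some coordinate i ∈ [n] with Pr[w_i = 1] ≥ 1/K (i.e., FMBS(f,z) ≤ K). Then for every q ∈ (0,1] and every q-smooth probability distribution D on {0,1}^{[n]∖z}: Pr_{w∼D}[f(z ∨ w) ≠ f(z)] ≤ q·K. -/
open scoped Classical in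
/-- Smooth-noise stability: if `FMBS(f,z) ≤ K` (every distribution supported on `W(f,z)`
has some coordinate with marginal `≥ 1/K`), then for every `q`-smooth distribution `D`
on `{0,1}^{[n]∖z}` we have `Pr_{w∼D}[f(z ∨ w) ≠ f(z)] ≤ q·K`. -/
theorem stmt13 (n : ℕ) (f : Finset (Fin n) → ℝ) (z : Finset (Fin n)) (K : ℝ)
    (hK : 1 ≤ K)
    (hfmbs : ∀ D : Finset (Fin n) → ℝ,
      (∀ w, 0 ≤ D w) → (∑ w : Finset (Fin n), D w) = 1 →
      (∀ w, D w ≠ 0 → w ∈ W f z) →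
      ∃ i : Fin n, 1 / K ≤ ∑ w ∈ Finset.univ.filter (fun w : Finset (Fin n) => i ∈ w), D w) :
    ∀ q : ℝ, 0 < q → q ≤ 1 →
      ∀ D : Finset (Fin n) → ℝ,
        (∀ w, 0 ≤ D w) → (∑ w : Finset (Fin n), D w) = 1 →
        (∀ w, D w ≠ 0 → w ⊆ zᶜ) →
        (∀ i : Fin n, (∑ w ∈ Finset.univ.filter (fun w : Finset (Fin n) => i ∈ w), D w) ≤ q) →
        (∑ w ∈ Finset.univ.filter (fun w : Finset (Fin n) => f (z ∪ w) ≠ f z), D w) ≤ q * K := by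
  intro q hq hq1 D hD hsum hsupp hsm
  set P := ∑ w ∈ Finset.univ.filter (fun w : Finset (Fin n) => f (z ∪ w) ≠ f z), D w with hP
  rcases le_or_gt P 0 with h0 | h0
  · have : 0 < q * K := by positivity
    linarith
  obtain ⟨i, hi⟩ := hfmbs (fun w => (if f (z ∪ w) ≠ f z then D w else 0) / P)
    (by
      intro w
      have := hD w
      split_ifs <;> positivity)
    (by
      rw [← Finset.sum_div, ← Finset.sum_filter, ← hP]
      exact div_self h0.ne')
    (by
      intro w hw
      by_cases h : f (z ∪ w) ≠ f z
      · refine ⟨hsupp w ?_, h⟩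
        intro hd
        apply hw
        simp [hd]
      · exact absurd (by simp only [if_neg h, zero_div]) hw)
  rw [← Finset.sum_div] at hi
  have h1 : (∑ w ∈ Finset.univ.filter (fun w : Finset (Fin n) => i ∈ w),
      (if f (z ∪ w) ≠ f z then D w else 0)) ≤ q := by
    refine le_trans (Finset.sum_le_sum ?_) (hsm i)
    intro w _
    have := hD w
    split_ifs <;> linarith
  have hK0 : 0 < K := by linarith
  rw [div_le_div_iff₀ hK0 h0] at hi
  have h2 := mul_le_mul_of_nonneg_right h1 hK0.le
  linarith
end

section
/- Let f : {0,1}^n → {0,1} be a boolean function and suppose z, w_1, …, w_k ∈ {0,1}^n are pairwise disjoint with f(z ∨ w_i) ≠ f(z) for every i ∈ [k] (i.e., MBS(f) ≥ k is witnessed). Then there exist maps X, Y : {0,1}^k → {0,1}^n and a bit c ∈ {0,1} such that for all a, b ∈ {0,1}^k: if a ∧ b = 0^k then f(X(a) ∧ Y(b)) ⊕ c = 1, and if a ∧ b has Hamming weight exactly 1 then f(X(a) ∧ Y(b)) ⊕ c = 0. (That is, the AND-function f∧ contains unique disjointness UDISJ_k as a sub-matrix.) -/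
/-- If `MBS(f) ≥ k` is witnessed by pairwise disjoint `z, w_1, …, w_k` with
`f(z ∨ w_i) ≠ f(z)`, then the AND-function of `f` contains unique disjointness
`UDISJ_k` as a sub-matrix: there are maps `X, Y : {0,1}^k → {0,1}^n` and a bit `c`
with `f(X(a) ∧ Y(b)) ⊕ c = 1` whenever `a ∧ b = 0^k` and `f(X(a) ∧ Y(b)) ⊕ c = 0`
whenever `|a ∧ b| = 1`. -/
theorem stmt14 (n k : ℕ) (f : Finset (Fin n) → Bool)
    (z : Finset (Fin n)) (w : Fin k → Finset (Fin n))
    (hzw : ∀ i, Disjoint z (w i))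
    (hww : ∀ i j, i ≠ j → Disjoint (w i) (w j))
    (hsens : ∀ i, f (z ∪ w i) ≠ f z) :
    ∃ (X Y : Finset (Fin k) → Finset (Fin n)) (c : Bool),
      ∀ a b : Finset (Fin k),
        (a ∩ b = ∅ → xor (f (X a ∩ Y b)) c = true) ∧
        ((a ∩ b).card = 1 → xor (f (X a ∩ Y b)) c = false) := by
  have key : ∀ a b : Finset (Fin k),
      (z ∪ a.biUnion w) ∩ (z ∪ b.biUnion w) = z ∪ (a ∩ b).biUnion w := by
    intro a b
    ext x
    simp only [Finset.mem_inter, Finset.mem_union, Finset.mem_biUnion]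
    constructor
    · rintro ⟨h1 | ⟨i, hi, hxi⟩, h2 | ⟨j, hj, hxj⟩⟩
      · exact Or.inl h1
      · exact Or.inl h1
      · exact Or.inl h2
      · by_cases hij : i = j
        · subst hij
          exact Or.inr ⟨i, ⟨hi, hj⟩, hxi⟩
        · exact absurd hxj (Finset.disjoint_left.mp (hww i j hij) hxi)
    · rintro (h | ⟨i, ⟨hi, hj⟩, hx⟩)
      · exact ⟨Or.inl h, Or.inl h⟩
      · exact ⟨Or.inr ⟨i, hi, hx⟩, Or.inr ⟨i, hj, hx⟩⟩
  refine ⟨fun a => z ∪ a.biUnion w, fun b => z ∪ b.biUnion w, !(f z), fun a b => ⟨?_, ?_⟩⟩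
  · intro h
    simp only [key, h, Finset.biUnion_empty, Finset.union_empty]
    cases f z <;> rfl
  · intro h
    obtain ⟨i, hi⟩ := Finset.card_eq_one.mp h
    simp only [key, hi, Finset.singleton_biUnion]
    have := hsens i
    revert this
    cases f z <;> cases f (z ∪ w i) <;> simp
end

section
/- There is an absolute constant C > 0 such that the following holds. Let f : {0,1}^n → ℝ be a function whose image has size at most s (s ≥ 1) and whose sparsity is spar(f) = r ≥ 2. Then MBS(f) ≤ C·s²·(log₂ r)². -/
/-- factors of the majorant of the Lagrange basis -/
noncomputable def facF (i j : ℕ) : ℝ :=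
  if j = i then 1 else if j = 0 then 1 / (5 * (i : ℝ) ^ 2) else (j : ℝ) ^ 2 / |(i : ℝ) ^ 2 - (j : ℝ) ^ 2|

theorem prodF_low (m b : ℕ) :
    ∏ j ∈ Finset.range (m + 1), facF (m + 1 + b) j =
      1 / (5 * ((m + 1 + b : ℕ) : ℝ) ^ 2) *
        ((m.factorial : ℝ) ^ 2 * ((m + 1 + b : ℕ) : ℝ) * (b.factorial : ℝ) / ((2 * m + 1 + b).factorial : ℝ)) := by
  induction m generalizing b with
  | zero =>
    have h : (0 : ℕ) ≠ 0 + 1 + b := by omega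
    simp only [zero_add, Finset.prod_range_one, facF]
    rw [if_neg (by omega), if_pos trivial]
    have : ((2 * 0 + 1 + b).factorial : ℝ) = ((1 + b : ℕ) : ℝ) * (b.factorial : ℝ) := by
      rw [show 2 * 0 + 1 + b = b + 1 by ring, Nat.factorial_succ]; push_cast; ring
    rw [this]
    have h1 : (b.factorial : ℝ) ≠ 0 := by positivity
    have h2 : ((1 + b : ℕ) : ℝ) ≠ 0 := by positivity
    simp only [Nat.factorial_zero, Nat.cast_one]
    field_simp
  | succ m ih =>
    rw [Finset.prod_range_succ]
    have := ih (b + 1)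
    rw [show m + 1 + (b + 1) = m + 1 + 1 + b by ring] at this
    rw [this]
    simp only [facF]
    rw [if_neg (by omega), if_neg (by omega)]
    have e1 : ((2 * (m + 1) + 1 + b).factorial : ℝ) = (2 * m + 3 + b : ℝ) * ((2 * m + 1 + (b + 1)).factorial : ℝ) := by
      rw [show 2 * (m + 1) + 1 + b = (2 * m + 1 + (b + 1)) + 1 by ring, Nat.factorial_succ]; push_cast; ring
    have e2 : ((b + 1).factorial : ℝ) = (b + 1 : ℝ) * (b.factorial : ℝ) := by
      rw [Nat.factorial_succ]; push_cast; ring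
    have e3 : ((m + 1).factorial : ℝ) = (m + 1 : ℝ) * (m.factorial : ℝ) := by
      rw [Nat.factorial_succ]; push_cast; ring
    have e4 : |((m + 1 + 1 + b : ℕ) : ℝ) ^ 2 - ((m + 1 : ℕ) : ℝ) ^ 2| = (b + 1 : ℝ) * (2 * m + 3 + b) := by
      rw [show ((m + 1 + 1 + b : ℕ) : ℝ) ^ 2 - ((m + 1 : ℕ) : ℝ) ^ 2 = (b + 1 : ℝ) * (2 * m + 3 + b) by push_cast; ring]
      exact abs_of_nonneg (by positivity)
    rw [e1, e2, e3, e4]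
    have h1 : ((2 * m + 1 + (b + 1)).factorial : ℝ) ≠ 0 := by positivity
    have h2 : ((m + 1 + 1 + b : ℕ) : ℝ) ≠ 0 := by positivity
    have h3 : (b + 1 : ℝ) ≠ 0 := by positivity
    have h4 : (2 * m + 3 + b : ℝ) ≠ 0 := by positivity
    push_cast at *
    field_simp

theorem prodF_high (a j : ℕ) :
    ∏ l ∈ Finset.range (a + 1 + j + 1), facF (a + 1) l =
      1 / (5 * ((a + 1 : ℕ) : ℝ) ^ 2) *
        (2 * ((a + 1 + j).factorial : ℝ) ^ 2 / ((j.factorial : ℝ) * ((2 * (a + 1) + j).factorial : ℝ))) := by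
  induction j with
  | zero =>
    rw [add_zero, Finset.prod_range_succ]
    have := prodF_low a 0
    simp only [add_zero] at this
    rw [this]
    simp only [facF, if_true]
    have e1 : ((2 * (a + 1) + 0).factorial : ℝ) = (2 * a + 2 : ℝ) * ((2 * a + 1).factorial : ℝ) := by
      rw [show 2 * (a + 1) + 0 = (2 * a + 1) + 1 by ring, Nat.factorial_succ]; push_cast; ring
    have e3 : ((a + 1).factorial : ℝ) = (a + 1 : ℝ) * (a.factorial : ℝ) := by
      rw [Nat.factorial_succ]; push_cast; ring
    rw [e1, e3]
    have h1 : ((2 * a + 1).factorial : ℝ) ≠ 0 := by positivity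
    have h2 : (a + 1 : ℝ) ≠ 0 := by positivity
    have h3 : (2 * a + 2 : ℝ) ≠ 0 := by positivity
    simp only [Nat.factorial_zero]
    push_cast at *
    field_simp
  | succ j ih =>
    rw [Finset.prod_range_succ, show a + 1 + (j + 1) = a + 1 + j + 1 by ring, ih]
    simp only [facF]
    rw [if_neg (by omega), if_neg (by omega)]
    have e1 : ((2 * (a + 1) + (j + 1)).factorial : ℝ) = (2 * a + 3 + j : ℝ) * ((2 * (a + 1) + j).factorial : ℝ) := by
      rw [show 2 * (a + 1) + (j + 1) = (2 * (a + 1) + j) + 1 by ring, Nat.factorial_succ]; push_cast; ring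
    have e2 : ((j + 1).factorial : ℝ) = (j + 1 : ℝ) * (j.factorial : ℝ) := by
      rw [Nat.factorial_succ]; push_cast; ring
    have e3 : ((a + 1 + j + 1).factorial : ℝ) = (a + 1 + j + 1 : ℝ) * ((a + 1 + j).factorial : ℝ) := by
      rw [Nat.factorial_succ]; push_cast; ring
    have e4 : |((a + 1 : ℕ) : ℝ) ^ 2 - ((a + 1 + j + 1 : ℕ) : ℝ) ^ 2| = (j + 1 : ℝ) * (2 * a + 3 + j) := by
      rw [show ((a + 1 : ℕ) : ℝ) ^ 2 - ((a + 1 + j + 1 : ℕ) : ℝ) ^ 2 = - ((j + 1 : ℝ) * (2 * a + 3 + j)) by push_cast; ring,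
        abs_neg]
      exact abs_of_nonneg (by positivity)
    rw [e1, e2, e3, e4]
    have h1 : ((2 * (a + 1) + j).factorial : ℝ) ≠ 0 := by positivity
    have h2 : (j + 1 : ℝ) ≠ 0 := by positivity
    have h3 : (2 * a + 3 + j : ℝ) ≠ 0 := by positivity
    push_cast at *
    field_simp

theorem prodF_le (m i : ℕ) (hi : 1 ≤ i) (him : i ≤ m) :
    ∏ l ∈ Finset.range (m + 1), facF i l ≤ 2 / (5 * (i : ℝ) ^ 2) := by
  obtain ⟨a, rfl⟩ : ∃ a, i = a + 1 := ⟨i - 1, by omega⟩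
  obtain ⟨j, rfl⟩ : ∃ j, m = a + 1 + j := ⟨m - (a + 1), by omega⟩
  rw [prodF_high]
  have key : ((a + 1 + j).factorial) ^ 2 ≤ j.factorial * (2 * (a + 1) + j).factorial := by
    have h1 := Nat.choose_le_centralBinom j (a + 1 + j)
    rw [Nat.centralBinom] at h1
    have h2 := Nat.choose_mul_factorial_mul_factorial (show j ≤ 2 * (a + 1 + j) by omega)
    have h3 := Nat.choose_mul_factorial_mul_factorial (show a + 1 + j ≤ 2 * (a + 1 + j) by omega)
    rw [show 2 * (a + 1 + j) - j = 2 * (a + 1) + j by omega] at h2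
    rw [show 2 * (a + 1 + j) - (a + 1 + j) = a + 1 + j by omega] at h3
    have hpos : 0 < (2 * (a + 1 + j)).choose (a + 1 + j) := Nat.choose_pos (by omega)
    refine Nat.le_of_mul_le_mul_left ?_ hpos
    calc _ = (2 * (a + 1 + j)).choose j * j.factorial * (2 * (a + 1) + j).factorial := by
          rw [h2, ← h3]; ring
      _ ≤ _ := by rw [mul_assoc]; exact Nat.mul_le_mul_right _ h1
  have key' : ((a + 1 + j).factorial : ℝ) ^ 2 ≤ (j.factorial : ℝ) * ((2 * (a + 1) + j).factorial : ℝ) := by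
    exact_mod_cast key
  have : 2 * ((a + 1 + j).factorial : ℝ) ^ 2 / ((j.factorial : ℝ) * ((2 * (a + 1) + j).factorial : ℝ)) ≤ 2 := by
    rw [div_le_iff₀ (by positivity)]; linarith
  calc _ ≤ 1 / (5 * ((a + 1 : ℕ) : ℝ) ^ 2) * 2 := by gcongr
    _ = _ := by ring

theorem sum_inv_sq_le (m : ℕ) :
    ∑ i ∈ Finset.range (m + 1), (2 / (5 * (i : ℝ) ^ 2)) ≤ 4 / 5 - 2 / 5 / (m : ℝ) := by
  induction m with
  | zero => norm_num
  | succ m ih =>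
    rw [Finset.sum_range_succ]
    rcases Nat.eq_zero_or_pos m with rfl | hm
    · norm_num
    · have hm' : (0 : ℝ) < m := by exact_mod_cast hm
      have : 2 / (5 * ((m + 1 : ℕ) : ℝ) ^ 2) ≤ 2 / 5 / (m : ℝ) - 2 / 5 / ((m + 1 : ℕ) : ℝ) := by
        push_cast
        rw [show (2 / 5 / (m : ℝ) - 2 / 5 / (m + 1 : ℝ)) = 2 / (5 * (m * (m + 1))) by field_simp; ring]
        gcongr
        nlinarith
      linarith

open Polynomial in
theorem no_poly (m : ℕ) (q : ℝ[X]) (hd : q.natDegree ≤ m) (h0 : q.eval 0 = 0) (h1 : q.eval 1 = 1)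
    (hb : ∀ i : ℕ, 1 ≤ i → i ≤ m → |q.eval (5 * (i : ℝ) ^ 2)| ≤ 1) : False := by
  set v : ℕ → ℝ := fun i => 5 * (i : ℝ) ^ 2 with hv
  have hinj : Set.InjOn v (Finset.range (m + 1)) := by
    intro a _ b _ hab
    simp only [hv] at hab
    have : (a : ℝ) ^ 2 = (b : ℝ) ^ 2 := by linarith
    have : a ^ 2 = b ^ 2 := by exact_mod_cast this
    exact Nat.pow_left_injective (n := 2) (by norm_num) this
  have hdeg : q.degree < (Finset.range (m + 1)).card := by
    rw [Finset.card_range]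
    exact lt_of_le_of_lt (degree_le_natDegree) (by exact_mod_cast Nat.lt_succ_of_le hd)
  have hq := congrArg (eval 1) (Lagrange.eq_interpolate hinj hdeg)
  rw [h1, Lagrange.interpolate_apply, eval_finsetSum] at hq
  have hterm : ∀ i ∈ Finset.range (m + 1),
      |eval 1 (C (eval (v i) q) * Lagrange.basis (Finset.range (m + 1)) v i)| ≤ 2 / (5 * (i : ℝ) ^ 2) := by
    intro i hi
    rw [eval_mul, eval_C, abs_mul]
    rcases Nat.eq_zero_or_pos i with rfl | hpos
    · simp [hv, h0]
    · have him : i ≤ m := by simpa [Nat.lt_succ_iff] using hi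
      have hB : |eval 1 (Lagrange.basis (Finset.range (m + 1)) v i)| ≤ ∏ l ∈ Finset.range (m + 1), facF i l := by
        rw [Lagrange.basis, eval_prod, Finset.abs_prod, ← Finset.mul_prod_erase _ _ hi]
        have : facF i i = 1 := by simp [facF]
        rw [this, one_mul]
        refine Finset.prod_le_prod (fun _ _ => abs_nonneg _) ?_
        intro j hj
        have hji : j ≠ i := Finset.ne_of_mem_erase hj
        simp only [Lagrange.basisDivisor, eval_mul, eval_C, eval_sub, eval_X, facF, if_neg hji, hv]
        split_ifs with hj0
        · subst hj0
          simp
        · have hj1 : (1 : ℝ) ≤ j := by exact_mod_cast Nat.one_le_iff_ne_zero.2 hj0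
          have hne : (0 : ℝ) < |(i : ℝ) ^ 2 - (j : ℝ) ^ 2| := by
            rw [abs_pos, sub_ne_zero]
            intro h
            have : i ^ 2 = j ^ 2 := by exact_mod_cast h
            exact hji (Nat.pow_left_injective (n := 2) (by norm_num) this).symm
          rw [abs_mul, abs_inv, ← mul_sub, abs_mul, abs_of_nonneg (show (0 : ℝ) ≤ 5 by norm_num)]
          have h2 : |1 - 5 * (j : ℝ) ^ 2| ≤ 5 * (j : ℝ) ^ 2 := by
            rw [abs_le]; constructor <;> nlinarith
          calc _ ≤ (5 * |(i : ℝ) ^ 2 - (j : ℝ) ^ 2|)⁻¹ * (5 * (j : ℝ) ^ 2) := by gcongr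
            _ = _ := by field_simp
      calc _ ≤ 1 * (2 / (5 * (i : ℝ) ^ 2)) :=
            mul_le_mul (hb i hpos him) (hB.trans (prodF_le m i hpos him)) (abs_nonneg _) zero_le_one
        _ = _ := one_mul _
  have hs := Finset.abs_sum_le_sum_abs (fun i => eval 1 (C (eval (v i) q) * Lagrange.basis (Finset.range (m + 1)) v i)) (Finset.range (m + 1))
  rw [← hq] at hs
  have hs2 := hs.trans (Finset.sum_le_sum hterm)
  have hs3 := sum_inv_sq_le m
  have : (0 : ℝ) ≤ 2 / 5 / m := by positivity
  norm_num at hs2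
  linarith

/-- indicator of `t ⊆ x` -/
noncomputable def ind {α : Type*} [DecidableEq α] (t : Finset α) : Finset α → ℝ :=
  fun x => if t ⊆ x then 1 else 0

/-- functions of degree at most `d` -/
noncomputable def Vd (α : Type*) [DecidableEq α] (d : ℕ) : Submodule ℝ (Finset α → ℝ) :=
  Submodule.span ℝ {g | ∃ t : Finset α, t.card ≤ d ∧ g = ind t}

theorem Vd_mul {α : Type*} [DecidableEq α] {d e : ℕ} {f g : Finset α → ℝ}
    (hf : f ∈ Vd α d) (hg : g ∈ Vd α e) : f * g ∈ Vd α (d + e) := by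
  have h := Submodule.mul_mem_mul hf hg
  rw [Vd, Vd, Submodule.span_mul_span] at h
  refine Submodule.span_mono ?_ h
  rintro _ ⟨_, ⟨t, ht, rfl⟩, _, ⟨u, hu, rfl⟩, rfl⟩
  refine ⟨t ∪ u, (Finset.card_union_le _ _).trans (by omega), ?_⟩
  funext x
  simp only [ind, Pi.mul_apply, Finset.union_subset_iff]
  by_cases h1 : t ⊆ x <;> by_cases h2 : u ⊆ x <;> simp [h1, h2]

theorem Vd_mono {α : Type*} [DecidableEq α] {d e : ℕ} (h : d ≤ e) : Vd α d ≤ Vd α e := by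
  refine Submodule.span_mono ?_
  rintro _ ⟨t, ht, rfl⟩
  exact ⟨t, ht.trans h, rfl⟩

theorem Vd_one {α : Type*} [DecidableEq α] (d : ℕ) : (1 : Finset α → ℝ) ∈ Vd α d := by
  refine Submodule.subset_span ⟨∅, by simp, ?_⟩
  funext x; simp [ind]

theorem Vd_prod {α : Type*} [DecidableEq α] {d : ℕ} (T : Finset ℝ) (F : ℝ → Finset α → ℝ)
    (hF : ∀ c ∈ T, F c ∈ Vd α d) : (∏ c ∈ T, F c) ∈ Vd α (T.card * d) := by
  classical
  induction T using Finset.induction_on with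
  | empty => simpa using Vd_one _
  | insert a T ha ih =>
    rw [Finset.prod_insert ha, Finset.card_insert_of_notMem ha, add_mul, one_mul, add_comm]
    exact Vd_mul (hF _ (by simp)) (ih fun c hc => hF c (by simp [hc]))

open Polynomial in
theorem symm_poly {α : Type*} [DecidableEq α] (A : Finset α) (D : ℕ) (h : Finset α → ℝ) (hh : h ∈ Vd α D) :
    ∃ q : ℝ[X], q.natDegree ≤ D ∧ ∀ j ≤ A.card,
      ∑ x ∈ A.powersetCard j, h x = (A.card.choose j : ℝ) * q.eval (j : ℝ) := by
  induction hh using Submodule.span_induction with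
  | mem g hg =>
    obtain ⟨t, ht, rfl⟩ := hg
    by_cases htA : t ⊆ A
    · have hcard : t.card ≤ A.card := Finset.card_le_card htA
      refine ⟨C (((t.card.factorial : ℝ) * (A.card.choose t.card : ℝ))⁻¹) * descPochhammer ℝ t.card, ?_, ?_⟩
      · exact (natDegree_C_mul_le _ _).trans (by rw [descPochhammer_natDegree]; exact ht)
      · intro j hj
        have e1 : ∑ x ∈ A.powersetCard j, ind t x = (((A.powersetCard j).filter (t ⊆ ·)).card : ℝ) := by
          simp [ind]
        rw [e1, eval_mul, eval_C, descPochhammer_eval_eq_descFactorial, Nat.descFactorial_eq_factorial_mul_choose]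
        have hp : (0 : ℝ) < (A.card.choose t.card : ℝ) := by exact_mod_cast Nat.choose_pos hcard
        have hp2 : (t.card.factorial : ℝ) ≠ 0 := by positivity
        rcases le_or_gt t.card j with htj | htj
        · rw [Finset.card_filter_powersetCard_subset t A j htA htj]
          have := Nat.choose_mul (n := A.card) htj
          have : (A.card.choose j : ℝ) * (j.choose t.card : ℝ) = (A.card.choose t.card : ℝ) * ((A.card - t.card).choose (j - t.card) : ℝ) := by
            exact_mod_cast this
          push_cast
          field_simp
          linarith
        · rw [Nat.choose_eq_zero_of_lt htj]
          simp only [mul_zero, Nat.cast_zero, Nat.cast_eq_zero, Finset.card_eq_zero]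
          rw [Finset.filter_eq_empty_iff]
          intro x hx hsub
          have := Finset.card_le_card hsub
          rw [(Finset.mem_powersetCard.1 hx).2] at this
          omega
    · refine ⟨0, by simp, fun j hj => ?_⟩
      simp only [eval_zero, mul_zero]
      refine Finset.sum_eq_zero fun x hx => ?_
      rw [ind, if_neg fun hsub => htA (hsub.trans (Finset.mem_powersetCard.1 hx).1)]
  | zero => exact ⟨0, by simp, by simp⟩
  | add f g _ _ hf hg =>
    obtain ⟨p, hp, hp2⟩ := hf
    obtain ⟨q, hq, hq2⟩ := hg
    refine ⟨p + q, (natDegree_add_le _ _).trans (max_le hp hq), fun j hj => ?_⟩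
    simp only [Pi.add_apply, Finset.sum_add_distrib, hp2 j hj, hq2 j hj, eval_add, mul_add]
  | smul a f _ hf =>
    obtain ⟨p, hp, hp2⟩ := hf
    refine ⟨C a * p, (natDegree_C_mul_le _ _).trans hp, fun j hj => ?_⟩
    simp only [Pi.smul_apply, smul_eq_mul, ← Finset.mul_sum, hp2 j hj, eval_mul, eval_C]
    ring

theorem deg_bound {α : Type*} [DecidableEq α] (A : Finset α) (D : ℕ) (h : Finset α → ℝ) (hh : h ∈ Vd α D)
    (h0 : h ∅ = 0) (h1 : ∀ i ∈ A, h {i} = 1) (hb : ∀ x, |h x| ≤ 1) : A.card ≤ 5 * D ^ 2 := by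
  by_contra hlt
  push Not at hlt
  obtain ⟨q, hq, hq2⟩ := symm_poly A D h hh
  refine no_poly D q hq ?_ ?_ ?_
  · have := hq2 0 (Nat.zero_le _)
    simpa [h0] using this.symm
  · have := hq2 1 (by omega)
    rw [Finset.powersetCard_one, Finset.sum_map] at this
    simp only [Function.Embedding.coeFn_mk] at this
    rw [Finset.sum_congr rfl h1] at this
    simp only [Finset.sum_const, nsmul_eq_mul, mul_one, Nat.choose_one_right, Nat.cast_one] at this
    have hpos : (A.card : ℝ) ≠ 0 := by
      have : A.card ≠ 0 := by omega
      exact_mod_cast this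
    exact (mul_left_cancel₀ hpos (by rw [mul_one]; exact this)).symm
  · intro i hi him
    have hle : 5 * i ^ 2 ≤ A.card := by
      have : i ^ 2 ≤ D ^ 2 := Nat.pow_le_pow_left him 2
      omega
    have := hq2 (5 * i ^ 2) hle
    have hc : (0 : ℝ) < (A.card.choose (5 * i ^ 2) : ℝ) := by exact_mod_cast Nat.choose_pos hle
    have hs : |∑ x ∈ A.powersetCard (5 * i ^ 2), h x| ≤ (A.card.choose (5 * i ^ 2) : ℝ) := by
      refine (Finset.abs_sum_le_sum_abs _ _).trans ?_
      refine (Finset.sum_le_sum fun x _ => hb x).trans ?_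
      simp
    rw [this, abs_mul, abs_of_pos hc] at hs
    push_cast at hs
    exact le_of_mul_le_mul_left (by rw [mul_one]; exact hs) hc

theorem mobius {n : ℕ} (f : Finset (Fin n) → ℝ) (x : Finset (Fin n)) :
    f x = ∑ t, coeff f t * ind t x := by
  have e : ∑ t, coeff f t * ind t x = ∑ t ∈ x.powerset, coeff f t := by
    rw [← Finset.sum_filter_add_sum_filter_not Finset.univ (fun t => t ⊆ x)]
    rw [Finset.sum_eq_zero (s := Finset.univ.filter fun t => ¬ t ⊆ x), add_zero]
    · refine Finset.sum_congr (by ext; simp) fun t ht => ?_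
      simp [ind, Finset.mem_powerset.1 ht]
    · intro t ht
      simp [ind, (Finset.mem_filter.1 ht).2]
  rw [e]
  simp only [coeff]
  rw [Finset.sum_comm' (t' := x.powerset) (s' := fun u => Finset.Icc u x)]
  · have : ∀ u ∈ x.powerset, ∑ t ∈ Finset.Icc u x, (-1 : ℝ) ^ (t.card - u.card) * f u = if u = x then f u else 0 := by
      intro u hu
      have hux := Finset.mem_powerset.1 hu
      rw [← Finset.sum_mul, Finset.Icc_eq_image_powerset hux, Finset.sum_image]
      · have h2 : ∀ v ∈ (x \ u).powerset, (-1 : ℝ) ^ ((u ∪ v).card - u.card) = (((-1 : ℤ) ^ v.card : ℤ) : ℝ) := by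
          intro v hv
          have hd : Disjoint u v := (Finset.disjoint_sdiff).mono_right (Finset.mem_powerset.1 hv)
          rw [Finset.card_union_of_disjoint hd, Nat.add_sub_cancel_left]
          simp
        rw [Finset.sum_congr rfl h2, ← Int.cast_sum, Finset.sum_powerset_neg_one_pow_card]
        by_cases h : u = x
        · simp [h]
        · rw [if_neg h, if_neg]
          · simp
          · intro h3
            exact h (Finset.Subset.antisymm hux (Finset.sdiff_eq_empty_iff_subset.1 h3))
      · intro a ha b hb hab
        have hda : Disjoint u a := (Finset.disjoint_sdiff).mono_right (Finset.mem_powerset.1 ha)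
        have hdb : Disjoint u b := (Finset.disjoint_sdiff).mono_right (Finset.mem_powerset.1 hb)
        simp only at hab
        rw [← Finset.union_sdiff_cancel_left hda, hab, Finset.union_sdiff_cancel_left hdb]
    rw [Finset.sum_congr rfl this]
    simp
  · intro t u
    simp only [Finset.mem_powerset, Finset.mem_Icc, Finset.le_eq_subset]
    constructor
    · rintro ⟨h1, h2⟩; exact ⟨⟨h2, h1⟩, h2.trans h1⟩
    · rintro ⟨⟨h1, h2⟩, _⟩; exact ⟨h2, h1⟩

/-- a large set avoiding a small family of large sets -/
theorem exists_avoid (k d : ℕ) (T : Finset (Finset (Fin k))) (hT : T.card < 2 ^ d)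
    (hd : ∀ t ∈ T, d + 1 ≤ t.card) : ∃ A : Finset (Fin k), k ≤ 2 * A.card ∧ ∀ t ∈ T, ¬ t ⊆ A := by
  by_contra hcon
  push Not at hcon
  set L : Finset (Finset (Fin k)) := Finset.univ.filter fun A => k ≤ 2 * A.card with hL
  have h1 : 2 ^ k ≤ 2 * L.card := by
    have hu : (Finset.univ : Finset (Finset (Fin k))) ⊆ L ∪ L.image (fun A => Aᶜ) := by
      intro A _
      by_cases hA : k ≤ 2 * A.card
      · exact Finset.mem_union_left _ (by simp [hL, hA])
      · refine Finset.mem_union_right _ (Finset.mem_image.2 ⟨Aᶜ, ?_, compl_compl A⟩)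
        simp only [hL, Finset.mem_filter, Finset.mem_univ, true_and, Finset.card_compl, Fintype.card_fin]
        omega
    have := Finset.card_le_card hu
    rw [Finset.card_univ, Fintype.card_finset, Fintype.card_fin] at this
    have h3 := Finset.card_union_le L (L.image (fun A => Aᶜ))
    have h4 := Finset.card_image_le (s := L) (f := fun A => Aᶜ)
    omega
  have h2 : L ⊆ T.biUnion fun t => Finset.Icc t Finset.univ := by
    intro A hA
    obtain ⟨t, ht, htA⟩ := hcon A (Finset.mem_filter.1 hA).2
    exact Finset.mem_biUnion.2 ⟨t, ht, Finset.mem_Icc.2 ⟨htA, Finset.subset_univ _⟩⟩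
  have h3 : L.card * 2 ^ (d + 1) ≤ T.card * 2 ^ k := by
    calc _ ≤ (∑ t ∈ T, (Finset.Icc t Finset.univ).card) * 2 ^ (d + 1) :=
          Nat.mul_le_mul_right _ ((Finset.card_le_card h2).trans Finset.card_biUnion_le)
      _ = ∑ t ∈ T, (Finset.Icc t Finset.univ).card * 2 ^ (d + 1) := Finset.sum_mul _ _ _
      _ ≤ ∑ t ∈ T, 2 ^ k := by
          refine Finset.sum_le_sum fun t ht => ?_
          have hc : t.card ≤ k := by simpa using Finset.card_le_univ t
          rw [Finset.card_Icc_finset (Finset.subset_univ _), Finset.card_univ, Fintype.card_fin, ← pow_add]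
          exact Nat.pow_le_pow_right (by norm_num) (by have := hd t ht; omega)
      _ = _ := by simp
  have hk : 0 < 2 ^ k := by positivity
  have h5 : 2 ^ k * 2 ^ d ≤ T.card * 2 ^ k := by
    calc 2 ^ k * 2 ^ d ≤ 2 * L.card * 2 ^ d := Nat.mul_le_mul_right _ h1
      _ = L.card * 2 ^ (d + 1) := by ring
      _ ≤ _ := h3
  have h6 : T.card * 2 ^ k < 2 ^ d * 2 ^ k := Nat.mul_lt_mul_of_pos_right hT hk
  rw [mul_comm (2 ^ d)] at h6
  omega

theorem main_nat (n s : ℕ) (f : Finset (Fin n) → ℝ) (S : Finset ℝ) (hS : S.card ≤ s)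
    (hfS : ∀ x, f x ∈ S) (z : Finset (Fin n)) (k : ℕ) (w : Fin k → Finset (Fin n))
    (hw : ∀ i, w i ∈ W f z) (hdis : ∀ i j, i ≠ j → Disjoint (w i) (w j))
    (d : ℕ) (hd : sparsity f < 2 ^ d) :
    k ≤ 2 * (5 * (s * d) ^ 2) := by
  classical
  set U : Finset (Fin k) → Finset (Fin n) := fun y => z ∪ y.biUnion w with hU
  set φ : Finset (Fin n) → Finset (Fin k) :=
    fun t => Finset.univ.filter fun i => ¬ Disjoint (w i) (t \ z) with hφ
  have hsub : ∀ t, t \ z ⊆ Finset.univ.biUnion w → ∀ y, (t ⊆ U y ↔ φ t ⊆ y) := by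
    intro t ht y
    constructor
    · intro h i hi
      have hi' : ¬ Disjoint (w i) (t \ z) := (Finset.mem_filter.1 hi).2
      rw [Finset.not_disjoint_iff] at hi'
      obtain ⟨e, he1, he2⟩ := hi'
      rw [Finset.mem_sdiff] at he2
      rcases Finset.mem_union.1 (h he2.1) with h3 | h3
      · exact absurd h3 he2.2
      · obtain ⟨j, hj, hej⟩ := Finset.mem_biUnion.1 h3
        by_cases hij : i = j
        · exact hij ▸ hj
        · exact absurd hej (Finset.disjoint_left.1 (hdis i j hij) he1)
    · intro h e he
      by_cases hez : e ∈ z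
      · exact Finset.mem_union_left _ hez
      · have he2 : e ∈ t \ z := Finset.mem_sdiff.2 ⟨he, hez⟩
        obtain ⟨i, _, hi⟩ := Finset.mem_biUnion.1 (ht he2)
        refine Finset.mem_union_right _ (Finset.mem_biUnion.2 ⟨i, h ?_, hi⟩)
        exact Finset.mem_filter.2 ⟨Finset.mem_univ _, Finset.not_disjoint_iff.2 ⟨e, hi, he2⟩⟩
  have hnsub : ∀ t, ¬ t \ z ⊆ Finset.univ.biUnion w → ∀ y, ¬ t ⊆ U y := by
    intro t ht y h
    refine ht fun e he => ?_
    rw [Finset.mem_sdiff] at he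
    rcases Finset.mem_union.1 (h he.1) with h3 | h3
    · exact absurd h3 he.2
    · exact Finset.biUnion_subset_biUnion_of_subset_left _ (Finset.subset_univ _) h3
  set supp : Finset (Finset (Fin n)) := Finset.univ.filter fun t => coeff f t ≠ 0 with hsupp
  have hcs : supp.card = sparsity f := by
    rw [sparsity, ← Set.ncard_coe_finset]
    congr 1
    ext t; simp [hsupp]
  set T : Finset (Finset (Fin k)) := (supp.image φ).filter fun u => d + 1 ≤ u.card with hT
  obtain ⟨A, hA, hAT⟩ := exists_avoid k d T
    (by
      refine lt_of_le_of_lt ?_ hd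
      rw [← hcs]
      exact (Finset.card_filter_le _ _).trans Finset.card_image_le)
    (fun t ht => (Finset.mem_filter.1 ht).2)
  set G : Finset (Fin k) → ℝ := fun y => f (U (y ∩ A)) with hG
  have hGd : G ∈ Vd (Fin k) d := by
    have : G = ∑ t, fun y => coeff f t * ind t (U (y ∩ A)) := by
      funext y
      rw [Finset.sum_apply]
      exact mobius f _
    rw [this]
    refine Submodule.sum_mem _ fun t _ => ?_
    by_cases hc : coeff f t = 0
    · simp only [hc, zero_mul]; exact Submodule.zero_mem _
    by_cases ht : t \ z ⊆ Finset.univ.biUnion w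
    · by_cases hφA : φ t ⊆ A
      · have : (fun y => coeff f t * ind t (U (y ∩ A))) = coeff f t • ind (φ t) := by
          funext y
          simp only [ind, hsub t ht, Finset.subset_inter_iff, hφA, and_true, Pi.smul_apply, smul_eq_mul]
        rw [this]
        refine Submodule.smul_mem _ _ (Submodule.subset_span ⟨φ t, ?_, rfl⟩)
        by_contra hlt
        refine hAT (φ t) (Finset.mem_filter.2 ⟨Finset.mem_image_of_mem _ ?_, by omega⟩) hφA
        exact Finset.mem_filter.2 ⟨Finset.mem_univ _, hc⟩
      · have : (fun y => coeff f t * ind t (U (y ∩ A))) = 0 := by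
          funext y
          simp only [ind, hsub t ht, Finset.subset_inter_iff, hφA, and_false, if_false, mul_zero, Pi.zero_apply]
        rw [this]; exact Submodule.zero_mem _
    · have : (fun y => coeff f t * ind t (U (y ∩ A))) = 0 := by
        funext y
        simp only [ind, hnsub t ht, if_false, mul_zero, Pi.zero_apply]
      rw [this]; exact Submodule.zero_mem _
  set P : Finset (Fin k) → ℝ := ∏ c ∈ S.erase (f z), ((f z - c)⁻¹ • (G - c • (1 : Finset (Fin k) → ℝ))) with hP
  have hPd : P ∈ Vd (Fin k) (s * d) := by
    refine Vd_mono (Nat.mul_le_mul_right d ((Finset.card_erase_le).trans hS)) (Vd_prod _ _ fun c _ => ?_)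
    exact Submodule.smul_mem _ _ (Submodule.sub_mem _ hGd (Submodule.smul_mem _ _ (Vd_one d)))
  have hPv : ∀ y, P y = ∏ c ∈ S.erase (f z), ((f z - c)⁻¹ * (G y - c)) := by
    intro y
    rw [hP, Finset.prod_apply]
    simp
  have hP1 : ∀ y, G y = f z → P y = 1 := by
    intro y hy
    rw [hPv, hy]
    refine Finset.prod_eq_one fun c hc => ?_
    exact inv_mul_cancel₀ (sub_ne_zero.2 (Finset.ne_of_mem_erase hc).symm)
  have hP0 : ∀ y, G y ≠ f z → P y = 0 := by
    intro y hy
    rw [hPv]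
    exact Finset.prod_eq_zero (Finset.mem_erase.2 ⟨hy, hfS _⟩) (by simp [hG])
  have := deg_bound A (s * d) (1 - P) (Submodule.sub_mem _ (Vd_one _) hPd)
    (by
      have : P ∅ = 1 := hP1 _ (by simp [hG, hU])
      simp [this])
    (by
      intro i hi
      have : P {i} = 0 := by
        refine hP0 _ ?_
        have h1 : ({i} : Finset (Fin k)) ∩ A = {i} := by simpa using hi
        simp only [hG, hU, h1, Finset.singleton_biUnion]
        exact (hw i).2
      simp [this])
    (by
      intro y
      by_cases hy : G y = f z
      · simp [hP1 y hy]
      · simp [hP0 y hy])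
  omega

/-- For `f : {0,1}^n → ℝ` whose image has size at most `s ≥ 1` and whose sparsity is
`r ≥ 2`, `MBS(f) ≤ C·s²·(log₂ r)²`: any pairwise disjoint collection of elements of
some `W(f,z)` has size at most `C·s²·(log₂ r)²`. -/
theorem stmt15 :
    ∃ C : ℝ, 0 < C ∧
      ∀ (n s : ℕ) (f : Finset (Fin n) → ℝ),
        1 ≤ s →
        (∃ S : Finset ℝ, S.card ≤ s ∧ ∀ x, f x ∈ S) →
        2 ≤ sparsity f →
        ∀ (z : Finset (Fin n)) (k : ℕ) (w : Fin k → Finset (Fin n)),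
          (∀ i, w i ∈ W f z) →
          (∀ i j, i ≠ j → Disjoint (w i) (w j)) →
          (k : ℝ) ≤ C * (s : ℝ) ^ 2 * (Real.logb 2 (sparsity f)) ^ 2 := by
  refine ⟨40, by norm_num, ?_⟩
  rintro n s f hs ⟨S, hS, hfS⟩ hr z k w hw hdis
  have hr0 : sparsity f ≠ 0 := by omega
  have h := main_nat n s f S hS hfS z k w hw hdis (Nat.log 2 (sparsity f) + 1)
    (Nat.lt_pow_succ_log_self (by norm_num) _)
  have hlog1 : 1 ≤ Nat.log 2 (sparsity f) := Nat.log_pos (by norm_num) hr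
  have hL : (Nat.log 2 (sparsity f) : ℝ) ≤ Real.logb 2 (sparsity f) := by
    rw [Real.le_logb_iff_rpow_le (by norm_num) (by exact_mod_cast Nat.pos_of_ne_zero hr0), Real.rpow_natCast]
    exact_mod_cast Nat.pow_log_le_self 2 hr0
  have hlog1' : (1 : ℝ) ≤ (Nat.log 2 (sparsity f) : ℝ) := by exact_mod_cast hlog1
  have hk : (k : ℝ) ≤ 2 * (5 * ((s : ℝ) * ((Nat.log 2 (sparsity f) : ℝ) + 1)) ^ 2) := by exact_mod_cast h
  calc (k : ℝ) ≤ _ := hk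
    _ ≤ 2 * (5 * ((s : ℝ) * (2 * Real.logb 2 (sparsity f))) ^ 2) := by
        gcongr
        linarith
    _ = _ := by ring
end
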